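/- One-shot conversion of adaptive to parallel strategies: Let E, F : M_{d_A}(ℂ) → M_{d_B}(ℂ) be quantum channels with 𝐷̂_α(E‖F) < ∞ for some α ∈ (1,2], and set C := 8 · inf_{α ∈ (1,2]} (1/(α−1)) log(2^{(α−1)·𝐷̂_α(E‖F)} + 2). Let an n-step adaptive discrimination protocol be given with final states E(ρ_n) and F(σ_n). Then for all α_a, α_p ∈ (0,1), all μ > 0 and all m ≥ 1 there exists a state ν on (ℂ^{d_A})^{⊗m} ⊗ (ℂ^{d_A})^{⊗m} such that (1/n) D_H^{α_a}(E(ρ_n)‖F(σ_n)) ≤ (1/(1−α_a)) · (1/m) D_H^{α_p}((E^{⊗m} ⊗ id)(ν) ‖ (F^{⊗m} ⊗ id)(ν)) + f(α_a, α_p, m, n, μ), where f(α_a, α_p, m, n, μ) = (1/(1−α_a)) [ (C·n/√m) log(8/α_p) + (1/m)(log(1/α_p) − log(1 − α_p/4) + μ) + h(α_a)/n ]. -/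

import Mathlib

open scoped Kronecker ComplexOrder

noncomputable section

namespace QCD

attribute [local instance] Classical.propDecidable

variable {n m : Type} [Fintype n] [DecidableEq n] [Fintype m] [DecidableEq m]

/-- The real part of the trace of a complex matrix. -/
def rtr (A : Matrix n n ℂ) : ℝ := (A.trace).re

/-- A quantum state: positive semidefinite with trace one. -/
def IsState (ρ : Matrix n n ℂ) : Prop := ρ.PosSemidef ∧ ρ.trace = 1

/-- Loewner order: `A ≤ B` iff `B - A` is positive semidefinite. -/
def loewnerLE (A B : Matrix n n ℂ) : Prop := (B - A).PosSemidef

/-- Support containment (for PSD matrices): `ker σ ⊆ ker ρ`. -/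
def SuppLE (ρ σ : Matrix n n ℂ) : Prop := ∀ v : n → ℂ, σ.mulVec v = 0 → ρ.mulVec v = 0

/-- Functional calculus for Hermitian matrices (junk value `0` otherwise). -/
def matFun (f : ℝ → ℝ) (A : Matrix n n ℂ) : Matrix n n ℂ :=
  if hA : A.IsHermitian then
    (hA.eigenvectorUnitary : Matrix n n ℂ) *
      Matrix.diagonal (fun i => (f (hA.eigenvalues i) : ℂ)) *
      (star (hA.eigenvectorUnitary : Matrix n n ℂ))
  else 0

/-- Matrix square root via functional calculus. -/
def msqrt (A : Matrix n n ℂ) : Matrix n n ℂ := matFun Real.sqrt A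

/-- Matrix real power taken on the support (`0 ^ t := 0`). -/
def mpow (A : Matrix n n ℂ) (t : ℝ) : Matrix n n ℂ :=
  matFun (fun x => if x = 0 then 0 else x ^ t) A

/-- Matrix base-2 logarithm on the support. -/
def mlog (A : Matrix n n ℂ) : Matrix n n ℂ := matFun (Real.logb 2) A

/-- Positive part of a Hermitian matrix. -/
def mposPart (A : Matrix n n ℂ) : Matrix n n ℂ := matFun (fun x => max x 0) A

/-- Trace norm. -/
def traceNorm (A : Matrix n m ℂ) : ℝ := rtr (msqrt (A.conjTranspose * A))

/-- Base-2 logarithm as an extended real (`⊥` on nonpositive input). -/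
def elog (x : ℝ) : EReal := if x ≤ 0 then ⊥ else ((Real.logb 2 x : ℝ) : EReal)

/-- Base-2 logarithm of an extended real. -/
def elogE (x : EReal) : EReal := if x = ⊤ then ⊤ else elog x.toReal

/-- `2 ^ x` for an extended real `x`. -/
def epow2 (x : EReal) : EReal :=
  if x = ⊤ then ⊤ else if x = ⊥ then 0 else ((((2:ℝ) ^ x.toReal : ℝ)) : EReal)

/-- Umegaki relative entropy (base 2), `⊤` if the support condition fails. -/
def relEntropy (ρ σ : Matrix n n ℂ) : EReal :=
  if SuppLE ρ σ then ((rtr (ρ * (mlog ρ - mlog σ)) : ℝ) : EReal) else ⊤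

/-- Petz–Rényi divergence (base 2). -/
def petzRenyi (α : ℝ) (ρ σ : Matrix n n ℂ) : EReal :=
  if 1 < α ∧ ¬ SuppLE ρ σ then ⊤
  else (((α - 1)⁻¹ : ℝ) : EReal) * elog (rtr (mpow ρ α * mpow σ (1 - α)))

/-- Geometric (maximal) Rényi divergence (base 2). -/
def geomRenyi (α : ℝ) (ρ σ : Matrix n n ℂ) : EReal :=
  if SuppLE ρ σ then
    (((α - 1)⁻¹ : ℝ) : EReal) *
      elog (rtr (σ * mpow (mpow σ (-(1/2 : ℝ)) * ρ * mpow σ (-(1/2 : ℝ))) α))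
  else ⊤

/-- Max-relative entropy (base 2). -/
def dMax (ρ σ : Matrix n n ℂ) : EReal :=
  sInf {x : EReal | ∃ lam : ℝ, x = (lam : EReal) ∧ loewnerLE ρ ((((2:ℝ) ^ lam : ℝ) : ℂ) • σ)}

/-- Uhlmann fidelity. -/
def fidelity (ρ σ : Matrix n n ℂ) : ℝ := (rtr (msqrt (msqrt σ * ρ * msqrt σ))) ^ 2

/-- Sine (purified) distance. -/
def sineDist (ρ σ : Matrix n n ℂ) : ℝ := Real.sqrt (1 - fidelity ρ σ)

/-- Smoothed max-relative entropy: smoothing over states in the sine-distance ball. -/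
def dMaxSmooth (δ : ℝ) (ρ σ : Matrix n n ℂ) : EReal :=
  ⨅ (ρ' : Matrix n n ℂ) (_ : IsState ρ' ∧ sineDist ρ ρ' ≤ δ), dMax ρ' σ

/-- Hypothesis testing divergence (base 2). -/
def dH (ε : ℝ) (ρ σ : Matrix n n ℂ) : EReal :=
  - elog (sInf {x : ℝ | ∃ T : Matrix n n ℂ,
      T.PosSemidef ∧ ((1 : Matrix n n ℂ) - T).PosSemidef ∧ 1 - ε ≤ rtr (T * ρ) ∧ x = rtr (T * σ)})

/-- The quantity `c_γ(ρ‖σ)`. -/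
def cGamma (γ : ℝ) (ρ σ : Matrix n n ℂ) : EReal :=
  ((γ⁻¹ : ℝ) : EReal) *
    elogE (epow2 ((γ : ℝ) * petzRenyi (1 + γ) ρ σ) +
           epow2 (((-γ : ℝ) : EReal) * petzRenyi (1 - γ) ρ σ) + 1)

/-- Binary entropy (base 2). -/
def binEnt (x : ℝ) : ℝ := -(x * Real.logb 2 x) - (1 - x) * Real.logb 2 (1 - x)

/-- Action of `id_k ⊗ Φ` on block matrices. -/
def blockApply {k : Type} (Φ : Matrix n n ℂ →ₗ[ℂ] Matrix m m ℂ)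
    (M : Matrix (k × n) (k × n) ℂ) : Matrix (k × m) (k × m) ℂ :=
  Matrix.of fun p q => Φ (Matrix.of fun a b => M (p.1, a) (q.1, b)) p.2 q.2

/-- Action of `Φ ⊗ id_k` on block matrices. -/
def blockApplyRight {k : Type} (Φ : Matrix n n ℂ →ₗ[ℂ] Matrix m m ℂ)
    (M : Matrix (n × k) (n × k) ℂ) : Matrix (m × k) (m × k) ℂ :=
  Matrix.of fun p q => Φ (Matrix.of fun a b => M (a, p.2) (b, q.2)) p.1 q.1

/-- Quantum channel: trace preserving and completely positive. -/
def IsQChannel (Φ : Matrix n n ℂ →ₗ[ℂ] Matrix m m ℂ) : Prop :=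
  (∀ M : Matrix n n ℂ, (Φ M).trace = M.trace) ∧
  (∀ k : ℕ, 1 ≤ k → ∀ M : Matrix (Fin k × n) (Fin k × n) ℂ, M.PosSemidef →
    (blockApply Φ M).PosSemidef)

/-- `id_k ⊗ Φ` as a linear map. -/
def blockApplyL (k : Type) (Φ : Matrix n n ℂ →ₗ[ℂ] Matrix m m ℂ) :
    Matrix (k × n) (k × n) ℂ →ₗ[ℂ] Matrix (k × m) (k × m) ℂ where
  toFun := blockApply Φ
  map_add' M N := by
    ext p q
    show Φ (Matrix.of fun a b => (M + N) (p.1, a) (q.1, b)) p.2 q.2 = _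
    have h : (Matrix.of fun a b => (M + N) (p.1, a) (q.1, b)) =
        (Matrix.of fun a b => M (p.1, a) (q.1, b)) +
          (Matrix.of fun a b => N (p.1, a) (q.1, b)) := rfl
    rw [h, map_add]
    rfl
  map_smul' c M := by
    ext p q
    show Φ (Matrix.of fun a b => (c • M) (p.1, a) (q.1, b)) p.2 q.2 = _
    have h : (Matrix.of fun a b => (c • M) (p.1, a) (q.1, b)) =
        c • (Matrix.of fun a b => M (p.1, a) (q.1, b)) := rfl
    rw [h, map_smul]
    rfl

/-- `Φ ⊗ id_k` as a linear map. -/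
def blockApplyRightL (k : Type) (Φ : Matrix n n ℂ →ₗ[ℂ] Matrix m m ℂ) :
    Matrix (n × k) (n × k) ℂ →ₗ[ℂ] Matrix (m × k) (m × k) ℂ where
  toFun := blockApplyRight Φ
  map_add' M N := by
    ext p q
    show Φ (Matrix.of fun a b => (M + N) (a, p.2) (b, q.2)) p.1 q.1 = _
    have h : (Matrix.of fun a b => (M + N) (a, p.2) (b, q.2)) =
        (Matrix.of fun a b => M (a, p.2) (b, q.2)) +
          (Matrix.of fun a b => N (a, p.2) (b, q.2)) := rfl
    rw [h, map_add]
    rfl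
  map_smul' c M := by
    ext p q
    show Φ (Matrix.of fun a b => (c • M) (a, p.2) (b, q.2)) p.1 q.1 = _
    have h : (Matrix.of fun a b => (c • M) (a, p.2) (b, q.2)) =
        c • (Matrix.of fun a b => M (a, p.2) (b, q.2)) := rfl
    rw [h, map_smul]
    rfl

/-- Tensor product of two channels (Kronecker product action). -/
def tensorChannel {n₁ m₁ n₂ m₂ : Type}
    (E₁ : Matrix n₁ n₁ ℂ →ₗ[ℂ] Matrix m₁ m₁ ℂ) (E₂ : Matrix n₂ n₂ ℂ →ₗ[ℂ] Matrix m₂ m₂ ℂ) :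
    Matrix (n₁ × n₂) (n₁ × n₂) ℂ →ₗ[ℂ] Matrix (m₁ × m₂) (m₁ × m₂) ℂ :=
  (blockApplyRightL m₂ E₁).comp (blockApplyL n₁ E₂)

/-- Index type for `k`-fold tensor powers. -/
def tpow (ι : Type) : ℕ → Type
  | 0 => PUnit
  | (k+1) => tpow ι k × ι

def tpowFintype (ι : Type) [Fintype ι] : ∀ k : ℕ, Fintype (tpow ι k)
  | 0 => inferInstanceAs (Fintype PUnit)
  | (k+1) => letI := tpowFintype ι k; inferInstanceAs (Fintype (tpow ι k × ι))

instance (ι : Type) [Fintype ι] (k : ℕ) : Fintype (tpow ι k) := tpowFintype ι k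

def tpowDecEq (ι : Type) [DecidableEq ι] : ∀ k : ℕ, DecidableEq (tpow ι k)
  | 0 => inferInstanceAs (DecidableEq PUnit)
  | (k+1) => letI := tpowDecEq ι k; inferInstanceAs (DecidableEq (tpow ι k × ι))

instance (ι : Type) [DecidableEq ι] (k : ℕ) : DecidableEq (tpow ι k) := tpowDecEq ι k

/-- `k`-fold Kronecker tensor power of a matrix. -/
def tpowMat (ρ : Matrix n n ℂ) : ∀ k : ℕ, Matrix (tpow n k) (tpow n k) ℂ
  | 0 => 1
  | (k+1) => (tpowMat ρ k) ⊗ₖ ρ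

/-- `k`-fold tensor power of a channel. -/
def tpowChannel (Φ : Matrix n n ℂ →ₗ[ℂ] Matrix m m ℂ) :
    ∀ k : ℕ, Matrix (tpow n k) (tpow n k) ℂ →ₗ[ℂ] Matrix (tpow m k) (tpow m k) ℂ
  | 0 => LinearMap.id
  | (k+1) => tensorChannel (tpowChannel Φ k) Φ

/-- Channel divergence induced by a divergence `𝔇` on states:
sup over `k ≥ 1` and input states `ν` on `ℂ^k ⊗ ℂ^d`. -/
def chDiv (𝔇 : ∀ (p : Type) [Fintype p] [DecidableEq p], Matrix p p ℂ → Matrix p p ℂ → EReal)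
    (E F : Matrix n n ℂ →ₗ[ℂ] Matrix m m ℂ) : EReal :=
  ⨆ (k : ℕ) (_ : 1 ≤ k) (ν : Matrix (Fin k × n) (Fin k × n) ℂ) (_ : IsState ν),
    𝔇 (Fin k × m) (blockApply E ν) (blockApply F ν)

/-- The geometric Rényi divergence as a divergence family. -/
def geomD (α : ℝ) : ∀ (p : Type) [Fintype p] [DecidableEq p],
    Matrix p p ℂ → Matrix p p ℂ → EReal :=
  fun _ _ _ => geomRenyi α

/-- The Umegaki relative entropy as a divergence family. -/
def relD : ∀ (p : Type) [Fintype p] [DecidableEq p],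
    Matrix p p ℂ → Matrix p p ℂ → EReal :=
  fun _ _ _ => relEntropy

/-- The hypothesis testing divergence as a divergence family. -/
def dHD (ε : ℝ) : ∀ (p : Type) [Fintype p] [DecidableEq p],
    Matrix p p ℂ → Matrix p p ℂ → EReal :=
  fun _ _ _ => dH ε

/-- Regularized channel relative entropy. -/
def regRelEntropy (E F : Matrix n n ℂ →ₗ[ℂ] Matrix m m ℂ) : EReal :=
  ⨆ (k : ℕ) (_ : 1 ≤ k),
    (((k : ℝ)⁻¹ : ℝ) : EReal) * chDiv relD (tpowChannel E k) (tpowChannel F k)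

end QCD

namespace QCD

/-- An adaptive discrimination protocol: ancilla dimensions, initial state,
and preparation channels; states are indexed from `0`. -/
structure AdaptiveProtocol (dA dB : ℕ) where
  r : ℕ → ℕ
  init : Matrix (Fin dA × Fin (r 0)) (Fin dA × Fin (r 0)) ℂ
  init_isState : IsState init
  prep : (i : ℕ) → Matrix (Fin dB × Fin (r i)) (Fin dB × Fin (r i)) ℂ →ₗ[ℂ]
      Matrix (Fin dA × Fin (r (i + 1))) (Fin dA × Fin (r (i + 1))) ℂ
  prep_isChannel : ∀ i, IsQChannel (prep i)

/-- The state before the `(i+1)`-st channel use, when the black box is `Φ`. -/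
def AdaptiveProtocol.stateAt {dA dB : ℕ} (P : AdaptiveProtocol dA dB)
    (Φ : Matrix (Fin dA) (Fin dA) ℂ →ₗ[ℂ] Matrix (Fin dB) (Fin dB) ℂ) :
    (i : ℕ) → Matrix (Fin dA × Fin (P.r i)) (Fin dA × Fin (P.r i)) ℂ
  | 0 => P.init
  | (i + 1) => P.prep i (blockApplyRight Φ (P.stateAt Φ i))

/-- The final state of an `n`-step adaptive protocol with black box `Φ`. -/
def AdaptiveProtocol.finalState {dA dB : ℕ} (P : AdaptiveProtocol dA dB)
    (Φ : Matrix (Fin dA) (Fin dA) ℂ →ₗ[ℂ] Matrix (Fin dB) (Fin dB) ℂ) (nn : ℕ) :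
    Matrix (Fin dB × Fin (P.r (nn - 1))) (Fin dB × Fin (P.r (nn - 1))) ℂ :=
  blockApplyRight Φ (P.stateAt Φ (nn - 1))

/-- The constant `C = 8 inf_{α ∈ (1,2]} (1/(α-1)) log(2^{(α-1) D̂_α(E‖F)} + 2)`. -/
def Cconst {dA dB : ℕ}
    (E F : Matrix (Fin dA) (Fin dA) ℂ →ₗ[ℂ] Matrix (Fin dB) (Fin dB) ℂ) : ℝ :=
  8 * (⨅ α : {a : ℝ // 1 < a ∧ a ≤ 2},
      (if chDiv (geomD α.1) E F = ⊤ then (⊤ : EReal)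
       else (((α.1 - 1)⁻¹ *
          Real.logb 2 ((2:ℝ) ^ ((α.1 - 1) * (chDiv (geomD α.1) E F).toReal) + 2) : ℝ) :
            EReal))).toReal

section Helpers
open Matrix

section P1
variable {n m k : Type} [Fintype n] [DecidableEq n] [Fintype m] [DecidableEq m] [Fintype k] [DecidableEq k]

lemma rtr_add (A B : Matrix n n ℂ) : rtr (A + B) = rtr A + rtr B := by simp [rtr]
lemma rtr_sub (A B : Matrix n n ℂ) : rtr (A - B) = rtr A - rtr B := by simp [rtr]
lemma rtr_smul (c : ℝ) (A : Matrix n n ℂ) : rtr ((c : ℂ) • A) = c * rtr A := by simp [rtr]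
lemma rtr_sum {ι : Type} (s : Finset ι) (f : ι → Matrix n n ℂ) :
    rtr (∑ i ∈ s, f i) = ∑ i ∈ s, rtr (f i) := by simp [rtr, Matrix.trace_sum]
lemma rtr_mul_comm (A : Matrix n m ℂ) (B : Matrix m n ℂ) : rtr (A * B) = rtr (B * A) := by
  unfold rtr; rw [Matrix.trace_mul_comm]
lemma rtr_conjTranspose (A : Matrix n n ℂ) : rtr Aᴴ = rtr A := by
  simp [rtr, Matrix.trace_conjTranspose]
lemma rtr_nonneg {A : Matrix n n ℂ} (hA : A.PosSemidef) : 0 ≤ rtr A := by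
  have := hA.trace_nonneg
  exact (Complex.le_def.1 this).1

lemma psd_smul {A : Matrix n n ℂ} (hA : A.PosSemidef) {c : ℝ} (hc : 0 ≤ c) :
    ((c : ℂ) • A).PosSemidef := hA.smul (by exact_mod_cast hc)

/-- Spectral data. -/
def IsSp (A U : Matrix n n ℂ) (r : n → ℝ) : Prop :=
  Uᴴ * U = 1 ∧ U * Uᴴ = 1 ∧ (∀ i, 0 ≤ r i) ∧ A = U * diagonal (fun i => (r i : ℂ)) * Uᴴ

lemma herm_decomp {A : Matrix n n ℂ} (hA : A.IsHermitian) :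
    A = (hA.eigenvectorUnitary : Matrix n n ℂ) * diagonal (fun i => (hA.eigenvalues i : ℂ)) *
      (hA.eigenvectorUnitary : Matrix n n ℂ)ᴴ := by
  conv_lhs => rw [hA.spectral_theorem]
  rw [Unitary.conjStarAlgAut_apply]
  rfl

lemma herm_unitary {A : Matrix n n ℂ} (hA : A.IsHermitian) :
    (hA.eigenvectorUnitary : Matrix n n ℂ)ᴴ * (hA.eigenvectorUnitary : Matrix n n ℂ) = 1 ∧
    (hA.eigenvectorUnitary : Matrix n n ℂ) * (hA.eigenvectorUnitary : Matrix n n ℂ)ᴴ = 1 := by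
  constructor
  · exact Unitary.star_mul_self_of_mem hA.eigenvectorUnitary.2
  · exact Unitary.mul_star_self_of_mem hA.eigenvectorUnitary.2

lemma exists_isSp {A : Matrix n n ℂ} (hA : A.PosSemidef) : ∃ U r, IsSp A U r :=
  ⟨hA.1.eigenvectorUnitary, hA.1.eigenvalues, (herm_unitary hA.1).1, (herm_unitary hA.1).2,
    hA.eigenvalues_nonneg, herm_decomp hA.1⟩

lemma psd_diag {r : n → ℝ} (hr : ∀ i, 0 ≤ r i) :
    (diagonal (fun i => (r i : ℂ))).PosSemidef :=
  PosSemidef.diagonal (fun i => by simpa using hr i)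

lemma psd_conj_diag (U : Matrix m n ℂ) {r : n → ℝ} (hr : ∀ i, 0 ≤ r i) :
    (U * diagonal (fun i => (r i : ℂ)) * Uᴴ).PosSemidef :=
  (psd_diag hr).mul_mul_conjTranspose_same U

lemma IsSp.psd {A U : Matrix n n ℂ} {r : n → ℝ} (h : IsSp A U r) : A.PosSemidef := by
  rw [h.2.2.2]; exact psd_conj_diag U h.2.2.1

/-- every psd is a Gram matrix -/
lemma psd_gram {A : Matrix n n ℂ} (hA : A.PosSemidef) : ∃ G : Matrix n n ℂ, A = G * Gᴴ := by
  obtain ⟨U, r, h⟩ := exists_isSp hA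
  refine ⟨U * diagonal (fun i => (Real.sqrt (r i) : ℂ)), ?_⟩
  rw [conjTranspose_mul, h.2.2.2, diagonal_conjTranspose]
  simp only [Matrix.mul_assoc]
  rw [← Matrix.mul_assoc (diagonal _) (diagonal _), diagonal_mul_diagonal]
  congr 3
  ext i
  simp only [Pi.star_apply, RCLike.star_def, Complex.conj_ofReal]
  rw [← Complex.ofReal_mul, Real.mul_self_sqrt (h.2.2.1 i)]

lemma rtr_mul_nonneg {A B : Matrix n n ℂ} (hA : A.PosSemidef) (hB : B.PosSemidef) :
    0 ≤ rtr (A * B) := by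
  obtain ⟨G, rfl⟩ := psd_gram hA
  rw [Matrix.mul_assoc, rtr_mul_comm]
  exact rtr_nonneg (by
    have := hB.conjTranspose_mul_mul_same G
    exact this)

lemma rtr_mul_le {A B C : Matrix n n ℂ} (hA : A.PosSemidef) (h : (C - B).PosSemidef) :
    rtr (A * B) ≤ rtr (A * C) := by
  have := rtr_mul_nonneg hA h
  rw [Matrix.mul_sub, rtr_sub] at this; linarith

lemma rtr_mul_le' {A B C : Matrix n n ℂ} (hA : A.PosSemidef) (h : (C - B).PosSemidef) :
    rtr (B * A) ≤ rtr (C * A) := by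
  rw [rtr_mul_comm B, rtr_mul_comm C]; exact rtr_mul_le hA h

lemma rtr_frob (X : Matrix n m ℂ) : rtr (X * Xᴴ) = ∑ i, ∑ j, Complex.normSq (X i j) := by
  simp [rtr, Matrix.trace, Matrix.mul_apply, Complex.mul_conj, -Complex.ofReal_sum]

/-- overlaps -/
def ov (U V : Matrix n n ℂ) (b a : n) : ℝ := Complex.normSq ((Vᴴ * U) b a)

lemma ov_nonneg (U V : Matrix n n ℂ) (b a : n) : 0 ≤ ov U V b a := Complex.normSq_nonneg _

lemma ov_sum_right {U V : Matrix n n ℂ} (hU : U * Uᴴ = 1) (hV : Vᴴ * V = 1) (b : n) :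
    ∑ a, ov U V b a = 1 := by
  have h : (Vᴴ * U) * (Vᴴ * U)ᴴ = 1 := by
    rw [conjTranspose_mul, conjTranspose_conjTranspose, Matrix.mul_assoc, ← Matrix.mul_assoc U, hU,
      Matrix.one_mul, hV]
  have := congrFun (congrFun h b) b
  rw [Matrix.mul_apply] at this
  simp only [conjTranspose_apply, RCLike.star_def, Complex.mul_conj, one_apply_eq] at this
  unfold ov
  exact_mod_cast this

lemma ov_sum_left {U V : Matrix n n ℂ} (hU : Uᴴ * U = 1) (hV : V * Vᴴ = 1) (a : n) :
    ∑ b, ov U V b a = 1 := by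
  have h : (Vᴴ * U)ᴴ * (Vᴴ * U) = 1 := by
    rw [conjTranspose_mul, conjTranspose_conjTranspose, Matrix.mul_assoc, ← Matrix.mul_assoc V, hV,
      Matrix.one_mul, hU]
  have := congrFun (congrFun h a) a
  rw [Matrix.mul_apply] at this
  simp only [conjTranspose_apply, RCLike.star_def, one_apply_eq] at this
  simp only [mul_comm ((starRingEnd ℂ) _), Complex.mul_conj] at this
  unfold ov
  exact_mod_cast this

lemma rtr_sp {A U : Matrix n n ℂ} {r : n → ℝ} (h : IsSp A U r) : rtr A = ∑ i, r i := by
  rw [h.2.2.2, rtr_mul_comm, ← Matrix.mul_assoc, h.1, Matrix.one_mul]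
  simp [rtr, Matrix.trace]

lemma rtr_diag_pair (y z : Matrix n m ℂ) (r : m → ℝ) :
    rtr (y * diagonal (fun i => (r i : ℂ)) * zᴴ) =
      ∑ b, ∑ a, r a * ((starRingEnd ℂ (z b a)) * y b a).re := by
  unfold rtr Matrix.trace
  rw [Complex.re_sum]
  refine Finset.sum_congr rfl fun b _ => ?_
  rw [Matrix.diag_apply, Matrix.mul_apply, Complex.re_sum]
  refine Finset.sum_congr rfl fun a _ => ?_
  rw [mul_diagonal, conjTranspose_apply, RCLike.star_def]
  simp only [Complex.mul_re, Complex.mul_im, Complex.ofReal_re, Complex.ofReal_im, Complex.conj_re,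
    Complex.conj_im]
  ring

/-- general weighted Frobenius formula -/
lemma rtr_diag_frob (y : Matrix n m ℂ) (r : m → ℝ) :
    rtr (y * diagonal (fun i => (r i : ℂ)) * yᴴ) = ∑ b, ∑ a, Complex.normSq (y b a) * r a := by
  rw [rtr_diag_pair]
  refine Finset.sum_congr rfl fun b _ => Finset.sum_congr rfl fun a _ => ?_
  rw [mul_comm (starRingEnd ℂ _), Complex.mul_conj, Complex.ofReal_re, mul_comm]

lemma tr1 {A U V : Matrix n n ℂ} {r : n → ℝ} (h : IsSp A U r) (hV : V * Vᴴ = 1)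
    (X : Matrix n n ℂ) :
    rtr (A * (Xᴴ * X)) = ∑ b, ∑ a, Complex.normSq ((Vᴴ * X * U) b a) * r a := by
  rw [← rtr_diag_frob, h.2.2.2]
  simp only [conjTranspose_mul, conjTranspose_conjTranspose]
  rw [rtr_mul_comm, rtr_mul_comm _ (Uᴴ * (Xᴴ * V))]
  simp only [Matrix.mul_assoc]
  rw [← Matrix.mul_assoc V Vᴴ, hV, Matrix.one_mul, rtr_mul_comm Uᴴ]
  simp only [Matrix.mul_assoc]

lemma tr2 {B U V : Matrix n n ℂ} {s : n → ℝ} (h : IsSp B V s) (hU : U * Uᴴ = 1)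
    (X : Matrix n n ℂ) :
    rtr (B * (X * Xᴴ)) = ∑ b, ∑ a, Complex.normSq ((Vᴴ * X * U) b a) * s b := by
  have := tr1 h hU Xᴴ
  rw [conjTranspose_conjTranspose] at this
  rw [this, Finset.sum_comm]
  refine Finset.sum_congr rfl fun b _ => Finset.sum_congr rfl fun a _ => ?_
  congr 1
  have : Uᴴ * Xᴴ * V = (Vᴴ * X * U)ᴴ := by
    simp [conjTranspose_mul, Matrix.mul_assoc]
  rw [this, conjTranspose_apply, RCLike.star_def, Complex.normSq_conj]

lemma tr3 {A U V : Matrix n n ℂ} {r : n → ℝ} (h : IsSp A U r) (hV : V * Vᴴ = 1)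
    (X : Matrix n n ℂ) :
    rtr (A * X) = ∑ b, ∑ a, r a *
      ((starRingEnd ℂ ((Vᴴ * U) b a)) * (Vᴴ * X * U) b a).re := by
  have e : rtr (A * X) = rtr ((Vᴴ * X * U) * diagonal (fun i => (r i : ℂ)) * (Vᴴ * U)ᴴ) := by
    rw [h.2.2.2]
    simp only [conjTranspose_mul, conjTranspose_conjTranspose]
    rw [rtr_mul_comm, rtr_mul_comm _ (Uᴴ * V)]
    simp only [Matrix.mul_assoc]
    rw [← Matrix.mul_assoc V Vᴴ, hV, Matrix.one_mul, rtr_mul_comm Uᴴ]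
    simp only [Matrix.mul_assoc]
  rw [e, rtr_diag_pair]

/-- The basic functional. -/
def Rt (U V : Matrix n n ℂ) (r s : n → ℝ) (t : ℝ) : ℝ :=
  ∑ b, ∑ a, ov U V b a * r a * (r a / (r a + t * s b))

lemma Rt_ge {A B U V : Matrix n n ℂ} {r s : n → ℝ} (hA : IsSp A U r) (hB : IsSp B V s)
    {t : ℝ} (ht : 0 < t) (X : Matrix n n ℂ) :
    2 * rtr (A * X) - rtr (A * (Xᴴ * X)) - t * rtr (B * (X * Xᴴ)) ≤ Rt U V r s t := by
  rw [tr1 hA hB.2.1, tr2 hB hA.2.1, tr3 hA hB.2.1]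
  unfold Rt ov
  simp only [Finset.mul_sum]
  simp only [← Finset.sum_sub_distrib]
  refine Finset.sum_le_sum fun b _ => Finset.sum_le_sum fun a _ => ?_
  have h1 := hA.2.2.1 a
  have h2 := hB.2.2.1 b
  set u := (Vᴴ * U) b a
  set y := (Vᴴ * X * U) b a
  simp only [Complex.mul_re, Complex.conj_re, Complex.conj_im, Complex.normSq_apply]
  rcases eq_or_lt_of_le h1 with h0 | h0
  · rw [← h0]; simp
    have : 0 ≤ (y.re*y.re+y.im*y.im) * s b := mul_nonneg (by nlinarith) h2
    nlinarith
  · have hd : 0 < r a + t * s b := by positivity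
    rw [← mul_div_assoc, le_div_iff₀ hd]
    nlinarith [sq_nonneg (r a * u.re - (r a + t * s b) * y.re),
      sq_nonneg (r a * u.im - (r a + t * s b) * y.im)]

lemma Rt_attained {A B U V : Matrix n n ℂ} {r s : n → ℝ} (hA : IsSp A U r) (hB : IsSp B V s)
    {t : ℝ} (ht : 0 < t) : ∃ X : Matrix n n ℂ,
    2 * rtr (A * X) - rtr (A * (Xᴴ * X)) - t * rtr (B * (X * Xᴴ)) = Rt U V r s t := by
  let Y : Matrix n n ℂ := Matrix.of fun b a => ((r a / (r a + t * s b) : ℝ) : ℂ) * (Vᴴ * U) b a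
  refine ⟨V * Y * Uᴴ, ?_⟩
  have e : Vᴴ * (V * Y * Uᴴ) * U = Y := by
    simp only [Matrix.mul_assoc]
    rw [hA.1, Matrix.mul_one, ← Matrix.mul_assoc, hB.1, Matrix.one_mul]
  rw [tr1 hA hB.2.1, tr2 hB hA.2.1, tr3 hA hB.2.1, e]
  unfold Rt ov
  simp only [Finset.mul_sum]
  simp only [← Finset.sum_sub_distrib]
  refine Finset.sum_congr rfl fun b _ => Finset.sum_congr rfl fun a _ => ?_
  have h1 := hA.2.2.1 a
  have h2 := hB.2.2.1 b
  simp only [Y, Matrix.of_apply]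
  set u := (Vᴴ * U) b a
  simp only [Complex.mul_re, Complex.mul_im, Complex.conj_re, Complex.conj_im, Complex.normSq_apply,
    Complex.ofReal_re, Complex.ofReal_im]
  rcases eq_or_lt_of_le h1 with h0 | h0
  · rw [← h0]; simp
  · have hd : r a + t * s b ≠ 0 := by positivity
    field_simp
    ring

end P1

section P2
variable {n m k : Type} [Fintype n] [DecidableEq n] [Fintype m] [DecidableEq m] [Fintype k] [DecidableEq k]

lemma rtr_herm_conj {A : Matrix n n ℂ} (hA : A.IsHermitian) (X : Matrix n n ℂ) :
    rtr (A * Xᴴ) = rtr (A * X) := by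
  rw [← rtr_conjTranspose, conjTranspose_mul, conjTranspose_conjTranspose, hA.eq, rtr_mul_comm]

lemma quad_lower {τ : Matrix n n ℂ} (hτ : τ.PosSemidef) (X : Matrix n n ℂ) (θ : ℝ) :
    2 * θ * rtr (τ * X) - θ ^ 2 * rtr τ ≤ rtr (τ * (Xᴴ * X)) := by
  have h : (0:ℝ) ≤ rtr (τ * ((X - (θ : ℂ) • (1 : Matrix n n ℂ))ᴴ * (X - (θ : ℂ) • (1 : Matrix n n ℂ)))) :=
    rtr_mul_nonneg hτ (posSemidef_conjTranspose_mul_self _)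
  have e : τ * ((X - (θ : ℂ) • (1 : Matrix n n ℂ))ᴴ * (X - (θ : ℂ) • (1 : Matrix n n ℂ))) =
      τ * (Xᴴ * X) - (θ : ℂ) • (τ * Xᴴ) - (θ : ℂ) • (τ * X) + ((θ * θ : ℝ) : ℂ) • τ := by
    simp only [conjTranspose_sub, conjTranspose_smul, conjTranspose_one, RCLike.star_def,
      Complex.conj_ofReal, Matrix.sub_mul, Matrix.mul_sub, Matrix.smul_mul, Matrix.mul_smul,
      Matrix.one_mul, Matrix.mul_one, smul_smul, Complex.ofReal_mul]
    module
  rw [e, rtr_add, rtr_sub, rtr_sub, rtr_smul, rtr_smul, rtr_smul, rtr_herm_conj hτ.1] at h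
  nlinarith

lemma quad_lower' {τ : Matrix n n ℂ} (hτ : τ.PosSemidef) (X : Matrix n n ℂ) (θ : ℝ) :
    2 * θ * rtr (τ * X) - θ ^ 2 * rtr τ ≤ rtr (τ * (X * Xᴴ)) := by
  have := quad_lower hτ Xᴴ θ
  rwa [rtr_herm_conj hτ.1, conjTranspose_conjTranspose] at this

lemma Rt_le_reverse {X : Type} [Fintype X] {τ : X → Matrix n n ℂ} {δ : X → ℝ}
    (hτ : ∀ x, (τ x).PosSemidef) (hδ : ∀ x, 0 ≤ δ x) {U V : Matrix n n ℂ} {r s : n → ℝ}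
    (hA : IsSp (∑ x, (δ x : ℂ) • τ x) U r) (hB : IsSp (∑ x, τ x) V s) {t : ℝ} (ht : 0 < t) :
    Rt U V r s t ≤ ∑ x, rtr (τ x) * δ x * (δ x / (δ x + t)) := by
  obtain ⟨Z, hZ⟩ := Rt_attained hA hB ht
  rw [← hZ]
  simp only [Finset.sum_mul, rtr_sum, Finset.mul_sum, Matrix.smul_mul, rtr_smul]
  simp only [← Finset.sum_sub_distrib]
  refine Finset.sum_le_sum fun x _ => ?_
  have hd : 0 < δ x + t := by have := hδ x; positivity
  have h1 := quad_lower (hτ x) Z (δ x / (δ x + t))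
  have h2 := quad_lower' (hτ x) Z (δ x / (δ x + t))
  set θ := δ x / (δ x + t) with hθ
  have e : θ * (δ x + t) = δ x := by rw [hθ]; field_simp
  have h3 := mul_le_mul_of_nonneg_left h1 (hδ x)
  have h4 := mul_le_mul_of_nonneg_left h2 ht.le
  have e2 : rtr (τ x) * δ x * θ = θ ^ 2 * rtr (τ x) * (δ x + t) := by
    conv_lhs => rw [← e]
    ring
  have e3 : 2 * (δ x * rtr (τ x * Z)) = 2 * θ * rtr (τ x * Z) * (δ x + t) := by
    conv_lhs => rw [← e]
    ring
  rw [e2, e3]; nlinarith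

lemma kadison {κ : Type} [Fintype κ] (K : κ → Matrix m n ℂ) (hK : ∑ k, (K k)ᴴ * K k = 1)
    (X : Matrix m m ℂ) :
    (∑ k, (K k)ᴴ * (Xᴴ * X) * K k -
      (∑ k, (K k)ᴴ * X * K k)ᴴ * (∑ k, (K k)ᴴ * X * K k)).PosSemidef := by
  set Y := ∑ k, (K k)ᴴ * X * K k with hY
  have e : ∑ k, (K k)ᴴ * (Xᴴ * X) * K k - Yᴴ * Y =
      ∑ k, (X * K k - K k * Y)ᴴ * (X * K k - K k * Y) := by
    have : ∀ k, (X * K k - K k * Y)ᴴ * (X * K k - K k * Y) =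
        (K k)ᴴ * (Xᴴ * X) * K k - ((K k)ᴴ * X * K k)ᴴ * Y - Yᴴ * ((K k)ᴴ * X * K k)
          + Yᴴ * ((K k)ᴴ * K k) * Y := by
      intro k
      simp only [conjTranspose_sub, conjTranspose_mul, conjTranspose_conjTranspose,
        Matrix.sub_mul, Matrix.mul_sub, Matrix.mul_assoc]
      abel
    simp only [this, Finset.sum_add_distrib, Finset.sum_sub_distrib]
    rw [← Finset.sum_mul, ← Finset.sum_mul, ← Finset.mul_sum, ← Finset.mul_sum, hK,
      ← conjTranspose_sum, ← hY, Matrix.mul_one]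
    abel
  rw [e]
  exact posSemidef_sum _ fun k _ => posSemidef_conjTranspose_mul_self _

lemma rtr_kraus {κ : Type} [Fintype κ] (K : κ → Matrix m n ℂ) (A : Matrix n n ℂ)
    (X : Matrix m m ℂ) :
    rtr ((∑ k, K k * A * (K k)ᴴ) * X) = rtr (A * ∑ k, (K k)ᴴ * X * K k) := by
  rw [Finset.sum_mul, Finset.mul_sum, rtr_sum, rtr_sum]
  refine Finset.sum_congr rfl fun k _ => ?_
  rw [Matrix.mul_assoc, Matrix.mul_assoc, rtr_mul_comm]
  simp only [Matrix.mul_assoc]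

lemma Rt_dpi {κ : Type} [Fintype κ] {K : κ → Matrix m n ℂ} (hK : ∑ k, (K k)ᴴ * K k = 1)
    {A B U V : Matrix n n ℂ} {r s : n → ℝ} (hA : IsSp A U r) (hB : IsSp B V s)
    {U' V' : Matrix m m ℂ} {r' s' : m → ℝ} (hA' : IsSp (∑ k, K k * A * (K k)ᴴ) U' r')
    (hB' : IsSp (∑ k, K k * B * (K k)ᴴ) V' s') {t : ℝ} (ht : 0 < t) :
    Rt U' V' r' s' t ≤ Rt U V r s t := by
  obtain ⟨Z, hZ⟩ := Rt_attained hA' hB' ht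
  rw [← hZ, rtr_kraus, rtr_kraus, rtr_kraus]
  refine le_trans ?_ (Rt_ge hA hB ht (∑ k, (K k)ᴴ * Z * K k))
  have h1 := rtr_mul_le hA.psd (kadison K hK Z)
  have h2 := rtr_mul_le hB.psd (kadison K hK Zᴴ)
  have e : (∑ k, (K k)ᴴ * Zᴴ * K k)ᴴ = ∑ k, (K k)ᴴ * Z * K k := by
    rw [conjTranspose_sum]
    simp [conjTranspose_mul, Matrix.mul_assoc]
  rw [e, ← conjTranspose_conjTranspose (∑ k, (K k)ᴴ * Zᴴ * K k), e,
    conjTranspose_conjTranspose] at h2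
  have h3 := mul_le_mul_of_nonneg_left h2 ht.le
  linarith

lemma psd_T_sub_sq {T : Matrix n n ℂ} (hT : T.PosSemidef) (hT' : (1 - T).PosSemidef) :
    (T - T * T).PosSemidef := by
  have e : T - T * T = Tᴴ * (1 - T) * T + (1 - T)ᴴ * T * (1 - T) := by
    rw [hT.1.eq, hT'.1.eq]; noncomm_ring
  rw [e]
  exact (hT'.conjTranspose_mul_mul_same T).add (hT.conjTranspose_mul_mul_same (1 - T))

lemma Rt_binary {A B U V : Matrix n n ℂ} {r s : n → ℝ} (hA : IsSp A U r) (hB : IsSp B V s)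
    {T : Matrix n n ℂ} (hT : T.PosSemidef) (hT' : (1 - T).PosSemidef) {t : ℝ} (ht : 0 < t)
    {p p' q q' : ℝ} (hp : p = rtr (T * A)) (hp' : p' = rtr A - p) (hq : q = rtr (T * B))
    (hq' : q' = rtr B - q) :
    p * (p / (p + t * q)) + p' * (p' / (p' + t * q')) ≤ Rt U V r s t := by
  have hp0 : 0 ≤ p := hp ▸ rtr_mul_nonneg hT hA.psd
  have hq0 : 0 ≤ q := hq ▸ rtr_mul_nonneg hT hB.psd
  have hp0' : 0 ≤ p' := by
    have := rtr_mul_nonneg hT' hA.psd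
    rw [Matrix.sub_mul, rtr_sub, Matrix.one_mul] at this; linarith
  have hq0' : 0 ≤ q' := by
    have := rtr_mul_nonneg hT' hB.psd
    rw [Matrix.sub_mul, rtr_sub, Matrix.one_mul] at this; linarith
  set y1 := p / (p + t * q) with hy1
  set y2 := p' / (p' + t * q') with hy2
  have e1 : y1 * (p + t * q) = p := by
    rcases eq_or_lt_of_le hp0 with h | h
    · rw [hy1, ← h]; simp
    · rw [hy1]; have : p + t * q ≠ 0 := by positivity
      field_simp
  have e2 : y2 * (p' + t * q') = p' := by
    rcases eq_or_lt_of_le hp0' with h | h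
    · rw [hy2, ← h]; simp
    · rw [hy2]; have : p' + t * q' ≠ 0 := by positivity
      field_simp
  clear_value y1 y2
  set X : Matrix n n ℂ := ((y1 - y2 : ℝ) : ℂ) • T + (y2 : ℂ) • 1 with hX
  have hXh : Xᴴ = X := by
    rw [hX]
    simp [conjTranspose_add, conjTranspose_smul, hT.1.eq]
  have hge := Rt_ge hA hB ht X
  rw [hXh] at hge
  have hX2 : X * X = ((y1^2 - y2^2 : ℝ) : ℂ) • T + ((y2^2 : ℝ) : ℂ) • 1
      - (((y1 - y2)^2 : ℝ) : ℂ) • (T - T * T) := by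
    rw [hX]
    simp only [Matrix.add_mul, Matrix.mul_add, Matrix.smul_mul, Matrix.mul_smul, Matrix.one_mul,
      Matrix.mul_one, smul_smul, smul_sub]
    push_cast
    module
  have hgen : ∀ C : Matrix n n ℂ, C.PosSemidef →
      rtr (C * (X * X)) ≤ y1^2 * rtr (T * C) + y2^2 * (rtr C - rtr (T * C)) := by
    intro C hC
    have h0 := rtr_mul_nonneg hC (psd_T_sub_sq hT hT')
    rw [hX2]
    simp only [Matrix.mul_sub, Matrix.mul_add, Matrix.mul_smul, Matrix.mul_one, rtr_sub, rtr_add,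
      rtr_smul]
    rw [Matrix.mul_sub, rtr_sub] at h0
    rw [rtr_mul_comm T C]
    nlinarith [mul_nonneg (sq_nonneg (y1 - y2)) h0]
  have hl : rtr (A * X) = y1 * p + y2 * p' := by
    rw [hX]
    simp only [Matrix.mul_add, Matrix.mul_smul, Matrix.mul_one, rtr_add, rtr_smul]
    rw [hp', hp, rtr_mul_comm T A]; ring
  have hA2 := hgen A hA.psd
  have hB2 := mul_le_mul_of_nonneg_left (hgen B hB.psd) ht.le
  rw [← hp, ← hp'] at hA2
  rw [← hq, ← hq'] at hB2
  rw [hl] at hge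
  refine le_trans ?_ hge
  have : y1^2 * (p + t * q) = p * y1 := by rw [pow_two, mul_assoc, e1, mul_comm]
  have : y2^2 * (p' + t * q') = p' * y2 := by rw [pow_two, mul_assoc, e2, mul_comm]
  nlinarith

end P2

section P3
open MeasureTheory

lemma lem_int {ι ι' : Type} [Fintype ι] [Fintype ι'] {w x : ι → ℝ} {w' x' : ι' → ℝ}
    (hx : ∀ i, 0 ≤ x i) (hx' : ∀ i, 0 ≤ x' i)
    (h : ∀ t : ℝ, 0 < t → ∑ i, w i * (x i / (x i + t)) ≤ ∑ i, w' i * (x' i / (x' i + t)))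
    {γ : ℝ} (h0 : 0 < γ) (h1 : γ < 1) :
    ∑ i, w i * x i ^ γ ≤ ∑ i, w' i * x' i ^ γ := by
  have hγ : γ ∈ Set.Ioo (0:ℝ) 1 := ⟨h0, h1⟩
  set c := (∫ t in Set.Ioi 0, Real.rpowIntegrand₀₁ γ t 1)⁻¹ with hc
  have hcpos : 0 ≤ c := inv_nonneg.2 (Real.integral_rpowIntegrand₀₁_one_pos hγ).le
  have key : ∀ {κ : Type} [Fintype κ] (w x : κ → ℝ) (hx : ∀ i, 0 ≤ x i),
      IntegrableOn (fun t => ∑ i, w i * Real.rpowIntegrand₀₁ γ t (x i)) (Set.Ioi 0) ∧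
      ∑ i, w i * x i ^ γ = c * ∫ t in Set.Ioi 0, ∑ i, w i * Real.rpowIntegrand₀₁ γ t (x i) := by
    intro κ _ w x hx
    have hi : ∀ i ∈ Finset.univ, Integrable (fun t => w i * Real.rpowIntegrand₀₁ γ t (x i))
        (volume.restrict (Set.Ioi 0)) := fun i _ =>
      (Real.integrableOn_rpowIntegrand₀₁_Ioi hγ (hx i)).const_mul _
    refine ⟨integrable_finset_sum _ hi, ?_⟩
    rw [integral_finset_sum _ hi, Finset.mul_sum]
    refine Finset.sum_congr rfl fun i _ => ?_
    rw [integral_const_mul, Real.rpow_eq_const_mul_integral hγ (hx i), ← hc]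
    ring
  obtain ⟨i1, e1⟩ := key w x hx
  obtain ⟨i2, e2⟩ := key w' x' hx'
  rw [e1, e2]
  refine mul_le_mul_of_nonneg_left ?_ hcpos
  refine setIntegral_mono_on i1 i2 measurableSet_Ioi fun t ht => ?_
  have ht : 0 < t := ht
  have e : ∀ y : ℝ, 0 ≤ y → Real.rpowIntegrand₀₁ γ t y = (t ^ γ / t) * (y / (y + t)) := by
    intro y hy
    unfold Real.rpowIntegrand₀₁
    have : t + y ≠ 0 := by positivity
    have : y + t ≠ 0 := by positivity
    field_simp
    ring
  have hpos : 0 ≤ t ^ γ / t := by positivity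
  have := mul_le_mul_of_nonneg_left (h t ht) hpos
  simp only [Finset.mul_sum] at this
  calc _ = ∑ i, t ^ γ / t * (w i * (x i / (x i + t))) :=
        Finset.sum_congr rfl fun i _ => by rw [e _ (hx i)]; ring
    _ ≤ _ := this
    _ = _ := Finset.sum_congr rfl fun i _ => by rw [e _ (hx' i)]; ring

lemma cosh_scale {θ : ℝ} (h0 : 0 ≤ θ) (h1 : θ ≤ 1) (z : ℝ) :
    Real.cosh (θ * z) ≤ 1 + θ ^ 2 * (Real.cosh z - 1) := by
  have a := Real.hasSum_cosh (θ * z)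
  have b := (Real.hasSum_cosh z).mul_left (θ ^ 2)
  have c : HasSum (fun n : ℕ => if n = 0 then (1 - θ ^ 2) else 0) (1 - θ ^ 2) :=
    hasSum_ite_eq 0 (1 - θ ^ 2)
  have d := b.add c
  have := hasSum_le (fun n => ?_) a d
  · linarith
  · by_cases hn : n = 0
    · subst hn; simp
    · simp only [hn, if_false, add_zero]
      rw [mul_pow, ← mul_div_assoc]
      refine div_le_div_of_nonneg_right ?_ (by positivity)
      refine mul_le_mul_of_nonneg_right ?_ (by rw [pow_mul]; positivity)
      exact pow_le_pow_of_le_one h0 h1 (by omega)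

lemma rpow_pair {x a γ : ℝ} (hx : 0 < x) (ha : 0 < a) (h0 : 0 < γ) (h1 : γ ≤ a) :
    x ^ γ + x⁻¹ ^ γ - 2 ≤ (γ / a) ^ 2 * (x ^ a + x⁻¹ ^ a - 2) := by
  have key : ∀ c : ℝ, x ^ c + x⁻¹ ^ c = 2 * Real.cosh (c * Real.log x) := by
    intro c
    rw [Real.cosh_eq, Real.rpow_def_of_pos hx, Real.rpow_def_of_pos (inv_pos.2 hx), Real.log_inv]
    rw [show Real.log x * c = c * Real.log x by ring,
      show -Real.log x * c = -(c * Real.log x) by ring]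
    ring
  rw [key, key]
  have := cosh_scale (θ := γ / a) (by positivity) ((div_le_one ha).2 h1) (a * Real.log x)
  rw [← mul_assoc, div_mul_cancel₀ _ ha.ne'] at this
  linarith

lemma gap_lemma {ι : Type} [Fintype ι] {w x : ι → ℝ} (hw : ∀ i, 0 ≤ w i) (hs : ∑ i, w i = 1)
    (hx : ∀ i, w i ≠ 0 → 0 < x i) {a γ : ℝ} (ha : 0 < a) (ha1 : a < 1) (h0 : 0 < γ) (h1 : γ ≤ a)
    (hp : ∑ i, w i * x i ^ a ≤ 2) (hm : ∑ i, w i * (x i)⁻¹ ≤ 1) (hxn : ∀ i, 0 ≤ x i) :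
    0 < ∑ i, w i * x i ^ γ ∧ 0 < ∑ i, w i * (x i)⁻¹ ^ γ ∧
    Real.log (∑ i, w i * x i ^ γ) + Real.log (∑ i, w i * (x i)⁻¹ ^ γ) ≤ (γ / a) ^ 2 := by
  have hne : ∃ i, 0 < w i := by
    by_contra hcon
    push Not at hcon
    have : ∑ i, w i = 0 := Finset.sum_eq_zero fun i _ => le_antisymm (hcon i) (hw i)
    linarith
  obtain ⟨i0, hi0⟩ := hne
  have P1 : 0 < ∑ i, w i * x i ^ γ :=
    Finset.sum_pos' (fun i _ => mul_nonneg (hw i) (Real.rpow_nonneg (hxn i) _))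
      ⟨i0, Finset.mem_univ _, mul_pos hi0 (Real.rpow_pos_of_pos (hx i0 hi0.ne') _)⟩
  have P2 : 0 < ∑ i, w i * (x i)⁻¹ ^ γ :=
    Finset.sum_pos' (fun i _ => mul_nonneg (hw i) (Real.rpow_nonneg (inv_nonneg.2 (hxn i)) _))
      ⟨i0, Finset.mem_univ _, mul_pos hi0 (Real.rpow_pos_of_pos (inv_pos.2 (hx i0 hi0.ne')) _)⟩
  refine ⟨P1, P2, ?_⟩
  have hm2 : ∑ i, w i * (x i)⁻¹ ^ a ≤ 1 := by
    calc ∑ i, w i * (x i)⁻¹ ^ a ≤ ∑ i, (w i * (1 - a) + a * (w i * (x i)⁻¹)) := by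
          refine Finset.sum_le_sum fun i _ => ?_
          have hy := inv_nonneg.2 (hxn i)
          have := Real.geom_mean_le_arith_mean2_weighted (w₁ := 1 - a) (w₂ := a) (p₁ := 1)
            (p₂ := (x i)⁻¹) (by linarith) ha.le zero_le_one hy (by ring)
          rw [Real.one_rpow, one_mul] at this
          have := mul_le_mul_of_nonneg_left this (hw i)
          linarith
      _ = (1 - a) + a * ∑ i, w i * (x i)⁻¹ := by
          rw [Finset.sum_add_distrib, ← Finset.sum_mul, hs, ← Finset.mul_sum]; ring
      _ ≤ 1 := by nlinarith
  have l1 := Real.log_le_sub_one_of_pos P1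
  have l2 := Real.log_le_sub_one_of_pos P2
  have : ∑ i, w i * x i ^ γ + ∑ i, w i * (x i)⁻¹ ^ γ - 2 * ∑ i, w i ≤
      (γ / a) ^ 2 * (∑ i, w i * x i ^ a + ∑ i, w i * (x i)⁻¹ ^ a - 2 * ∑ i, w i) := by
    simp only [Finset.mul_sum, ← Finset.sum_add_distrib, ← Finset.sum_sub_distrib]
    refine Finset.sum_le_sum fun i _ => ?_
    by_cases hwi : w i = 0
    · simp [hwi]
    · have := mul_le_mul_of_nonneg_left (rpow_pair (hx i hwi) ha h0 h1) (hw i)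
      nlinarith
  rw [hs] at this
  have h2 : (γ / a) ^ 2 * (∑ i, w i * x i ^ a + ∑ i, w i * (x i)⁻¹ ^ a - 2 * 1) ≤ (γ / a) ^ 2 * 1 :=
    mul_le_mul_of_nonneg_left (by linarith) (sq_nonneg _)
  linarith

lemma frac_le_rpow {y γ : ℝ} (hy : 0 ≤ y) (h0 : 0 < γ) (h1 : γ < 1) : y / (y + 1) ≤ y ^ γ := by
  rcases le_total y 1 with h | h
  · calc y / (y + 1) ≤ y := div_le_self hy (by linarith)
      _ = y ^ (1:ℝ) := (Real.rpow_one y).symm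
      _ ≤ y ^ γ := Real.rpow_le_rpow_of_exponent_ge' hy h h0.le h1.le
  · calc y / (y + 1) ≤ 1 := by rw [div_le_one (by linarith)]; linarith
      _ ≤ y ^ γ := Real.one_le_rpow h h0.le

variable {n m k : Type} [Fintype n] [DecidableEq n] [Fintype m] [DecidableEq m] [Fintype k] [DecidableEq k]

/-- dominance -/
def Dom (U V : Matrix n n ℂ) (r s : n → ℝ) : Prop := ∀ b a, s b = 0 → ov U V b a * r a = 0

/-- Rényi-type moments -/
def Qp (U V : Matrix n n ℂ) (r s : n → ℝ) (γ : ℝ) : ℝ :=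
  ∑ i : n × n, (ov U V i.1 i.2 * r i.2) * (r i.2 / s i.1) ^ γ
def Qm (U V : Matrix n n ℂ) (r s : n → ℝ) (γ : ℝ) : ℝ :=
  ∑ i : n × n, (ov U V i.1 i.2 * r i.2) * ((r i.2 / s i.1)⁻¹) ^ γ

lemma dom_of_le {A B U V : Matrix n n ℂ} {r s : n → ℝ} (hA : IsSp A U r) (hB : IsSp B V s)
    {L : ℝ} (hL : ((L : ℂ) • B - A).PosSemidef) : Dom U V r s := by
  intro b a hb
  set X : Matrix n n ℂ := V * diagonal (fun i => if i = b then (1:ℂ) else 0) * Vᴴ with hX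
  have hXh : Xᴴ = X := by
    rw [hX]
    simp only [conjTranspose_mul, conjTranspose_conjTranspose, diagonal_conjTranspose,
      Matrix.mul_assoc]
    congr 3
    ext i
    by_cases h : i = b <;> simp [h]
  have e : Vᴴ * X * U = diagonal (fun i => if i = b then (1:ℂ) else 0) * (Vᴴ * U) := by
    rw [hX]
    simp only [Matrix.mul_assoc]
    rw [← Matrix.mul_assoc Vᴴ V, hB.1, Matrix.one_mul]
  have h1 := rtr_mul_le (posSemidef_conjTranspose_mul_self X) hL
  rw [rtr_mul_comm, rtr_mul_comm _ ((L:ℂ) • B), Matrix.smul_mul, rtr_smul,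
    tr1 hA hB.2.1, show B * (Xᴴ * X) = B * (X * Xᴴ) by rw [hXh], tr2 hB hA.2.1, e] at h1
  have z : ∑ b', ∑ a, Complex.normSq
      ((diagonal (fun i => if i = b then (1:ℂ) else 0) * (Vᴴ * U)) b' a) * s b' = 0 := by
    refine Finset.sum_eq_zero fun b' _ => Finset.sum_eq_zero fun a' _ => ?_
    rw [diagonal_mul]
    by_cases h : b' = b
    · rw [h, hb, mul_zero]
    · simp [h]
  rw [z, mul_zero] at h1
  have nn : ∀ b' a', 0 ≤ Complex.normSq
      ((diagonal (fun i => if i = b then (1:ℂ) else 0) * (Vᴴ * U)) b' a') * r a' :=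
    fun b' a' => mul_nonneg (Complex.normSq_nonneg _) (hA.2.2.1 _)
  have h2 := le_antisymm h1 (Finset.sum_nonneg fun b' _ => Finset.sum_nonneg fun a' _ => nn b' a')
  have h3 := (Finset.sum_eq_zero_iff_of_nonneg fun b' _ =>
    Finset.sum_nonneg fun a' _ => nn b' a').1 h2 b (Finset.mem_univ _)
  have h4 := (Finset.sum_eq_zero_iff_of_nonneg fun a' _ => nn b a').1 h3 a (Finset.mem_univ _)
  rw [diagonal_mul] at h4
  simpa [ov] using h4

lemma Rt_eq {U V : Matrix n n ℂ} {r s : n → ℝ} (hr : ∀ i, 0 ≤ r i) (hs : ∀ i, 0 ≤ s i)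
    (hd : Dom U V r s) {t : ℝ} (ht : 0 < t) :
    Rt U V r s t = ∑ i : n × n, (ov U V i.1 i.2 * r i.2) *
      ((r i.2 / s i.1) / (r i.2 / s i.1 + t)) := by
  unfold Rt
  rw [Fintype.sum_prod_type]
  refine Finset.sum_congr rfl fun b _ => Finset.sum_congr rfl fun a _ => ?_
  by_cases h : s b = 0
  · simp [hd b a h]
  · congr 1
    have hsb : 0 < s b := lt_of_le_of_ne (hs b) (Ne.symm h)
    have : 0 ≤ r a := hr a
    have h1 : 0 < r a + t * s b := by positivity
    have h2 : 0 < r a / s b + t := by positivity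
    field_simp

lemma w_sum {A B U V : Matrix n n ℂ} {r s : n → ℝ} (hA : IsSp A U r) (hB : IsSp B V s) :
    ∑ i : n × n, (ov U V i.1 i.2 * r i.2) = rtr A := by
  rw [Fintype.sum_prod_type, Finset.sum_comm, rtr_sp hA]
  refine Finset.sum_congr rfl fun a _ => ?_
  dsimp only
  rw [← Finset.sum_mul, ov_sum_left hA.1 hB.2.1, one_mul]

lemma w_inv_sum {A B U V : Matrix n n ℂ} {r s : n → ℝ} (hA : IsSp A U r) (hB : IsSp B V s) :
    ∑ i : n × n, (ov U V i.1 i.2 * r i.2) * (r i.2 / s i.1)⁻¹ ≤ rtr B := by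
  rw [Fintype.sum_prod_type, rtr_sp hB]
  refine Finset.sum_le_sum fun b _ => ?_
  calc ∑ a, (ov U V b a * r a) * (r a / s b)⁻¹ ≤ ∑ a, ov U V b a * s b := by
        refine Finset.sum_le_sum fun a _ => ?_
        rw [inv_div]
        by_cases h : r a = 0
        · rw [h]; simpa using mul_nonneg (ov_nonneg U V b a) (hB.2.2.1 b)
        · apply le_of_eq; field_simp
    _ = s b := by rw [← Finset.sum_mul, ov_sum_right hA.2.1 hB.1, one_mul]

lemma Qp_dpi {κ : Type} [Fintype κ] {K : κ → Matrix m n ℂ} (hK : ∑ k, (K k)ᴴ * K k = 1)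
    {A B U V : Matrix n n ℂ} {r s : n → ℝ} (hA : IsSp A U r) (hB : IsSp B V s)
    {U' V' : Matrix m m ℂ} {r' s' : m → ℝ} (hA' : IsSp (∑ k, K k * A * (K k)ᴴ) U' r')
    (hB' : IsSp (∑ k, K k * B * (K k)ᴴ) V' s') (hd : Dom U V r s) (hd' : Dom U' V' r' s')
    {γ : ℝ} (h0 : 0 < γ) (h1 : γ < 1) : Qp U' V' r' s' γ ≤ Qp U V r s γ := by
  refine lem_int (fun i => div_nonneg (hA'.2.2.1 _) (hB'.2.2.1 _))
    (fun i => div_nonneg (hA.2.2.1 _) (hB.2.2.1 _)) (fun t ht => ?_) h0 h1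
  rw [← Rt_eq hA'.2.2.1 hB'.2.2.1 hd' ht, ← Rt_eq hA.2.2.1 hB.2.2.1 hd ht]
  exact Rt_dpi hK hA hB hA' hB' ht

lemma Qp_reverse {X : Type} [Fintype X] {τ : X → Matrix n n ℂ} {δ : X → ℝ}
    (hτ : ∀ x, (τ x).PosSemidef) (hδ : ∀ x, 0 ≤ δ x) {U V : Matrix n n ℂ} {r s : n → ℝ}
    (hA : IsSp (∑ x, (δ x : ℂ) • τ x) U r) (hB : IsSp (∑ x, τ x) V s) (hd : Dom U V r s)
    {γ : ℝ} (h0 : 0 < γ) (h1 : γ < 1) :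
    Qp U V r s γ ≤ ∑ x, rtr (τ x) * δ x * δ x ^ γ := by
  refine lem_int (fun i => div_nonneg (hA.2.2.1 _) (hB.2.2.1 _)) hδ (fun t ht => ?_) h0 h1
  rw [← Rt_eq hA.2.2.1 hB.2.2.1 hd ht]
  exact Rt_le_reverse hτ hδ hA hB ht

lemma Qp_binary {A B U V : Matrix n n ℂ} {r s : n → ℝ} (hA : IsSp A U r) (hB : IsSp B V s)
    (hd : Dom U V r s)
    {T : Matrix n n ℂ} (hT : T.PosSemidef) (hT' : (1 - T).PosSemidef)
    {p p' q q' : ℝ} (hp : p = rtr (T * A)) (hp' : p' = rtr A - p) (hq : q = rtr (T * B))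
    (hq' : q' = rtr B - q) (hq0 : 0 < q) (hq0' : 0 < q') (hp0 : 0 ≤ p) (hp0' : 0 ≤ p')
    {γ : ℝ} (h0 : 0 < γ) (h1 : γ < 1) :
    p * (p / q) ^ γ + p' * (p' / q') ^ γ ≤ Qp U V r s γ := by
  have := lem_int (ι := Bool) (w := fun b => if b then p else p')
    (x := fun b => if b then p / q else p' / q')
    (w' := fun i : n × n => (ov U V i.1 i.2 * r i.2)) (x' := fun i : n × n => r i.2 / s i.1)
    (fun b => by cases b <;> simp <;> positivity)
    (fun i => div_nonneg (hA.2.2.1 _) (hB.2.2.1 _)) (fun t ht => ?_) h0 h1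
  · simpa [Qp] using this
  · rw [← Rt_eq hA.2.2.1 hB.2.2.1 hd ht]
    refine le_trans (le_of_eq ?_) (Rt_binary hA hB hT hT' ht hp hp' hq hq')
    simp only [Fintype.sum_bool, if_true, Bool.false_eq_true, if_false]
    have : 0 < p + t * q := by positivity
    have : 0 < p' + t * q' := by positivity
    have : 0 < p / q + t := by positivity
    have : 0 < p' / q' + t := by positivity
    congr 1 <;> field_simp

lemma Q_gap {A B U V : Matrix n n ℂ} {r s : n → ℝ} (hA : IsSp A U r) (hB : IsSp B V s)
    (hd : Dom U V r s) (tA : rtr A = 1) (tB : rtr B = 1) {a γ : ℝ} (ha : 0 < a) (ha1 : a < 1)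
    (h0 : 0 < γ) (h1 : γ ≤ a) (hp : Qp U V r s a ≤ 2) :
    0 < Qp U V r s γ ∧ 0 < Qm U V r s γ ∧
    Real.log (Qp U V r s γ) + Real.log (Qm U V r s γ) ≤ (γ / a) ^ 2 := by
  refine gap_lemma (fun i => mul_nonneg (ov_nonneg _ _ _ _) (hA.2.2.1 _))
    ((w_sum hA hB).trans tA) (fun i hi => ?_) ha ha1 h0 h1 hp ((w_inv_sum hA hB).trans tB.le)
    (fun i => div_nonneg (hA.2.2.1 _) (hB.2.2.1 _))
  have h3 : s i.1 ≠ 0 := fun h => hi (hd _ _ h)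
  have h4 : r i.2 ≠ 0 := fun h => hi (by rw [h, mul_zero])
  exact div_pos (lt_of_le_of_ne (hA.2.2.1 _) h4.symm) (lt_of_le_of_ne (hB.2.2.1 _) h3.symm)

lemma jensen_pow {X : Type} [Fintype X] {u δ : X → ℝ} (hu : ∀ x, 0 ≤ u x) (hs : ∑ x, u x = 1)
    (hδ : ∀ x, 0 ≤ δ x) {a b : ℝ} (ha : 0 < a) (hab : a ≤ b) :
    ∑ x, u x * δ x ^ a ≤ (∑ x, u x * δ x ^ b) ^ (a / b) := by
  have hb : 0 < b := ha.trans_le hab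
  have := Real.rpow_arith_mean_le_arith_mean_rpow Finset.univ u (fun x => δ x ^ a)
    (fun x _ => hu x) hs (fun x _ => Real.rpow_nonneg (hδ x) _) (p := b / a)
    ((one_le_div ha).2 hab)
  have e : ∀ x, (δ x ^ a) ^ (b / a) = δ x ^ b := by
    intro x
    rw [← Real.rpow_mul (hδ x)]; congr 1; field_simp
  simp only [e] at this
  have hn : 0 ≤ ∑ x, u x * δ x ^ a :=
    Finset.sum_nonneg fun x _ => mul_nonneg (hu x) (Real.rpow_nonneg (hδ x) _)
  have := Real.rpow_le_rpow (Real.rpow_nonneg hn _) this (z := a / b) (by positivity)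
  rwa [← Real.rpow_mul hn, show b / a * (a / b) = 1 by field_simp, Real.rpow_one] at this

end P3

section P4
variable {n m k : Type} [Fintype n] [DecidableEq n] [Fintype m] [DecidableEq m] [Fintype k] [DecidableEq k]

lemma rtr_frob_zero {X : Matrix n m ℂ} (h : rtr (Xᴴ * X) = 0) : X = 0 := by
  rw [rtr_mul_comm, rtr_frob] at h
  have nn : ∀ i j, 0 ≤ Complex.normSq (X i j) := fun i j => Complex.normSq_nonneg _
  ext i j
  have h1 := (Finset.sum_eq_zero_iff_of_nonneg fun i _ =>
    Finset.sum_nonneg fun j _ => nn i j).1 h i (Finset.mem_univ _)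
  have h2 := (Finset.sum_eq_zero_iff_of_nonneg fun j _ => nn i j).1 h1 j (Finset.mem_univ _)
  simpa using h2

lemma trace_eq_rtr {A : Matrix n n ℂ} (hA : A.IsHermitian) : A.trace = (rtr A : ℂ) := by
  apply Complex.ext
  · simp [rtr]
  · have : star A.trace = A.trace := by rw [← Matrix.trace_conjTranspose, hA.eq]
    have := congrArg Complex.im this
    simp at this
    rw [Complex.ofReal_im]; linarith

lemma sp_sub_psd {O : Matrix n n ℂ} {e : n → ℝ} (h1 : O * Oᴴ = 1) {c : ℝ} (h : ∀ i, e i ≤ c) :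
    ((c : ℂ) • (1 : Matrix n n ℂ) - O * diagonal (fun i => (e i : ℂ)) * Oᴴ).PosSemidef := by
  have e1 : (c : ℂ) • (1 : Matrix n n ℂ) - O * diagonal (fun i => (e i : ℂ)) * Oᴴ =
      O * diagonal (fun i => ((c - e i : ℝ) : ℂ)) * Oᴴ := by
    have : diagonal (fun i => ((c - e i : ℝ) : ℂ)) =
        (c:ℂ) • (1 : Matrix n n ℂ) - diagonal (fun i => (e i : ℂ)) := by
      rw [smul_one_eq_diagonal, diagonal_sub]; simp
    rw [this, Matrix.mul_sub, Matrix.sub_mul, Matrix.mul_smul, Matrix.smul_mul, Matrix.mul_one, h1]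
  rw [e1]
  exact psd_conj_diag O fun i => by linarith [h i]

lemma agm_bound {W : Matrix n n ℂ} (hW : Wᴴ * W = 1) {a b : n → ℝ} (ha : ∀ i, 0 ≤ a i)
    (hb : ∀ i, 0 ≤ b i) {Y : Matrix n n ℂ}
    (hY : Y = Matrix.of fun i j => W i j * ((Real.sqrt (b i) * Real.sqrt (a j) / (b i + a j) : ℝ) : ℂ)) :
    (((1/4 : ℝ) : ℂ) • (1 : Matrix n n ℂ) - Y * Yᴴ).PosSemidef := by
  obtain ⟨O, e, hO⟩ := exists_isSp (posSemidef_self_mul_conjTranspose Y)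
  have hbound : ∀ i, e i ≤ 1/4 := by
    intro i
    -- column matrix
    set u : Matrix n Unit ℂ := Matrix.of fun j _ => O j i with hu
    have hOu : O * Matrix.of (fun (j : n) (_ : Unit) => if j = i then (1:ℂ) else 0) = u := by
      ext j x; simp [Matrix.mul_apply, hu]
    have huu : uᴴ * u = 1 := by
      rw [← hOu, conjTranspose_mul, Matrix.mul_assoc, ← Matrix.mul_assoc Oᴴ, hO.1, Matrix.one_mul]
      ext x y; simp [Matrix.mul_apply]
    have heig : Y * (Yᴴ * u) = (e i : ℂ) • u := by
      rw [← Matrix.mul_assoc, hO.2.2.2, ← hOu]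
      simp only [Matrix.mul_assoc]
      rw [← Matrix.mul_assoc Oᴴ, hO.1, Matrix.one_mul, ← Matrix.mul_smul]
      congr 1
      ext j x
      rw [diagonal_mul]
      by_cases h : j = i <;> simp [h]
    set v := Yᴴ * u with hv
    set sa : Matrix n n ℂ := diagonal fun j => (Real.sqrt (a j) : ℂ) with hsa
    set sb : Matrix n n ℂ := diagonal fun j => (Real.sqrt (b j) : ℂ) with hsb
    have hsah : saᴴ = sa := by
      rw [hsa, diagonal_conjTranspose]; congr 1; ext j; simp
    have hsbh : sbᴴ = sb := by
      rw [hsb, diagonal_conjTranspose]; congr 1; ext j; simp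
    have hBY : sb * W * sa = sb * sb * Y + Y * (sa * sa) := by
      ext j l
      rw [hsa, hsb, diagonal_mul_diagonal, diagonal_mul_diagonal, mul_diagonal, diagonal_mul,
        Matrix.add_apply, diagonal_mul, mul_diagonal, hY, Matrix.of_apply]
      simp only [← Complex.ofReal_mul]
      rw [Real.mul_self_sqrt (ha l), Real.mul_self_sqrt (hb j)]
      by_cases h : b j + a l = 0
      · have h1 : b j = 0 := by linarith [ha l, hb j]
        have h2 : a l = 0 := by linarith [ha l, hb j]
        simp [h1, h2]
      · have e1 : Real.sqrt (b j) * Real.sqrt (a l) =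
            (b j + a l) * (Real.sqrt (b j) * Real.sqrt (a l) / (b j + a l)) := by field_simp
        have e2 : ((Real.sqrt (b j) : ℝ) : ℂ) * W j l * (Real.sqrt (a l) : ℝ) =
            W j l * ((Real.sqrt (b j) * Real.sqrt (a l) : ℝ) : ℂ) := by push_cast; ring
        generalize Real.sqrt (b j) * Real.sqrt (a l) / (b j + a l) = q at e1 ⊢
        rw [e2, e1]
        push_cast; ring
    set Fq := rtr ((sb * u)ᴴ * (sb * u)) with hF
    set Gq := rtr ((sa * v)ᴴ * (sa * v)) with hG
    have hS : rtr ((sb * u)ᴴ * (W * (sa * v))) = e i * Fq + Gq := by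
      have : (sb * u)ᴴ * (W * (sa * v)) = uᴴ * (sb * W * sa) * v := by
        rw [conjTranspose_mul, hsbh]; simp only [Matrix.mul_assoc]
      rw [this, hBY, Matrix.mul_add, Matrix.add_mul, rtr_add, hF, hG]
      congr 1
      · rw [← rtr_smul]; congr 1
        have : uᴴ * (sb * sb * Y) * v = uᴴ * (sb * sb) * (Y * v) := by
          simp only [Matrix.mul_assoc]
        rw [this, heig, Matrix.mul_smul, conjTranspose_mul, hsbh]
        simp only [Matrix.mul_assoc]
      · congr 1
        rw [conjTranspose_mul, hsah, hv, conjTranspose_mul, conjTranspose_conjTranspose]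
        simp only [Matrix.mul_assoc]
    have hCS : ∀ c : ℝ, 2 * c * (e i * Fq + Gq) ≤ c ^ 2 * Fq + Gq := by
      intro c
      have h0 := rtr_nonneg (posSemidef_conjTranspose_mul_self ((c:ℂ) • (sb * u) - W * (sa * v)))
      have e1 : ((c:ℂ) • (sb * u) - W * (sa * v))ᴴ * ((c:ℂ) • (sb * u) - W * (sa * v)) =
          ((c ^ 2 : ℝ) : ℂ) • ((sb * u)ᴴ * (sb * u)) - (c:ℂ) • ((sb * u)ᴴ * (W * (sa * v)))
          - (c:ℂ) • ((sb * u)ᴴ * (W * (sa * v)))ᴴ + (sa * v)ᴴ * (Wᴴ * W) * (sa * v) := by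
        rw [conjTranspose_sub, conjTranspose_smul, conjTranspose_mul W,
          conjTranspose_mul (sb * u)ᴴ, conjTranspose_mul W, conjTranspose_conjTranspose]
        simp only [RCLike.star_def, Complex.conj_ofReal, Matrix.sub_mul, Matrix.mul_sub,
          Matrix.smul_mul, Matrix.mul_smul, smul_smul, Matrix.mul_assoc]
        push_cast
        module
      rw [e1, hW, Matrix.mul_one, rtr_add, rtr_sub, rtr_sub, rtr_smul, rtr_smul, rtr_smul,
        rtr_conjTranspose, hS, ← hF, ← hG] at h0
      linarith
    have hF0 : 0 ≤ Fq := rtr_nonneg (posSemidef_conjTranspose_mul_self _)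
    have hG0 : 0 ≤ Gq := rtr_nonneg (posSemidef_conjTranspose_mul_self _)
    rcases eq_or_lt_of_le hF0 with h | h
    · have h1 := hCS 1
      rw [← h] at h1
      have hGz : Gq = 0 := by linarith
      have hz := rtr_frob_zero (hG ▸ hGz)
      have hYv : Y * v = 0 := by
        have : Y = (Matrix.of fun i j => W i j * ((Real.sqrt (b i) / (b i + a j) : ℝ) : ℂ)) * sa := by
          ext j l
          rw [hsa, mul_diagonal, hY, Matrix.of_apply, Matrix.of_apply]
          push_cast; ring
        rw [this, Matrix.mul_assoc, hz, Matrix.mul_zero]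
      rw [hYv] at heig
      have : (0 : Matrix Unit Unit ℂ) = (e i : ℂ) • 1 := by
        rw [← huu, ← Matrix.mul_smul, ← heig, Matrix.mul_zero]
      have := congrFun (congrFun this ()) ()
      simp at this
      have : e i = 0 := by exact_mod_cast this.symm
      linarith
    · have h1 := hCS (1/2)
      nlinarith
  rw [hO.2.2.2]
  exact sp_sub_psd hO.2.1 hbound

lemma smoothing {ρ σ U V : Matrix n n ℂ} {r s : n → ℝ} (hA : IsSp ρ U r) (hB : IsSp σ V s)
    (tr : rtr ρ = 1) {lam ε : ℝ} (hl : 0 < lam) (hε : 0 < ε) (hε1 : ε ≤ 1/4)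
    (hR : Rt U V r s lam ≤ ε ^ 2) :
    ∃ ρ' : Matrix n n ℂ, IsState ρ' ∧ ((lam : ℂ) • σ - ρ').PosSemidef ∧
      ∀ T : Matrix n n ℂ, T.PosSemidef → (1 - T).PosSemidef →
        rtr (T * ρ) - 2 * ε ≤ rtr (T * ρ') := by
  set W := Vᴴ * U with hW
  have hWW : Wᴴ * W = 1 := by
    rw [hW, conjTranspose_mul, conjTranspose_conjTranspose, Matrix.mul_assoc, ← Matrix.mul_assoc V,
      hB.2.1, Matrix.one_mul, hA.1]
  set b : n → ℝ := fun i => lam * s i with hb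
  have hb0 : ∀ i, 0 ≤ b i := fun i => mul_nonneg hl.le (hB.2.2.1 i)
  have hr0 := hA.2.2.1
  set Y : Matrix n n ℂ := Matrix.of fun i j =>
    W i j * ((Real.sqrt (b i) * Real.sqrt (r j) / (b i + r j) : ℝ) : ℂ) with hY
  have hYb := agm_bound hWW hr0 hb0 hY
  set sb : Matrix n n ℂ := diagonal fun j => (Real.sqrt (b j) : ℂ) with hsb
  have hsbh : sbᴴ = sb := by
    rw [hsb, diagonal_conjTranspose]; congr 1; ext j; simp
  set Z := V * (sb * Y) with hZ
  set G := U * diagonal (fun i => (Real.sqrt (r i) : ℂ)) with hG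
  have hGG : G * Gᴴ = ρ := by
    rw [hG, conjTranspose_mul, hA.2.2.2, diagonal_conjTranspose]
    simp only [Matrix.mul_assoc]
    rw [← Matrix.mul_assoc (diagonal _) (diagonal _), diagonal_mul_diagonal]
    congr 3
    ext i
    simp only [Pi.star_apply, RCLike.star_def, Complex.conj_ofReal]
    rw [← Complex.ofReal_mul, Real.mul_self_sqrt (hA.2.2.1 i)]
  have hsbsb : sb * sb = (lam : ℂ) • diagonal (fun i => (s i : ℂ)) := by
    rw [hsb, diagonal_mul_diagonal, ← diagonal_smul]
    congr 1; ext i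
    simp only [Pi.smul_apply, smul_eq_mul]
    rw [← Complex.ofReal_mul, Real.mul_self_sqrt (hb0 i), hb]; simp
  have hZle : (((lam/4 : ℝ) : ℂ) • σ - Z * Zᴴ).PosSemidef := by
    have e : ((lam/4 : ℝ) : ℂ) • σ - Z * Zᴴ =
        (V * sb) * (((1/4 : ℝ) : ℂ) • (1 : Matrix n n ℂ) - Y * Yᴴ) * (V * sb)ᴴ := by
      rw [Matrix.mul_sub, Matrix.sub_mul, Matrix.mul_smul, Matrix.smul_mul, Matrix.mul_one]
      congr 1
      · rw [conjTranspose_mul, hsbh, Matrix.mul_assoc V, ← Matrix.mul_assoc sb, hsbsb, hB.2.2.2]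
        simp only [Matrix.smul_mul, Matrix.mul_smul, smul_smul, Matrix.mul_assoc]
        congr 1; push_cast; ring
      · rw [hZ]; simp only [conjTranspose_mul, hsbh, Matrix.mul_assoc]
    rw [e]
    exact hYb.mul_mul_conjTranspose_same _
  set D := G - Z with hD
  -- norms of columns
  have frobV : ∀ M : Matrix n n ℂ, rtr (M * Mᴴ) = ∑ i, ∑ j, Complex.normSq ((Vᴴ * M) i j) := by
    intro M
    rw [← rtr_frob, conjTranspose_mul, conjTranspose_conjTranspose, rtr_mul_comm (Vᴴ * M)]
    simp only [Matrix.mul_assoc]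
    rw [← Matrix.mul_assoc V Vᴴ, hB.2.1, Matrix.one_mul, rtr_mul_comm]
  have hVZ : ∀ i j, (Vᴴ * Z) i j = W i j * ((Real.sqrt (r j) * (b i / (b i + r j)) : ℝ) : ℂ) := by
    intro i j
    rw [hZ, ← Matrix.mul_assoc, hB.1, Matrix.one_mul, hsb, diagonal_mul, hY, Matrix.of_apply]
    have e1 : Real.sqrt (r j) * (b i / (b i + r j)) =
        Real.sqrt (b i) * (Real.sqrt (b i) * Real.sqrt (r j) / (b i + r j)) := by
      have := Real.mul_self_sqrt (hb0 i)
      calc _ = Real.sqrt (r j) * ((Real.sqrt (b i) * Real.sqrt (b i)) / (b i + r j)) := by rw [this]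
        _ = _ := by ring
    rw [e1]; push_cast; ring
  have hVG : ∀ i j, (Vᴴ * G) i j = W i j * (Real.sqrt (r j) : ℂ) := by
    intro i j
    rw [hG, ← Matrix.mul_assoc, mul_diagonal]
  have hVD : ∀ i j, (Vᴴ * D) i j = W i j * ((Real.sqrt (r j) * (r j / (b i + r j)) : ℝ) : ℂ) := by
    intro i j
    rw [hD, Matrix.mul_sub, Matrix.sub_apply, hVZ, hVG, ← mul_sub, ← Complex.ofReal_sub]
    congr 2
    by_cases h : b i + r j = 0
    · have : r j = 0 := by linarith [hb0 i, hr0 j]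
      simp [this]
    · field_simp; ring
  have nsq : ∀ (z : ℂ) (x : ℝ), Complex.normSq (z * (x : ℂ)) = Complex.normSq z * x ^ 2 := by
    intro z x; rw [Complex.normSq_mul, Complex.normSq_ofReal]; ring
  have hDn : rtr (D * Dᴴ) ≤ ε ^ 2 := by
    refine le_trans ?_ hR
    rw [frobV]
    unfold Rt ov
    refine Finset.sum_le_sum fun i _ => Finset.sum_le_sum fun j _ => ?_
    rw [hVD, nsq, mul_pow, Real.sq_sqrt (hr0 j), ← mul_assoc, ← hW, add_comm (b i)]
    refine mul_le_mul_of_nonneg_left ?_ (mul_nonneg (Complex.normSq_nonneg _) (hr0 j))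
    have h1 : r j / (r j + lam * s i) ≤ 1 := div_le_one_of_le₀ (by linarith [hb0 i]) (by linarith [hb0 i, hr0 j])
    have h0 : 0 ≤ r j / (r j + lam * s i) := div_nonneg (hr0 j) (by linarith [hb0 i, hr0 j])
    show (r j / (r j + lam * s i)) ^ 2 ≤ _
    nlinarith
  have hw : ∑ i, ∑ j, Complex.normSq (W i j) * r j = 1 := by
    have := w_sum hA hB
    rw [tr, Fintype.sum_prod_type] at this
    exact this
  have hfr : ∀ i j, 0 ≤ b i / (b i + r j) ∧ b i / (b i + r j) ≤ 1 := fun i j =>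
    ⟨div_nonneg (hb0 i) (by linarith [hb0 i, hr0 j]),
      div_le_one_of_le₀ (by linarith [hr0 j]) (by linarith [hb0 i, hr0 j])⟩
  set t := rtr (Z * Zᴴ) with ht
  have htv : t = ∑ i, ∑ j, Complex.normSq (W i j) * r j * (b i / (b i + r j)) ^ 2 := by
    rw [ht, frobV]
    refine Finset.sum_congr rfl fun i _ => Finset.sum_congr rfl fun j _ => ?_
    rw [hVZ, nsq, mul_pow, Real.sq_sqrt (hr0 j), ← mul_assoc]
  have ht1 : t ≤ 1 := by
    rw [htv, ← hw]
    refine Finset.sum_le_sum fun i _ => Finset.sum_le_sum fun j _ => ?_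
    have := mul_nonneg (Complex.normSq_nonneg (W i j)) (hr0 j)
    have := hfr i j
    exact mul_le_of_le_one_right (by assumption) (pow_le_one₀ this.1 this.2)
  have ht2 : 1 / 2 ≤ t := by
    have h1 : 1 - 2 * ε ^ 2 ≤ t := by
      have h2 : 1 - 2 * Rt U V r s lam ≤ t := by
        rw [htv, ← hw]
        unfold Rt ov
        simp only [Finset.mul_sum]
        simp only [← Finset.sum_sub_distrib]
        refine Finset.sum_le_sum fun i _ => Finset.sum_le_sum fun j _ => ?_
        rw [← hW]
        have hnn := mul_nonneg (Complex.normSq_nonneg (W i j)) (hr0 j)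
        by_cases h : b i + r j = 0
        · have : r j = 0 := by linarith [hb0 i, hr0 j]
          simp [this]
        · have e1 : r j / (r j + lam * s i) = 1 - b i / (b i + r j) := by
            rw [show lam * s i = b i from rfl, add_comm (r j)]; field_simp; ring
          rw [e1]
          nlinarith [mul_nonneg hnn (sq_nonneg (1 - b i / (b i + r j)))]
      linarith
    nlinarith
  have htpos : 0 < t := by linarith
  refine ⟨((t⁻¹ : ℝ) : ℂ) • (Z * Zᴴ), ⟨psd_smul (posSemidef_self_mul_conjTranspose Z)
    (inv_nonneg.2 htpos.le), ?_⟩, ?_, ?_⟩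
  · rw [trace_smul, trace_eq_rtr (posSemidef_self_mul_conjTranspose Z).1, ← ht, smul_eq_mul,
      ← Complex.ofReal_mul, inv_mul_cancel₀ htpos.ne', Complex.ofReal_one]
  · have e : (lam : ℂ) • σ - ((t⁻¹ : ℝ) : ℂ) • (Z * Zᴴ) =
        ((t⁻¹ : ℝ) : ℂ) • (((lam/4 : ℝ) : ℂ) • σ - Z * Zᴴ) +
        ((lam - t⁻¹ * (lam / 4) : ℝ) : ℂ) • σ := by
      rw [smul_sub, smul_smul]; push_cast; module
    rw [e]
    refine (psd_smul hZle (inv_nonneg.2 htpos.le)).add (psd_smul hB.psd ?_)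
    have : t⁻¹ ≤ 2 := by
      rw [inv_le_comm₀ htpos (by norm_num)]; linarith
    nlinarith
  · intro T hT hT'
    rw [Matrix.mul_smul, rtr_smul]
    have hZT : 0 ≤ rtr (T * (Z * Zᴴ)) := rtr_mul_nonneg hT (posSemidef_self_mul_conjTranspose Z)
    have h1 : rtr (T * (Z * Zᴴ)) ≤ t⁻¹ * rtr (T * (Z * Zᴴ)) := by
      have : 1 ≤ t⁻¹ := (one_le_inv₀ htpos).2 ht1
      nlinarith
    refine le_trans ?_ h1
    have hub : ∀ M : Matrix n n ℂ, rtr (T * (M * Mᴴ)) ≤ rtr (M * Mᴴ) := by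
      intro M
      have := rtr_mul_nonneg hT' (posSemidef_self_mul_conjTranspose M)
      rw [Matrix.sub_mul, rtr_sub, Matrix.one_mul] at this
      linarith
    have hc := rtr_mul_nonneg hT (posSemidef_self_mul_conjTranspose (D - (ε : ℂ) • G))
    have e1 : (D - (ε : ℂ) • G) * (D - (ε : ℂ) • G)ᴴ =
        D * Dᴴ - (ε : ℂ) • (D * Gᴴ + G * Dᴴ) + ((ε^2 : ℝ) : ℂ) • (G * Gᴴ) := by
      rw [conjTranspose_sub, conjTranspose_smul]
      simp only [RCLike.star_def, Complex.conj_ofReal, Matrix.sub_mul, Matrix.mul_sub,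
          Matrix.smul_mul, Matrix.mul_smul, smul_smul]
      push_cast
      module
    have e2 : Z * Zᴴ = G * Gᴴ - (D * Gᴴ + G * Dᴴ) + D * Dᴴ := by
      have : Z = G - D := by rw [hD]; abel
      rw [this, conjTranspose_sub]; noncomm_ring
    rw [e1] at hc
    simp only [Matrix.mul_add, Matrix.mul_sub, Matrix.mul_smul, rtr_add, rtr_sub, rtr_smul] at hc
    rw [e2, hGG]
    simp only [Matrix.mul_add, Matrix.mul_sub, rtr_add, rtr_sub]
    have h3 := hub D
    have h4 := hub G
    have h5 : 0 ≤ rtr (T * (D * Dᴴ)) := rtr_mul_nonneg hT (posSemidef_self_mul_conjTranspose D)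
    rw [hGG, tr] at h4
    rw [hGG] at hc
    have : ε * (rtr (T * (D * Gᴴ)) + rtr (T * (G * Dᴴ))) ≤ ε * (2 * ε) := by nlinarith
    have := le_of_mul_le_mul_left this hε
    linarith

end P4

section P5
variable {n m k : Type} [Fintype n] [DecidableEq n] [Fintype m] [DecidableEq m] [Fintype k] [DecidableEq k]

/-- uniqueness of functional calculus -/
lemma fun_unique {U U' : Matrix n n ℂ} {r r' : n → ℝ} (hU : Uᴴ * U = 1) (hU2 : U * Uᴴ = 1)
    (hU' : U'ᴴ * U' = 1) (hU2' : U' * U'ᴴ = 1)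
    (h : U * diagonal (fun i => (r i : ℂ)) * Uᴴ = U' * diagonal (fun i => (r' i : ℂ)) * U'ᴴ)
    (f : ℝ → ℝ) :
    U * diagonal (fun i => (f (r i) : ℂ)) * Uᴴ = U' * diagonal (fun i => (f (r' i) : ℂ)) * U'ᴴ := by
  have h1 : (U'ᴴ * U) * diagonal (fun i => (r i : ℂ)) = diagonal (fun i => (r' i : ℂ)) * (U'ᴴ * U) := by
    have := congrArg (fun M => U'ᴴ * M * U) h
    simp only [Matrix.mul_assoc] at this
    rw [hU, Matrix.mul_one, ← Matrix.mul_assoc U'ᴴ U' , hU', Matrix.one_mul] at this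
    rw [Matrix.mul_assoc, this]
  have h2 : (U'ᴴ * U) * diagonal (fun i => (f (r i) : ℂ)) =
      diagonal (fun i => (f (r' i) : ℂ)) * (U'ᴴ * U) := by
    ext i j
    have := congrFun (congrFun h1 i) j
    rw [mul_diagonal, diagonal_mul] at this ⊢
    by_cases h0 : (U'ᴴ * U) i j = 0
    · simp [h0]
    · have : (r j : ℂ) = r' i := by
        rw [mul_comm] at this; exact mul_right_cancel₀ h0 this
      have : r j = r' i := by exact_mod_cast this
      rw [this, mul_comm]
  have := congrArg (fun M => U' * M * Uᴴ) h2
  simp only [Matrix.mul_assoc] at this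
  rw [hU2, Matrix.mul_one, ← Matrix.mul_assoc U' U'ᴴ , hU2', Matrix.one_mul] at this
  rw [Matrix.mul_assoc, this, Matrix.mul_assoc]

/-- power in spectral data -/
def pw (U : Matrix n n ℂ) (r : n → ℝ) (p : ℝ) : Matrix n n ℂ :=
  U * diagonal (fun i => ((r i ^ p : ℝ) : ℂ)) * Uᴴ

lemma pw_sp {A U : Matrix n n ℂ} {r : n → ℝ} (h : IsSp A U r) (p : ℝ) :
    IsSp (pw U r p) U (fun i => r i ^ p) :=
  ⟨h.1, h.2.1, fun i => Real.rpow_nonneg (h.2.2.1 i) _, rfl⟩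

section
open scoped MatrixOrder Matrix.Norms.L2Operator
lemma pw_eq_rpow {A U : Matrix n n ℂ} {r : n → ℝ} (h : IsSp A U r) (p : ℝ) (hp : 0 < p) :
    pw U r p = A ^ p := by
  have hA : A.PosSemidef := h.psd
  have hA' : 0 ≤ A := hA.nonneg
  rw [CFC.rpow_eq_cfc_real (by exact hA'), hA.1.cfc_eq]
  unfold pw Matrix.IsHermitian.cfc
  have := herm_unitary hA.1
  rw [Unitary.conjStarAlgAut_apply]
  exact fun_unique h.1 h.2.1 this.1 this.2 (h.2.2.2.symm.trans (herm_decomp hA.1)) (fun x => x ^ p)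

lemma pw_mono {A U C Q : Matrix n n ℂ} {r c : n → ℝ} (hA : IsSp A U r) (hC : IsSp C Q c)
    (h : (C - A).PosSemidef) {p : ℝ} (h0 : 0 < p) (h1 : p ≤ 1) :
    (pw Q c p - pw U r p).PosSemidef := by
  rw [pw_eq_rpow hA p h0, pw_eq_rpow hC p h0]
  have : A ≤ C := h
  exact CFC.rpow_le_rpow ⟨h0.le, h1⟩ this
end

lemma rtr_pw_mul {A B U V : Matrix n n ℂ} {r s : n → ℝ} (hA : IsSp A U r) (hB : IsSp B V s) :
    rtr (B * A) = ∑ b, ∑ a, ov U V b a * r a * s b := by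
  set X := U * diagonal (fun i => (Real.sqrt (r i) : ℂ)) with hX
  have hXX : X * Xᴴ = A := by
    rw [hX, conjTranspose_mul, hA.2.2.2, diagonal_conjTranspose]
    simp only [Matrix.mul_assoc]
    rw [← Matrix.mul_assoc (diagonal _) (diagonal _), diagonal_mul_diagonal]
    congr 3
    ext i
    simp only [Pi.star_apply, RCLike.star_def, Complex.conj_ofReal]
    rw [← Complex.ofReal_mul, Real.mul_self_sqrt (hA.2.2.1 i)]
  rw [← hXX, tr2 hB (U := 1) (by simp)]
  refine Finset.sum_congr rfl fun b _ => Finset.sum_congr rfl fun a _ => ?_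
  rw [Matrix.mul_one, hX, ← Matrix.mul_assoc, mul_diagonal, Complex.normSq_mul,
    Complex.normSq_ofReal, Real.mul_self_sqrt (hA.2.2.1 a)]
  rfl

lemma pw_mul {A U : Matrix n n ℂ} {r : n → ℝ} (h : IsSp A U r) {p q : ℝ} (hp : 0 < p) (hq : 0 < q)
    (hpq : p + q = 1) : pw U r p * pw U r q = A := by
  unfold pw
  rw [h.2.2.2]
  simp only [Matrix.mul_assoc]
  rw [← Matrix.mul_assoc Uᴴ U, h.1, Matrix.one_mul, ← Matrix.mul_assoc (diagonal _) (diagonal _),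
    diagonal_mul_diagonal]
  congr 3
  ext i
  rw [← Complex.ofReal_mul, ← Real.rpow_add' (h.2.2.1 i) (by rw [hpq]; norm_num), hpq, Real.rpow_one]

lemma audenaert {ρ σ U V : Matrix n n ℂ} {r s : n → ℝ} (hA : IsSp ρ U r) (hB : IsSp σ V s)
    {lam γ : ℝ} (hl : 0 < lam) (h0 : 0 < γ) (h1 : γ < 1) :
    ∃ P : Matrix n n ℂ, P.PosSemidef ∧ (1 - P).PosSemidef ∧
      rtr ((1 - P) * ρ) + lam * rtr (P * σ) ≤ lam ^ γ * Qm U V r s γ := by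
  set B := (lam : ℂ) • σ with hBdef
  have hB' : IsSp B V (fun i => lam * s i) := by
    refine ⟨hB.1, hB.2.1, fun i => mul_nonneg hl.le (hB.2.2.1 i), ?_⟩
    rw [hBdef, hB.2.2.2, ← Matrix.smul_mul, ← Matrix.mul_smul, ← diagonal_smul]
    congr 3
    ext i; simp
  have hH : (ρ - B).IsHermitian := hA.psd.1.sub hB'.psd.1
  set O := (hH.eigenvectorUnitary : Matrix n n ℂ) with hO
  set h := hH.eigenvalues with hh
  obtain ⟨u1, u2⟩ := herm_unitary hH
  rw [← hO] at u1 u2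
  have hdec : ρ - B = O * diagonal (fun i => (h i : ℂ)) * Oᴴ := herm_decomp hH
  set P := O * diagonal (fun i => (((if 0 < h i then 1 else 0) : ℝ) : ℂ)) * Oᴴ with hP
  set Δ := O * diagonal (fun i => ((max (h i) 0 : ℝ) : ℂ)) * Oᴴ with hΔ
  have hPp : P.PosSemidef := psd_conj_diag O (fun i => by split_ifs <;> norm_num)
  have hP1 : (1 - P).PosSemidef := by
    have := sp_sub_psd (e := fun i => if 0 < h i then (1:ℝ) else 0) u2 (c := 1)
      (fun i => by split_ifs <;> norm_num)
    simpa using this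
  have hΔp : Δ.PosSemidef := psd_conj_diag O (fun i => le_max_right _ _)
  have hΔ2 : (B + Δ - ρ).PosSemidef := by
    have : B + Δ - ρ = O * diagonal (fun i => ((max (h i) 0 - h i : ℝ) : ℂ)) * Oᴴ := by
      have e : diagonal (fun i => ((max (h i) 0 - h i : ℝ) : ℂ)) =
          diagonal (fun i => ((max (h i) 0 : ℝ) : ℂ)) - diagonal (fun i => (h i : ℂ)) := by
        rw [diagonal_sub]; simp
      rw [e, Matrix.mul_sub, Matrix.sub_mul, ← hdec, ← hΔ]; abel
    rw [this]
    exact psd_conj_diag O (fun i => sub_nonneg.2 (le_max_left _ _))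
  have hPH : P * (ρ - B) = Δ := by
    rw [hdec, hP, hΔ]
    simp only [Matrix.mul_assoc]
    rw [← Matrix.mul_assoc Oᴴ O, u1, Matrix.one_mul, ← Matrix.mul_assoc (diagonal _) (diagonal _),
      diagonal_mul_diagonal]
    congr 3
    ext i
    rw [← Complex.ofReal_mul]
    congr 1
    split_ifs with hi
    · rw [one_mul, max_eq_left hi.le]
    · rw [zero_mul, max_eq_right (not_lt.1 hi)]
  refine ⟨P, hPp, hP1, ?_⟩
  obtain ⟨Q, c, hC⟩ := exists_isSp (hB'.psd.add hΔp)
  have g1 : 0 < 1 - γ := by linarith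
  have g2 : 1 - γ ≤ 1 := by linarith
  have m1 := pw_mono hA hC hΔ2 h0 h1.le
  have m2 := pw_mono hA hC hΔ2 g1 g2
  have hBC : (B + Δ - B).PosSemidef := by simpa using hΔp
  have m3 := pw_mono hB' hC hBC h0 h1.le
  have m4 := pw_mono hB' hC hBC g1 g2
  set A1 := pw U r (1 - γ) with hA1
  set Ag := pw U r γ
  set Bg := pw V (fun i => lam * s i) γ
  set B1 := pw V (fun i => lam * s i) (1 - γ)
  set Cg := pw Q c γ
  set C1 := pw Q c (1 - γ)
  have a1 : rtr (A1 * Ag) ≤ rtr (A1 * Cg) := rtr_mul_le (pw_sp hA _).psd m1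
  have a2 : rtr (A1 * (Cg - Bg)) ≤ rtr (C1 * (Cg - Bg)) := rtr_mul_le' m3 m2
  have a3 : rtr (B1 * Bg) ≤ rtr (C1 * Bg) := rtr_mul_le' (pw_sp hB' _).psd m4
  rw [pw_mul hA g1 h0 (by ring)] at a1
  rw [pw_mul hB' g1 h0 (by ring)] at a3
  rw [Matrix.mul_sub, Matrix.mul_sub, rtr_sub, rtr_sub, pw_mul hC g1 h0 (by ring), rtr_add] at a2
  have main : rtr ρ - rtr Δ ≤ rtr (A1 * Bg) := by linarith
  have l1 : rtr ((1 - P) * ρ) + lam * rtr (P * σ) = rtr ρ - rtr Δ := by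
    rw [← hPH, Matrix.sub_mul, Matrix.one_mul, Matrix.mul_sub, rtr_sub, rtr_sub, hBdef,
      Matrix.mul_smul, rtr_smul]; ring
  rw [l1]
  refine main.trans (le_of_eq ?_)
  rw [rtr_mul_comm, rtr_pw_mul (pw_sp hA _) (pw_sp hB' _)]
  unfold Qm
  rw [Fintype.sum_prod_type, Finset.mul_sum]
  refine Finset.sum_congr rfl fun b _ => ?_
  rw [Finset.mul_sum]
  refine Finset.sum_congr rfl fun a _ => ?_
  rcases eq_or_lt_of_le (hA.2.2.1 a) with hra | hra
  · simp [← hra, Real.zero_rpow g1.ne']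
  · dsimp only
    rw [inv_div, Real.mul_rpow hl.le (hB.2.2.1 b), Real.div_rpow (hB.2.2.1 b) hra.le,
      Real.rpow_sub hra, Real.rpow_one]
    ring

end P5

section P6
variable {n n₁ n₂ m k A R B : Type} [Fintype n] [DecidableEq n] [Fintype m] [DecidableEq m]
  [Fintype k] [DecidableEq k] [Fintype n₁] [DecidableEq n₁] [Fintype n₂] [DecidableEq n₂]
  [Fintype A] [DecidableEq A] [Fintype R] [DecidableEq R] [Fintype B] [DecidableEq B]

/-- reindexed Kronecker product -/
def kr (e : n ≃ n₁ × n₂) (M : Matrix n₁ n₁ ℂ) (N : Matrix n₂ n₂ ℂ) : Matrix n n ℂ :=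
  (M ⊗ₖ N).submatrix e e

lemma kr_mul (e : n ≃ n₁ × n₂) (M M' : Matrix n₁ n₁ ℂ) (N N' : Matrix n₂ n₂ ℂ) :
    kr e M N * kr e M' N' = kr e (M * M') (N * N') := by
  unfold kr
  rw [submatrix_mul_equiv, mul_kronecker_mul]

lemma kr_conj (e : n ≃ n₁ × n₂) (M : Matrix n₁ n₁ ℂ) (N : Matrix n₂ n₂ ℂ) :
    (kr e M N)ᴴ = kr e Mᴴ Nᴴ := by
  unfold kr
  rw [conjTranspose_submatrix, conjTranspose_kronecker]

lemma kr_one (e : n ≃ n₁ × n₂) : kr e (1 : Matrix n₁ n₁ ℂ) (1 : Matrix n₂ n₂ ℂ) = 1 := by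
  unfold kr; rw [one_kronecker_one, submatrix_one_equiv]

lemma kr_sp (e : n ≃ n₁ × n₂) {A₁ U₁ : Matrix n₁ n₁ ℂ} {r₁ : n₁ → ℝ} (h₁ : IsSp A₁ U₁ r₁)
    {A₂ U₂ : Matrix n₂ n₂ ℂ} {r₂ : n₂ → ℝ} (h₂ : IsSp A₂ U₂ r₂) :
    IsSp (kr e A₁ A₂) (kr e U₁ U₂) (fun i => r₁ (e i).1 * r₂ (e i).2) := by
  refine ⟨?_, ?_, fun i => mul_nonneg (h₁.2.2.1 _) (h₂.2.2.1 _), ?_⟩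
  · rw [kr_conj, kr_mul, h₁.1, h₂.1, kr_one]
  · rw [kr_conj, kr_mul, h₁.2.1, h₂.2.1, kr_one]
  · have : diagonal (fun i => ((r₁ (e i).1 * r₂ (e i).2 : ℝ) : ℂ)) =
        kr e (diagonal fun i => (r₁ i : ℂ)) (diagonal fun i => (r₂ i : ℂ)) := by
      unfold kr
      rw [diagonal_kronecker_diagonal, submatrix_diagonal_equiv]
      congr 1; ext i; simp
    rw [this, kr_conj, kr_mul, kr_mul, ← h₁.2.2.2, ← h₂.2.2.2]

lemma kr_ov (e : n ≃ n₁ × n₂) (U₁ V₁ : Matrix n₁ n₁ ℂ) (U₂ V₂ : Matrix n₂ n₂ ℂ) (b a : n) :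
    ov (kr e U₁ U₂) (kr e V₁ V₂) b a = ov U₁ V₁ (e b).1 (e a).1 * ov U₂ V₂ (e b).2 (e a).2 := by
  unfold ov
  rw [kr_conj, kr_mul, ← Complex.normSq_mul]
  rfl

lemma kr_sum (e : n ≃ n₁ × n₂) (f : n₁ × n₁ → ℝ) (g : n₂ × n₂ → ℝ) :
    ∑ i : n × n, f ((e i.1).1, (e i.2).1) * g ((e i.1).2, (e i.2).2) = (∑ i, f i) * ∑ i, g i := by
  rw [Finset.sum_mul_sum, ← Finset.sum_product', Finset.univ_product_univ]
  exact Fintype.sum_equiv ((e.prodCongr e).trans (Equiv.prodProdProdComm _ _ _ _)) _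
    (fun p : (n₁ × n₁) × (n₂ × n₂) => f p.1 * g p.2) (fun i => rfl)

lemma kr_Qp (e : n ≃ n₁ × n₂) {U₁ V₁ : Matrix n₁ n₁ ℂ} {U₂ V₂ : Matrix n₂ n₂ ℂ}
    {r₁ s₁ : n₁ → ℝ} {r₂ s₂ : n₂ → ℝ} (hr₁ : ∀ i, 0 ≤ r₁ i) (hs₁ : ∀ i, 0 ≤ s₁ i)
    (hr₂ : ∀ i, 0 ≤ r₂ i) (hs₂ : ∀ i, 0 ≤ s₂ i) (γ : ℝ) :
    Qp (kr e U₁ U₂) (kr e V₁ V₂) (fun i => r₁ (e i).1 * r₂ (e i).2)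
      (fun i => s₁ (e i).1 * s₂ (e i).2) γ = Qp U₁ V₁ r₁ s₁ γ * Qp U₂ V₂ r₂ s₂ γ := by
  unfold Qp
  rw [← kr_sum e]
  refine Finset.sum_congr rfl fun i _ => ?_
  dsimp only
  rw [kr_ov, mul_div_mul_comm, Real.mul_rpow (div_nonneg (hr₁ _) (hs₁ _)) (div_nonneg (hr₂ _) (hs₂ _))]
  ring

lemma kr_Qm (e : n ≃ n₁ × n₂) {U₁ V₁ : Matrix n₁ n₁ ℂ} {U₂ V₂ : Matrix n₂ n₂ ℂ}
    {r₁ s₁ : n₁ → ℝ} {r₂ s₂ : n₂ → ℝ} (hr₁ : ∀ i, 0 ≤ r₁ i) (hs₁ : ∀ i, 0 ≤ s₁ i)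
    (hr₂ : ∀ i, 0 ≤ r₂ i) (hs₂ : ∀ i, 0 ≤ s₂ i) (γ : ℝ) :
    Qm (kr e U₁ U₂) (kr e V₁ V₂) (fun i => r₁ (e i).1 * r₂ (e i).2)
      (fun i => s₁ (e i).1 * s₂ (e i).2) γ = Qm U₁ V₁ r₁ s₁ γ * Qm U₂ V₂ r₂ s₂ γ := by
  unfold Qm
  rw [← kr_sum e]
  refine Finset.sum_congr rfl fun i _ => ?_
  dsimp only
  rw [kr_ov, mul_div_mul_comm, mul_inv, Real.mul_rpow (inv_nonneg.2 (div_nonneg (hr₁ _) (hs₁ _)))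
    (inv_nonneg.2 (div_nonneg (hr₂ _) (hs₂ _)))]
  ring

lemma kr_dom (e : n ≃ n₁ × n₂) {U₁ V₁ : Matrix n₁ n₁ ℂ} {U₂ V₂ : Matrix n₂ n₂ ℂ}
    {r₁ s₁ : n₁ → ℝ} {r₂ s₂ : n₂ → ℝ} (h₁ : Dom U₁ V₁ r₁ s₁) (h₂ : Dom U₂ V₂ r₂ s₂) :
    Dom (kr e U₁ U₂) (kr e V₁ V₂) (fun i => r₁ (e i).1 * r₂ (e i).2)
      (fun i => s₁ (e i).1 * s₂ (e i).2) := by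
  intro b a h
  rw [kr_ov]
  rcases mul_eq_zero.1 h with h | h
  · have := h₁ _ (e a).1 h
    linear_combination (ov U₂ V₂ (e b).2 (e a).2 * r₂ (e a).2) * this
  · have := h₂ _ (e a).2 h
    linear_combination (ov U₁ V₁ (e b).1 (e a).1 * r₁ (e a).1) * this

lemma kr_trace (e : n ≃ n₁ × n₂) (M : Matrix n₁ n₁ ℂ) (N : Matrix n₂ n₂ ℂ) :
    (kr e M N).trace = M.trace * N.trace := by
  unfold kr
  rw [← trace_kronecker]
  simp only [Matrix.trace]
  exact Fintype.sum_equiv e _ _ (fun i => rfl)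

/-- the reshuffling -/
def esh (A R : Type) (m : ℕ) :
    tpow A (m+1) × tpow R (m+1) ≃ (tpow A m × tpow R m) × (A × R) :=
  Equiv.prodProdProdComm (tpow A m) A (tpow R m) R

/-- power of a bipartite matrix -/
def pairPow (M : Matrix (A × R) (A × R) ℂ) :
    ∀ m : ℕ, Matrix (tpow A m × tpow R m) (tpow A m × tpow R m) ℂ
  | 0 => 1
  | m + 1 => kr (esh A R m) (pairPow M m) M

def vecPow (r : A × R → ℝ) : ∀ m : ℕ, tpow A m × tpow R m → ℝ
  | 0 => fun _ => 1
  | m + 1 => fun i => vecPow r m (esh A R m i).1 * r (esh A R m i).2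

lemma pp_sp {M U : Matrix (A × R) (A × R) ℂ} {r : A × R → ℝ} (h : IsSp M U r) (m : ℕ) :
    IsSp (pairPow M m) (pairPow U m) (vecPow r m) := by
  induction m with
  | zero =>
    refine ⟨?_, ?_, fun i => zero_le_one, ?_⟩
    · simp [pairPow]
    · simp [pairPow]
    · simp [pairPow, vecPow]
  | succ m ih => exact kr_sp (esh A R m) ih h

lemma pp_dom {U V : Matrix (A × R) (A × R) ℂ} {r s : A × R → ℝ} (h : Dom U V r s) (m : ℕ) :
    Dom (pairPow U m) (pairPow V m) (vecPow r m) (vecPow s m) := by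
  induction m with
  | zero => intro b a h; simp [vecPow] at h
  | succ m ih => exact kr_dom (esh A R m) ih h

instance (ι : Type) : Unique (tpow ι 0) := inferInstanceAs (Unique PUnit)

lemma ov_zero (U V : Matrix (A × R) (A × R) ℂ) (i : (tpow A 0 × tpow R 0) × (tpow A 0 × tpow R 0)) :
    ov (pairPow U 0) (pairPow V 0) i.1 i.2 = 1 := by
  have : i.1 = i.2 := Subsingleton.elim _ _
  simp [ov, pairPow, this]

lemma pp_Qp {U V : Matrix (A × R) (A × R) ℂ} {r s : A × R → ℝ} (hr : ∀ i, 0 ≤ r i)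
    (hs : ∀ i, 0 ≤ s i) (m : ℕ) (γ : ℝ) :
    Qp (pairPow U m) (pairPow V m) (vecPow r m) (vecPow s m) γ = Qp U V r s γ ^ m := by
  have nn : ∀ (r : A × R → ℝ), (∀ i, 0 ≤ r i) → ∀ m i, 0 ≤ vecPow r m i := by
    intro r hr m
    induction m with
    | zero => intro i; exact zero_le_one
    | succ m ih => intro i; exact mul_nonneg (ih _) (hr _)
  induction m with
  | zero =>
    unfold Qp
    simp only [ov_zero, vecPow]
    simp [Finset.card_univ, Fintype.card_prod]
  | succ m ih =>
    rw [pow_succ, ← ih]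
    exact kr_Qp (esh A R m) (nn r hr m) (nn s hs m) hr hs γ

lemma pp_Qm {U V : Matrix (A × R) (A × R) ℂ} {r s : A × R → ℝ} (hr : ∀ i, 0 ≤ r i)
    (hs : ∀ i, 0 ≤ s i) (m : ℕ) (γ : ℝ) :
    Qm (pairPow U m) (pairPow V m) (vecPow r m) (vecPow s m) γ = Qm U V r s γ ^ m := by
  have nn : ∀ (r : A × R → ℝ), (∀ i, 0 ≤ r i) → ∀ m i, 0 ≤ vecPow r m i := by
    intro r hr m
    induction m with
    | zero => intro i; exact zero_le_one
    | succ m ih => intro i; exact mul_nonneg (ih _) (hr _)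
  induction m with
  | zero =>
    unfold Qm
    simp only [ov_zero, vecPow]
    simp [Finset.card_univ, Fintype.card_prod]
  | succ m ih =>
    rw [pow_succ, ← ih]
    exact kr_Qm (esh A R m) (nn r hr m) (nn s hs m) hr hs γ

lemma pp_trace {M : Matrix (A × R) (A × R) ℂ} (h : M.trace = 1) (m : ℕ) :
    (pairPow M m).trace = 1 := by
  induction m with
  | zero => simp [pairPow]
  | succ m ih =>
    have := kr_trace (esh A R m) (pairPow M m) M
    rw [ih, h, one_mul] at this
    exact this

lemma tensor_kron {n₁ m₁ n₂ m₂ : Type}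
    (E₁ : Matrix n₁ n₁ ℂ →ₗ[ℂ] Matrix m₁ m₁ ℂ) (E₂ : Matrix n₂ n₂ ℂ →ₗ[ℂ] Matrix m₂ m₂ ℂ)
    (P : Matrix n₁ n₁ ℂ) (Q : Matrix n₂ n₂ ℂ) :
    tensorChannel E₁ E₂ (P ⊗ₖ Q) = E₁ P ⊗ₖ E₂ Q := by
  ext ⟨x, b⟩ ⟨x', b'⟩
  show E₁ (Matrix.of fun u u' => E₂ (Matrix.of fun a a' => P u u' * Q a a') b b') x x' =
    E₁ P x x' * E₂ Q b b'
  have h1 : ∀ u u', (Matrix.of fun a a' => P u u' * Q a a') = P u u' • Q := fun u u' => rfl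
  simp only [h1, map_smul, Matrix.smul_apply, smul_eq_mul]
  have h2 : (Matrix.of fun u u' => P u u' * E₂ Q b b') = E₂ Q b b' • P := by
    ext u u'; simp [mul_comm]
  rw [h2, map_smul, Matrix.smul_apply, smul_eq_mul, mul_comm]

lemma pp_channel (E : Matrix A A ℂ →ₗ[ℂ] Matrix B B ℂ) (M : Matrix (A × R) (A × R) ℂ) (m : ℕ) :
    blockApplyRight (tpowChannel E m) (pairPow M m) = pairPow (blockApplyRight E M) m := by
  induction m with
  | zero =>
    ext p q
    have : p = q := by
      apply Prod.ext <;> exact Subsingleton.elim (α := PUnit) _ _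
    subst this
    rfl
  | succ m ih =>
    ext ⟨⟨x, b⟩, ⟨y, c⟩⟩ ⟨⟨x', b'⟩, ⟨y', c'⟩⟩
    have h := congrFun (congrFun (tensor_kron (tpowChannel E m) E
      (Matrix.of fun u u' => pairPow M m (u, y) (u', y')) (Matrix.of fun a a' => M (a, c) (a', c')))
      (x, b)) (x', b')
    have h2 := congrFun (congrFun ih (x, y)) (x', y')
    refine h.trans ?_
    show tpowChannel E m (Matrix.of fun u u' => pairPow M m (u, y) (u', y')) x x' *
      E (Matrix.of fun a a' => M (a, c) (a', c')) b b' =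
      pairPow (blockApplyRight E M) m (x, y) (x', y') * _
    rw [← h2]; rfl

/-- Kraus form of a channel -/
def IsKr {X : Type} [Fintype X] (K : X → Matrix m n ℂ) (Φ : Matrix n n ℂ →ₗ[ℂ] Matrix m m ℂ) : Prop :=
  (∀ M, Φ M = ∑ x, K x * M * (K x)ᴴ) ∧ ∑ x, (K x)ᴴ * K x = 1

lemma kr_right_one {X : Type} [Fintype X] {K : X → Matrix m n ℂ}
    (h : ∑ x, (K x)ᴴ * K x = 1) : ∑ x, (K x ⊗ₖ (1 : Matrix k k ℂ))ᴴ * (K x ⊗ₖ (1 : Matrix k k ℂ)) = 1 := by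
  simp only [conjTranspose_kronecker, conjTranspose_one, ← mul_kronecker_mul, Matrix.mul_one]
  rw [← one_kronecker_one, ← h]
  ext ⟨i, j⟩ ⟨i', j'⟩
  simp only [Matrix.sum_apply, kronecker_apply, Finset.sum_mul]

lemma bar_kraus {X : Type} [Fintype X] {K : X → Matrix m n ℂ} {c : X → ℂ}
    {Φ : Matrix n n ℂ →ₗ[ℂ] Matrix m m ℂ}
    (h : ∀ M, Φ M = ∑ x, c x • (K x * M * (K x)ᴴ)) (M : Matrix (n × k) (n × k) ℂ) :
    blockApplyRight Φ M = ∑ x, c x • ((K x ⊗ₖ (1 : Matrix k k ℂ)) * M * (K x ⊗ₖ (1 : Matrix k k ℂ))ᴴ) := by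
  ext ⟨b, i⟩ ⟨b', i'⟩
  simp only [blockApplyRight, Matrix.of_apply, h, Matrix.sum_apply, Matrix.smul_apply]
  refine Finset.sum_congr rfl fun x _ => ?_
  congr 1
  simp only [Matrix.mul_apply, Fintype.sum_prod_type, kronecker_apply, conjTranspose_apply,
    Matrix.of_apply, one_apply]
  simp [apply_ite (starRingEnd ℂ)]

lemma bar_kraus1 {X : Type} [Fintype X] {K : X → Matrix m n ℂ}
    {Φ : Matrix n n ℂ →ₗ[ℂ] Matrix m m ℂ} (h : IsKr K Φ) (M : Matrix (n × k) (n × k) ℂ) :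
    blockApplyRight Φ M = ∑ x, (K x ⊗ₖ (1 : Matrix k k ℂ)) * M * (K x ⊗ₖ (1 : Matrix k k ℂ))ᴴ := by
  have := bar_kraus (k := k) (c := fun _ => 1) (Φ := Φ) (K := K) (by simpa using h.1) M
  simpa using this

lemma bal_kraus {X : Type} [Fintype X] {K : X → Matrix m n ℂ}
    {Φ : Matrix n n ℂ →ₗ[ℂ] Matrix m m ℂ} (h : IsKr K Φ) (M : Matrix (k × n) (k × n) ℂ) :
    blockApply Φ M = ∑ x, ((1 : Matrix k k ℂ) ⊗ₖ K x) * M * ((1 : Matrix k k ℂ) ⊗ₖ K x)ᴴ := by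
  ext ⟨i, b⟩ ⟨i', b'⟩
  simp only [blockApply, Matrix.of_apply, h.1, Matrix.sum_apply]
  refine Finset.sum_congr rfl fun x _ => ?_
  simp only [Matrix.mul_apply, Fintype.sum_prod_type, kronecker_apply, conjTranspose_apply,
    Matrix.of_apply, one_apply]
  simp [apply_ite (starRingEnd ℂ)]

lemma tensor_kr {m₁ m₂ : Type} [Fintype m₁] [DecidableEq m₁] [Fintype m₂] [DecidableEq m₂]
    {X₁ X₂ : Type} [Fintype X₁] [Fintype X₂] {K₁ : X₁ → Matrix m₁ n₁ ℂ} {K₂ : X₂ → Matrix m₂ n₂ ℂ}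
    {E₁ : Matrix n₁ n₁ ℂ →ₗ[ℂ] Matrix m₁ m₁ ℂ} {E₂ : Matrix n₂ n₂ ℂ →ₗ[ℂ] Matrix m₂ m₂ ℂ}
    (h₁ : IsKr K₁ E₁) (h₂ : IsKr K₂ E₂) :
    IsKr (fun x : X₁ × X₂ => K₁ x.1 ⊗ₖ K₂ x.2) (tensorChannel E₁ E₂) := by
  constructor
  · intro M
    show blockApplyRight E₁ (blockApply E₂ M) = _
    rw [bar_kraus1 h₁, bal_kraus h₂, Fintype.sum_prod_type]
    refine Finset.sum_congr rfl fun x _ => ?_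
    rw [Matrix.mul_sum, Matrix.sum_mul]
    refine Finset.sum_congr rfl fun y _ => ?_
    have : K₁ x ⊗ₖ K₂ y = (K₁ x ⊗ₖ (1 : Matrix m₂ m₂ ℂ)) * ((1 : Matrix n₁ n₁ ℂ) ⊗ₖ K₂ y) := by
      rw [← mul_kronecker_mul, Matrix.mul_one, Matrix.one_mul]
    dsimp only
    rw [this, conjTranspose_mul]
    simp only [Matrix.mul_assoc]
  · simp only [conjTranspose_kronecker, ← mul_kronecker_mul]
    rw [← one_kronecker_one, ← h₁.2, ← h₂.2]
    ext ⟨i, j⟩ ⟨i', j'⟩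
    simp only [Matrix.sum_apply, kronecker_apply, Finset.sum_mul_sum, Fintype.sum_prod_type]

lemma tpow_kr {X : Type} [Fintype X] {K : X → Matrix B A ℂ}
    {E : Matrix A A ℂ →ₗ[ℂ] Matrix B B ℂ} (h : IsKr K E) (m : ℕ) :
    ∃ (Y : Type) (_ : Fintype Y) (L : Y → Matrix (tpow B m) (tpow A m) ℂ), IsKr L (tpowChannel E m) := by
  induction m with
  | zero =>
    refine ⟨Unit, inferInstance, fun _ => (Matrix.of fun _ _ => 1), ?_, ?_⟩
    · intro M
      ext x y
      have hx : x = (PUnit.unit : PUnit) := rfl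
      show M _ _ = _
      rw [Fintype.sum_unique, Matrix.mul_apply, Fintype.sum_unique, Matrix.mul_apply,
        Fintype.sum_unique]
      simp
      rfl
    · ext x y
      have hx : x = y := Subsingleton.elim (α := PUnit) _ _
      subst hx
      rw [Fintype.sum_unique, Matrix.mul_apply]
      simp only [one_apply_eq]
      rw [Fintype.sum_unique]
      simp
  | succ m ih =>
    obtain ⟨Y, _, L, hL⟩ := ih
    have := tensor_kr hL h
    exact ⟨Y × X, inferInstance, fun x : Y × X => L x.1 ⊗ₖ K x.2, this⟩

end P6

section P7
variable {N R : Type} [Fintype N] [DecidableEq N] [Fintype R] [DecidableEq R]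

lemma schmidt {ρ : Matrix (N × R) (N × R) ℂ} (hρ : IsState ρ) :
    ∃ (ν : Matrix (N × N) (N × N) ℂ) (L : N × R → Matrix R N ℂ), IsState ν ∧
      ρ = ∑ k, ((1 : Matrix N N ℂ) ⊗ₖ L k) * ν * ((1 : Matrix N N ℂ) ⊗ₖ L k)ᴴ ∧
      (1 - ∑ k, (L k)ᴴ * L k).PosSemidef := by
  obtain ⟨G, hG⟩ := psd_gram hρ.1
  set M : N × R → Matrix N R ℂ := fun k => Matrix.of fun a c => G (a, c) k with hM
  have hSpsd : (∑ k, M k * (M k)ᴴ).PosSemidef :=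
    Matrix.posSemidef_sum _ fun k _ => posSemidef_self_mul_conjTranspose _
  obtain ⟨U, s, hS⟩ := exists_isSp hSpsd
  obtain ⟨h1, h2, h3, h4⟩ := hS
  set C : Matrix N N ℂ := U * diagonal (fun i => (Real.sqrt (s i) : ℂ)) with hC
  set H : N × R → Matrix N R ℂ := fun k => Uᴴ * M k with hH
  set W : N × R → Matrix N R ℂ := fun k => diagonal (fun i => ((Real.sqrt (s i))⁻¹ : ℂ)) * H k with hW
  have hHs : ∑ k, H k * (H k)ᴴ = diagonal (fun i => (s i : ℂ)) := by
    have e1 : ∑ k, H k * (H k)ᴴ = Uᴴ * (∑ k, M k * (M k)ᴴ) * U := by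
      rw [Matrix.mul_sum, Matrix.sum_mul]
      refine Finset.sum_congr rfl fun k _ => ?_
      simp only [hH, conjTranspose_mul, conjTranspose_conjTranspose, Matrix.mul_assoc]
    rw [e1, h4]
    calc Uᴴ * (U * diagonal (fun i => (s i : ℂ)) * Uᴴ) * U
        = (Uᴴ * U) * diagonal (fun i => (s i : ℂ)) * (Uᴴ * U) := by simp only [Matrix.mul_assoc]
      _ = _ := by rw [h1, Matrix.one_mul, Matrix.mul_one]
  have hz : ∀ j, s j = 0 → ∀ k c, H k j c = 0 := by
    intro j hj
    have e := congrFun (congrFun hHs j) j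
    simp only [Matrix.sum_apply, Matrix.mul_apply, conjTranspose_apply, diagonal_apply_eq, hj] at e
    have e2 : ∑ k, ∑ c, Complex.normSq (H k j c) = 0 := by
      have : ((∑ k, ∑ c, Complex.normSq (H k j c) : ℝ) : ℂ) = 0 := by
        push_cast
        rw [Complex.ofReal_zero] at e
        rw [← e]
        refine Finset.sum_congr rfl fun k _ => Finset.sum_congr rfl fun c _ => ?_
        rw [Complex.normSq_eq_conj_mul_self, mul_comm]; rfl
      exact_mod_cast this
    intro k c
    have e3 := (Finset.sum_eq_zero_iff_of_nonneg (fun k _ => Finset.sum_nonneg fun c _ =>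
      Complex.normSq_nonneg _)).1 e2 k (Finset.mem_univ _)
    have e4 := (Finset.sum_eq_zero_iff_of_nonneg (fun c _ =>
      Complex.normSq_nonneg _)).1 e3 c (Finset.mem_univ _)
    exact Complex.normSq_eq_zero.1 e4
  have hCW : ∀ k, C * W k = M k := by
    intro k
    have e1 : diagonal (fun i => (Real.sqrt (s i) : ℂ)) *
        (diagonal (fun i => ((Real.sqrt (s i))⁻¹ : ℂ)) * H k) = H k := by
      ext j c
      rw [diagonal_mul, diagonal_mul]
      by_cases hj : s j = 0
      · rw [hz j hj]; simp
      · have : (Real.sqrt (s j) : ℂ) ≠ 0 := by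
          have := Real.sqrt_pos.2 (lt_of_le_of_ne (h3 j) (Ne.symm hj))
          exact_mod_cast this.ne'
        field_simp
    rw [hC, hW, Matrix.mul_assoc, e1, hH]
    dsimp only
    rw [← Matrix.mul_assoc, h2, Matrix.one_mul]
  have hCC : C * Cᴴ = ∑ k, M k * (M k)ᴴ := by
    rw [h4, hC, conjTranspose_mul, diagonal_conjTranspose]
    have : diagonal (fun i => (Real.sqrt (s i) : ℂ)) * diagonal (star fun i => (Real.sqrt (s i) : ℂ))
        = diagonal (fun i => (s i : ℂ)) := by
      rw [diagonal_mul_diagonal]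
      congr 1; ext i
      simp only [Pi.star_apply, Complex.star_def, Complex.conj_ofReal]
      rw [← Complex.ofReal_mul, Real.mul_self_sqrt (h3 i)]
    rw [← this]
    simp only [Matrix.mul_assoc]
  refine ⟨Matrix.of fun p q => C p.1 p.2 * star (C q.1 q.2), fun k => (W k)ᵀ, ⟨?_, ?_⟩, ?_, ?_⟩
  · have : (Matrix.of fun p q : N × N => C p.1 p.2 * star (C q.1 q.2)) =
        vecMulVec (fun p : N × N => C p.1 p.2) (star fun p : N × N => C p.1 p.2) := rfl
    rw [this]
    exact posSemidef_vecMulVec_self_star _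
  · have e1 : (C * Cᴴ).trace = ρ.trace := by
      rw [hCC, hG]
      simp only [Matrix.trace, Matrix.diag_apply, Matrix.sum_apply, Matrix.mul_apply,
        conjTranspose_apply, hM, Matrix.of_apply]
      refine Eq.trans ?_ (Fintype.sum_prod_type _).symm
      refine Finset.sum_congr rfl fun a _ => ?_
      rw [Finset.sum_comm]
    rw [← hρ.2, ← e1]
    simp only [Matrix.trace, Matrix.diag_apply, Matrix.mul_apply,
        conjTranspose_apply, Fintype.sum_prod_type, Matrix.of_apply]
  · rw [hG]
    ext ⟨a, c⟩ ⟨a', c'⟩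
    rw [Matrix.mul_apply, Matrix.sum_apply]
    refine Finset.sum_congr rfl fun k _ => ?_
    have e1 : ∀ a c, G (a, c) k = ∑ j, C a j * W k j c := by
      intro a c
      rw [← Matrix.mul_apply, hCW]; rfl
    rw [conjTranspose_apply, e1, e1]
    simp only [Matrix.mul_apply, Fintype.sum_prod_type, kronecker_apply, conjTranspose_apply,
      Matrix.of_apply, one_apply, transpose_apply, star_sum, star_mul', Finset.sum_mul,
      Finset.mul_sum]
    simp [apply_ite (starRingEnd ℂ), Finset.sum_mul]
    refine Finset.sum_congr rfl fun j _ => Finset.sum_congr rfl fun j' _ => ?_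
    ring
  · have e1 : ∑ k, ((W k)ᵀ)ᴴ * (W k)ᵀ = (∑ k, W k * (W k)ᴴ)ᵀ := by
      ext i j
      simp only [Matrix.sum_apply, Matrix.mul_apply, conjTranspose_apply, transpose_apply]
      refine Finset.sum_congr rfl fun k _ => Finset.sum_congr rfl fun c _ => mul_comm _ _
    have e2 : ∑ k, W k * (W k)ᴴ = diagonal (fun i => (((Real.sqrt (s i))⁻¹ * s i * (Real.sqrt (s i))⁻¹ : ℝ) : ℂ)) := by
      have : ∑ k, W k * (W k)ᴴ = diagonal (fun i => ((Real.sqrt (s i))⁻¹ : ℂ)) *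
          (∑ k, H k * (H k)ᴴ) * (diagonal (fun i => ((Real.sqrt (s i))⁻¹ : ℂ)))ᴴ := by
        rw [Matrix.mul_sum, Matrix.sum_mul]
        refine Finset.sum_congr rfl fun k _ => ?_
        simp only [hW, conjTranspose_mul, Matrix.mul_assoc]
      rw [this, hHs, diagonal_conjTranspose, diagonal_mul_diagonal, diagonal_mul_diagonal]
      congr 1; ext i
      simp [Pi.star_apply]
    rw [e1, e2, diagonal_transpose, ← diagonal_one, diagonal_sub]
    have : (fun i => (1:ℂ) - (((Real.sqrt (s i))⁻¹ * s i * (Real.sqrt (s i))⁻¹ : ℝ) : ℂ)) =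
      fun i => ((1 - (Real.sqrt (s i))⁻¹ * s i * (Real.sqrt (s i))⁻¹ : ℝ) : ℂ) := by
        ext i; push_cast; rfl
    rw [this]
    refine psd_diag fun i => ?_
    by_cases hj : s i = 0
    · simp [hj]
    · have := Real.sqrt_pos.2 (lt_of_le_of_ne (h3 i) (Ne.symm hj))
      have e3 := Real.mul_self_sqrt (h3 i)
      have : (Real.sqrt (s i))⁻¹ * s i * (Real.sqrt (s i))⁻¹ = 1 := by
        field_simp; nlinarith
      rw [this]; simp

end P7

section P8
variable {N M R A B : Type} [Fintype N] [DecidableEq N] [Fintype M] [DecidableEq M]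
  [Fintype R] [DecidableEq R] [Fintype A] [DecidableEq A] [Fintype B] [DecidableEq B]

lemma bar_local {X κ : Type} [Fintype X] [Fintype κ] {K : X → Matrix M N ℂ}
    {Φ : Matrix N N ℂ →ₗ[ℂ] Matrix M M ℂ} (h : IsKr K Φ) (L : κ → Matrix R A ℂ)
    (ν : Matrix (N × A) (N × A) ℂ) :
    blockApplyRight Φ (∑ k, ((1 : Matrix N N ℂ) ⊗ₖ L k) * ν * ((1 : Matrix N N ℂ) ⊗ₖ L k)ᴴ) =
      ∑ k, ((1 : Matrix M M ℂ) ⊗ₖ L k) * blockApplyRight Φ ν * ((1 : Matrix M M ℂ) ⊗ₖ L k)ᴴ := by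
  rw [bar_kraus1 h, bar_kraus1 h]
  simp only [Matrix.mul_sum, Matrix.sum_mul]
  rw [Finset.sum_comm]
  refine Finset.sum_congr rfl fun k _ => Finset.sum_congr rfl fun x _ => ?_
  have e : (K x ⊗ₖ (1 : Matrix R R ℂ)) * ((1 : Matrix N N ℂ) ⊗ₖ L k) =
      ((1 : Matrix M M ℂ) ⊗ₖ L k) * (K x ⊗ₖ (1 : Matrix A A ℂ)) := by
    rw [← mul_kronecker_mul, ← mul_kronecker_mul]; simp
  calc _ = ((K x ⊗ₖ (1 : Matrix R R ℂ)) * ((1 : Matrix N N ℂ) ⊗ₖ L k)) * ν *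
        ((K x ⊗ₖ (1 : Matrix R R ℂ)) * ((1 : Matrix N N ℂ) ⊗ₖ L k))ᴴ := by
        rw [conjTranspose_mul]; simp only [Matrix.mul_assoc]
    _ = _ := by rw [e, conjTranspose_mul]; simp only [Matrix.mul_assoc]

lemma pull_psd {κ : Type} [Fintype κ] (K : κ → Matrix M N ℂ) {P : Matrix M M ℂ}
    (hP : P.PosSemidef) : (∑ k, (K k)ᴴ * P * K k).PosSemidef :=
  Matrix.posSemidef_sum _ fun k _ => hP.conjTranspose_mul_mul_same _

lemma push_psd {κ : Type} [Fintype κ] (K : κ → Matrix M N ℂ) {P : Matrix N N ℂ}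
    (hP : P.PosSemidef) : (∑ k, K k * P * (K k)ᴴ).PosSemidef :=
  Matrix.posSemidef_sum _ fun k _ => hP.mul_mul_conjTranspose_same _

lemma pull_le {κ : Type} [Fintype κ] (K : κ → Matrix M N ℂ) (hK : (1 - ∑ k, (K k)ᴴ * K k).PosSemidef)
    {P : Matrix M M ℂ} (hP : (1 - P).PosSemidef) : (1 - ∑ k, (K k)ᴴ * P * K k).PosSemidef := by
  have := hK.add (pull_psd K hP)
  have e : ∑ k, (K k)ᴴ * (1 - P) * K k = ∑ k, (K k)ᴴ * K k - ∑ k, (K k)ᴴ * P * K k := by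
    rw [← Finset.sum_sub_distrib]
    refine Finset.sum_congr rfl fun k _ => ?_
    rw [Matrix.mul_sub, Matrix.sub_mul, Matrix.mul_one]
  rw [e] at this
  simpa using this

lemma loc_le {κ : Type} [Fintype κ] {L : κ → Matrix R A ℂ} (hL : (1 - ∑ k, (L k)ᴴ * L k).PosSemidef) :
    (1 - ∑ k, ((1 : Matrix M M ℂ) ⊗ₖ L k)ᴴ * ((1 : Matrix M M ℂ) ⊗ₖ L k)).PosSemidef := by
  have e : (1 - ∑ k, ((1 : Matrix M M ℂ) ⊗ₖ L k)ᴴ * ((1 : Matrix M M ℂ) ⊗ₖ L k)) =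
      (1 : Matrix M M ℂ) ⊗ₖ (1 - ∑ k, (L k)ᴴ * L k) := by
    simp only [conjTranspose_kronecker, conjTranspose_one, ← mul_kronecker_mul, Matrix.mul_one]
    ext ⟨i, j⟩ ⟨i', j'⟩
    simp only [Matrix.sub_apply, Matrix.sum_apply, kronecker_apply, mul_sub, Finset.mul_sum]
    congr 1
    rw [← one_kronecker_one, kronecker_apply]
  rw [e]
  exact Matrix.PosSemidef.one.kronecker hL

lemma par_test {X Y : Type} [Fintype X] [Fintype Y] {K : X → Matrix M N ℂ} {K' : Y → Matrix M N ℂ}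
    {E F : Matrix N N ℂ →ₗ[ℂ] Matrix M M ℂ} (hE : IsKr K E) (hF : IsKr K' F)
    {ρ : Matrix (N × R) (N × R) ℂ} (hρ : IsState ρ) {P : Matrix (M × R) (M × R) ℂ}
    (hP : P.PosSemidef) (hP' : (1 - P).PosSemidef) :
    ∃ ν : Matrix (N × N) (N × N) ℂ, IsState ν ∧ ∃ T : Matrix (M × N) (M × N) ℂ,
      T.PosSemidef ∧ (1 - T).PosSemidef ∧
      rtr (T * blockApplyRight E ν) = rtr (P * blockApplyRight E ρ) ∧
      rtr (T * blockApplyRight F ν) = rtr (P * blockApplyRight F ρ) := by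
  obtain ⟨ν, L, hν, e, hL⟩ := schmidt hρ
  refine ⟨ν, hν, ∑ k, ((1 : Matrix M M ℂ) ⊗ₖ L k)ᴴ * P * ((1 : Matrix M M ℂ) ⊗ₖ L k),
    pull_psd _ hP, pull_le _ (loc_le hL) hP', ?_, ?_⟩
  · rw [e, bar_local hE, rtr_mul_comm P, rtr_kraus, rtr_mul_comm]
  · rw [e, bar_local hF, rtr_mul_comm P, rtr_kraus, rtr_mul_comm]

lemma step {X Y : Type} [Fintype X] [Fintype Y] {K : X → Matrix B A ℂ} {K' : Y → Matrix B A ℂ}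
    {E F : Matrix A A ℂ →ₗ[ℂ] Matrix B B ℂ} (hE : IsKr K E) (hF : IsKr K' F)
    {ρ σ U V : Matrix (A × R) (A × R) ℂ} {r s : A × R → ℝ}
    (hA : IsSp ρ U r) (hB : IsSp σ V s) (hρ : ρ.trace = 1) (hd : Dom U V r s)
    {U' V' : Matrix (B × R) (B × R) ℂ} {r' s' : B × R → ℝ}
    (hA' : IsSp (blockApplyRight E ρ) U' r') (hB' : IsSp (blockApplyRight F σ) V' s')
    (tA' : (blockApplyRight E ρ).trace = 1)
    {γ αp : ℝ} (h0 : 0 < γ) (h1 : γ < 1) (ha0 : 0 < αp) (ha1 : αp < 1)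
    (hp : 0 < Qp U V r s γ) (hq : 0 < Qm U' V' r' s' γ) (m : ℕ) :
    ∃ ν : Matrix (tpow A m × tpow A m) (tpow A m × tpow A m) ℂ, IsState ν ∧
      ∃ T : Matrix (tpow B m × tpow A m) (tpow B m × tpow A m) ℂ,
      T.PosSemidef ∧ (1 - T).PosSemidef ∧
      1 - αp ≤ rtr (T * blockApplyRight (tpowChannel E m) ν) ∧
      rtr (T * blockApplyRight (tpowChannel F m) ν) ≤
        (32 * Qp U V r s γ ^ m * Qm U' V' r' s' γ ^ m / αp ^ 3) ^ (γ⁻¹) := by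
  set p := Qp U V r s γ with hpdef
  set q := Qm U' V' r' s' γ with hqdef
  set l1 : ℝ := (16 * p ^ m / αp ^ 2) ^ (γ⁻¹) with hl1
  set l2 : ℝ := (αp / (2 * q ^ m)) ^ (γ⁻¹) with hl2
  have hl1p : 0 < l1 := Real.rpow_pos_of_pos (by positivity) _
  have hl2p : 0 < l2 := Real.rpow_pos_of_pos (by positivity) _
  have hl1g : l1 ^ γ = 16 * p ^ m / αp ^ 2 := Real.rpow_inv_rpow (by positivity) h0.ne'
  have hl2g : l2 ^ γ = αp / (2 * q ^ m) := Real.rpow_inv_rpow (by positivity) h0.ne'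
  have S1 := pp_sp hA m
  have S2 := pp_sp hB m
  have S3 := pp_sp hA' m
  have S4 := pp_sp hB' m
  have hdm := pp_dom hd m
  have hR : Rt (pairPow U m) (pairPow V m) (vecPow r m) (vecPow s m) l1 ≤ (αp / 4) ^ 2 := by
    rw [Rt_eq S1.2.2.1 S2.2.2.1 hdm hl1p]
    have : ∑ i : (tpow A m × tpow R m) × (tpow A m × tpow R m),
        (ov (pairPow U m) (pairPow V m) i.1 i.2 * vecPow r m i.2) *
        ((vecPow r m i.2 / vecPow s m i.1) / (vecPow r m i.2 / vecPow s m i.1 + l1)) ≤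
        (l1 ^ γ)⁻¹ * Qp (pairPow U m) (pairPow V m) (vecPow r m) (vecPow s m) γ := by
      unfold Qp
      rw [Finset.mul_sum]
      refine Finset.sum_le_sum fun i _ => ?_
      set x := vecPow r m i.2 / vecPow s m i.1 with hx
      have hx0 : 0 ≤ x := div_nonneg (S1.2.2.1 _) (S2.2.2.1 _)
      have hw : 0 ≤ ov (pairPow U m) (pairPow V m) i.1 i.2 * vecPow r m i.2 :=
        mul_nonneg (ov_nonneg _ _ _ _) (S1.2.2.1 _)
      have f := frac_le_rpow (y := x / l1) (div_nonneg hx0 hl1p.le) h0 h1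
      rw [Real.div_rpow hx0 hl1p.le] at f
      have f2 : x / (x + l1) = (x / l1) / (x / l1 + 1) := by field_simp
      calc _ ≤ (ov (pairPow U m) (pairPow V m) i.1 i.2 * vecPow r m i.2) * (x ^ γ / l1 ^ γ) := by
            rw [f2]; exact mul_le_mul_of_nonneg_left f hw
        _ = _ := by rw [div_eq_mul_inv]; ring
    refine this.trans ?_
    rw [pp_Qp hA.2.2.1 hB.2.2.1, hl1g, ← hpdef]
    have : p ^ m ≠ 0 := by positivity
    apply le_of_eq; field_simp; norm_num
  obtain ⟨ρ', hρ', hle, hsm⟩ := smoothing S1 S2 (by rw [rtr, pp_trace hρ]; simp) hl1p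
    (by positivity : 0 < αp / 4) (by linarith) hR
  obtain ⟨P, hP, hP', haud⟩ := audenaert S3 S4 hl2p h0 h1
  rw [pp_Qm hA'.2.2.1 hB'.2.2.1, ← hqdef, hl2g] at haud
  have hq2 : αp / (2 * q ^ m) * q ^ m = αp / 2 := by
    have : q ^ m ≠ 0 := by positivity
    field_simp
  rw [hq2] at haud
  have n1 := rtr_mul_nonneg hP' S3.psd
  have n2 := rtr_mul_nonneg hP S4.psd
  obtain ⟨Z, _, L, hL⟩ := tpow_kr hE m
  obtain ⟨Z', _, L', hL'⟩ := tpow_kr hF m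
  obtain ⟨ν, hν, T, hT, hT', e1, e2⟩ := par_test hL hL' hρ' hP hP'
  refine ⟨ν, hν, T, hT, hT', ?_, ?_⟩
  · rw [e1, bar_kraus1 hL, rtr_mul_comm, rtr_kraus, rtr_mul_comm]
    refine le_trans ?_ (hsm _ (pull_psd _ hP) (pull_le _ (by
      rw [kr_right_one hL.2, sub_self]; exact Matrix.PosSemidef.zero) hP'))
    rw [rtr_mul_comm, ← rtr_kraus, rtr_mul_comm, ← bar_kraus1 hL, pp_channel]
    have : rtr ((1 - P) * pairPow (blockApplyRight E ρ) m) = 1 - rtr (P * pairPow (blockApplyRight E ρ) m) := by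
      rw [Matrix.sub_mul, rtr_sub, Matrix.one_mul]
      congr 1
      rw [rtr, pp_trace tA']; simp
    rw [this] at haud n1
    have := mul_nonneg hl2p.le n2
    linarith
  · rw [e2]
    have g1 : rtr (P * blockApplyRight (tpowChannel F m) ρ') ≤
        l1 * rtr (P * pairPow (blockApplyRight F σ) m) := by
      have hps := rtr_mul_nonneg hP (push_psd (fun x => L' x ⊗ₖ (1 : Matrix (tpow R m) (tpow R m) ℂ)) hle)
      rw [← bar_kraus1 hL'] at hps
      have : blockApplyRight (tpowChannel F m) ((l1 : ℂ) • pairPow σ m - ρ') =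
          (l1 : ℂ) • pairPow (blockApplyRight F σ) m - blockApplyRight (tpowChannel F m) ρ' := by
        rw [← pp_channel]
        have := map_sub (blockApplyRightL (tpow R m) (tpowChannel F m)) ((l1 : ℂ) • pairPow σ m) ρ'
        rw [map_smul] at this
        exact this
      rw [this, Matrix.mul_sub, rtr_sub, Matrix.mul_smul, rtr_smul] at hps
      linarith
    refine g1.trans ?_
    have g2 : rtr (P * pairPow (blockApplyRight F σ) m) ≤ l2⁻¹ := by
      have : l2 * rtr (P * pairPow (blockApplyRight F σ) m) ≤ 1 := by linarith
      rw [inv_eq_one_div, le_div_iff₀ hl2p]; linarith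
    calc l1 * _ ≤ l1 * l2⁻¹ := mul_le_mul_of_nonneg_left g2 hl1p.le
      _ = _ := by
        rw [hl1, hl2, ← Real.inv_rpow (by positivity), ← Real.mul_rpow (by positivity) (by positivity)]
        congr 1
        have : q ^ m ≠ 0 := by positivity
        field_simp; norm_num

end P8

section P9
variable {n m : Type} [Fintype n] [DecidableEq n] [Fintype m] [DecidableEq m] {k : ℕ}

lemma choi_recon {X : Type} [Fintype X] {Φ : Matrix n n ℂ →ₗ[ℂ] Matrix m m ℂ}
    {Z : Matrix n (Fin k) ℂ} {Zi : Matrix (Fin k) n ℂ} (hZ : Z * Zi = 1) {c : X → ℂ}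
    {y : X → Fin k × m → ℂ}
    (h : ∀ p q, blockApply Φ (Matrix.of fun p q : Fin k × n => Z p.2 p.1 * star (Z q.2 q.1)) p q =
      ∑ x, c x * (y x p * star (y x q))) (M : Matrix n n ℂ) :
    Φ M = ∑ x, c x • (((Matrix.of fun b i => y x (i, b)) * Zi) * M *
      ((Matrix.of fun b i => y x (i, b)) * Zi)ᴴ) := by
  set N := Zi * M * Ziᴴ with hN
  have hM : M = ∑ i, ∑ j, N i j • (Matrix.of fun a b => Z a i * star (Z b j)) := by
    have e : M = Z * N * Zᴴ := by
      calc M = (Z * Zi) * M * (Z * Zi)ᴴ := by rw [hZ]; simp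
        _ = _ := by rw [conjTranspose_mul]; simp only [hN, Matrix.mul_assoc]
    conv_lhs => rw [e]
    ext a b
    simp only [Matrix.mul_apply, Matrix.sum_apply, Matrix.smul_apply, Matrix.of_apply, smul_eq_mul,
      Finset.sum_mul, conjTranspose_apply]
    rw [Finset.sum_comm]
    refine Finset.sum_congr rfl fun i _ => Finset.sum_congr rfl fun j _ => ?_
    ring
  have hb : ∀ x, ((Matrix.of fun b i => y x (i, b)) * Zi) * M *
      ((Matrix.of fun b i => y x (i, b)) * Zi)ᴴ = (Matrix.of fun b i => y x (i, b)) * N *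
        (Matrix.of fun b i => y x (i, b))ᴴ := by
    intro x; rw [conjTranspose_mul]; simp only [hN, Matrix.mul_assoc]
  simp only [hb]
  ext b b'
  conv_lhs => rw [hM]
  simp only [map_sum, map_smul, Matrix.sum_apply, Matrix.smul_apply, smul_eq_mul]
  have h' : ∀ i j, Φ (Matrix.of fun a b => Z a i * star (Z b j)) b b' =
      ∑ x, c x * (y x (i, b) * star (y x (j, b'))) := fun i j => h (i, b) (j, b')
  simp only [h', Matrix.mul_apply, Matrix.of_apply, conjTranspose_apply, Finset.sum_mul,
    Finset.mul_sum]
  calc ∑ i, ∑ j, ∑ x, N i j * (c x * (y x (i, b) * star (y x (j, b'))))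
      = ∑ i, ∑ x, ∑ j, N i j * (c x * (y x (i, b) * star (y x (j, b')))) :=
        Finset.sum_congr rfl fun i _ => Finset.sum_comm
    _ = ∑ x, ∑ i, ∑ j, N i j * (c x * (y x (i, b) * star (y x (j, b')))) := Finset.sum_comm
    _ = _ := by
      refine Finset.sum_congr rfl fun x _ => ?_
      rw [Finset.sum_comm]
      refine Finset.sum_congr rfl fun i _ => Finset.sum_congr rfl fun j _ => ?_
      ring

lemma tp_one {X : Type} [Fintype X] {Φ : Matrix n n ℂ →ₗ[ℂ] Matrix m m ℂ}
    (hΦ : ∀ M, (Φ M).trace = M.trace) {K : X → Matrix m n ℂ}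
    (h : ∀ M, Φ M = ∑ x, K x * M * (K x)ᴴ) : IsKr K Φ := by
  refine ⟨h, ?_⟩
  rw [Matrix.ext_iff_trace_mul_right]
  intro M
  rw [Matrix.one_mul, ← hΦ M, h M, Matrix.sum_mul, Matrix.trace_sum, Matrix.trace_sum]
  refine Finset.sum_congr rfl fun x _ => ?_
  rw [Matrix.trace_mul_comm (K x * M), ← Matrix.mul_assoc]

lemma nu_psd (Z : Matrix n (Fin k) ℂ) :
    (Matrix.of fun p q : Fin k × n => Z p.2 p.1 * star (Z q.2 q.1)).PosSemidef := by
  have : (Matrix.of fun p q : Fin k × n => Z p.2 p.1 * star (Z q.2 q.1)) =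
        vecMulVec (fun p : Fin k × n => Z p.2 p.1) (star fun p : Fin k × n => Z p.2 p.1) := rfl
  rw [this]
  exact posSemidef_vecMulVec_self_star _

lemma exists_kr {Φ : Matrix n n ℂ →ₗ[ℂ] Matrix m m ℂ} (h : IsQChannel Φ) :
    ∃ (X : Type) (_ : Fintype X) (K : X → Matrix m n ℂ), IsKr K Φ := by
  by_cases hn : Nonempty n
  · have hk : 1 ≤ Fintype.card n := Fintype.card_pos
    set e := Fintype.equivFin n with he
    set Z : Matrix n (Fin (Fintype.card n)) ℂ := (1 : Matrix n n ℂ).submatrix id e.symm with hZ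
    set Zi : Matrix (Fin (Fintype.card n)) n ℂ := (1 : Matrix n n ℂ).submatrix e.symm id with hZi
    have hZZ : Z * Zi = 1 := by
      rw [hZ, hZi, submatrix_mul_equiv]; simp
    obtain ⟨G, hG⟩ := psd_gram (h.2 _ hk _ (nu_psd Z))
    have := choi_recon (Φ := Φ) hZZ (c := fun _ => 1) (y := fun x p => G p x) (by
      intro p q; rw [hG]; simp [Matrix.mul_apply])
    exact ⟨_, inferInstance, fun x => (Matrix.of fun b i => G (i, b) x) * Zi, tp_one h.1 (fun M => by rw [this M]; simp only [one_smul])⟩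
  · rw [not_nonempty_iff] at hn
    refine ⟨Empty, inferInstance, fun x => x.elim, tp_one h.1 fun M => ?_⟩
    have : M = 0 := by ext i; exact (hn.false i).elim
    simp [this]

lemma matFun_eq (f : ℝ → ℝ) {A U : Matrix n n ℂ} {r : n → ℝ} (h : IsSp A U r) :
    matFun f A = U * diagonal (fun i => (f (r i) : ℂ)) * Uᴴ := by
  have hA := h.psd.1
  unfold matFun
  rw [dif_pos hA]
  exact fun_unique (herm_unitary hA).1 (herm_unitary hA).2 h.1 h.2.1
    ((herm_decomp hA).symm.trans h.2.2.2) f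

lemma conj_diag_mul {U : Matrix n n ℂ} (h1 : Uᴴ * U = 1) (a b : n → ℝ) :
    (U * diagonal (fun i => (a i : ℂ)) * Uᴴ) * (U * diagonal (fun i => (b i : ℂ)) * Uᴴ) =
      U * diagonal (fun i => ((a i * b i : ℝ) : ℂ)) * Uᴴ := by
  calc _ = U * (diagonal (fun i => (a i : ℂ)) * (Uᴴ * U) * diagonal (fun i => (b i : ℂ))) * Uᴴ := by
        simp only [Matrix.mul_assoc]
    _ = _ := by
      rw [h1, Matrix.mul_one, diagonal_mul_diagonal]
      simp only [Complex.ofReal_mul]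

lemma conj_diag_herm (U : Matrix n n ℂ) (a : n → ℝ) :
    (U * diagonal (fun i => (a i : ℂ)) * Uᴴ)ᴴ = U * diagonal (fun i => (a i : ℂ)) * Uᴴ := by
  simp only [conjTranspose_mul, conjTranspose_conjTranspose, diagonal_conjTranspose,
      Matrix.mul_assoc]
  congr 3
  ext i; simp [Pi.star_apply]

/-- the optimal reverse test -/
lemma rev_test {X Y : Matrix n n ℂ} (hX : X.PosSemidef) (hY : Y.PosSemidef) (hs : SuppLE X Y)
    {α : ℝ} (hα : 0 < α) :
    ∃ (W : Matrix n n ℂ) (δ : n → ℝ), (∀ x, 0 ≤ δ x) ∧ Y = W * Wᴴ ∧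
      X = W * diagonal (fun i => (δ i : ℂ)) * Wᴴ ∧
      rtr (Y * mpow (mpow Y (-(1/2 : ℝ)) * X * mpow Y (-(1/2 : ℝ))) α) =
        rtr (W * diagonal (fun i => ((δ i ^ α : ℝ) : ℂ)) * Wᴴ) := by
  obtain ⟨V, y, hV⟩ := exists_isSp hY
  obtain ⟨v1, v2, v3, v4⟩ := hV
  set f : ℝ → ℝ := fun x => if x = 0 then 0 else x ^ (-(1/2 : ℝ)) with hf
  set J := V * diagonal (fun i => (f (y i) : ℂ)) * Vᴴ with hJ
  set H := V * diagonal (fun i => (Real.sqrt (y i) : ℂ)) * Vᴴ with hH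
  set Pi := V * diagonal (fun i => ((if y i = 0 then 0 else 1 : ℝ) : ℂ)) * Vᴴ with hPi
  have eJ : mpow Y (-(1/2 : ℝ)) = J := matFun_eq _ ⟨v1, v2, v3, v4⟩
  have hJh : Jᴴ = J := conj_diag_herm _ _
  have hHh : Hᴴ = H := conj_diag_herm _ _
  have hPh : Piᴴ = Pi := conj_diag_herm _ _
  have sq : ∀ i, y i ≠ 0 → f (y i) = (Real.sqrt (y i))⁻¹ := by
    intro i hi
    simp only [hf, if_neg hi]
    rw [Real.rpow_neg (v3 i), Real.sqrt_eq_rpow]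
  have hHJ : H * J = Pi := by
    rw [hH, hJ, conj_diag_mul v1]
    congr 3; ext i
    by_cases hi : y i = 0
    · simp [hi]
    · rw [sq i hi, if_neg hi, mul_inv_cancel₀ (Real.sqrt_pos.2 (lt_of_le_of_ne (v3 i) (Ne.symm hi))).ne']
  have hJH : J * H = Pi := by
    rw [← hPh, ← hHJ, conjTranspose_mul, hHh, hJh]
  have hHH : H * H = Y := by
    rw [hH, conj_diag_mul v1, v4]
    congr 3; ext i
    rw [Real.mul_self_sqrt (v3 i)]
  have hXP : X * Pi = X := by
    have hYP : Y * (1 - Pi) = 0 := by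
      rw [Matrix.mul_sub, Matrix.mul_one, hPi, v4, conj_diag_mul v1, sub_eq_zero]
      congr 3; ext i
      by_cases hi : y i = 0 <;> simp [hi]
    have : X * (1 - Pi) = 0 := by
      ext i j
      have h1 := hs (fun a => (1 - Pi) a j) (by
        ext a; exact congrFun (congrFun hYP a) j)
      exact congrFun h1 i
    rw [Matrix.mul_sub, Matrix.mul_one, sub_eq_zero] at this
    exact this.symm
  have hPX : Pi * X = X := by
    have := congrArg conjTranspose hXP
    rwa [conjTranspose_mul, hPh, hX.1.eq] at this
  have hΔ : (J * X * J).PosSemidef := by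
    have := hX.mul_mul_conjTranspose_same J
    rwa [hJh] at this
  obtain ⟨O, δ, hO⟩ := exists_isSp hΔ
  have hmp : mpow (J * X * J) α = O * diagonal (fun i => ((δ i ^ α : ℝ) : ℂ)) * Oᴴ := by
    unfold mpow
    rw [matFun_eq _ hO]
    congr 3; ext i
    by_cases hi : δ i = 0
    · simp [hi, Real.zero_rpow hα.ne']
    · simp [hi]
  refine ⟨H * O, δ, hO.2.2.1, ?_, ?_, ?_⟩
  · calc Y = H * (O * Oᴴ) * H := by rw [hO.2.1, Matrix.mul_one, hHH]
      _ = _ := by rw [conjTranspose_mul, hHh]; simp only [Matrix.mul_assoc]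
  · calc X = (H * J) * X * (J * H) := by rw [hHJ, hJH, hPX, hXP]
      _ = H * (J * X * J) * H := by simp only [Matrix.mul_assoc]
      _ = _ := by
        rw [hO.2.2.2, conjTranspose_mul, hHh]; simp only [Matrix.mul_assoc]
  · rw [eJ, hmp, ← hHH, Matrix.mul_assoc, rtr_mul_comm, conjTranspose_mul, hHh]
    simp only [Matrix.mul_assoc]

end P9

section P10
variable {n m : Type} [Fintype n] [DecidableEq n] [Fintype m] [DecidableEq m]

lemma bapply_psd {k : ℕ} (hk : 1 ≤ k) {Φ : Matrix n n ℂ →ₗ[ℂ] Matrix m m ℂ} (h : IsQChannel Φ)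
  {M : Matrix (Fin k × n) (Fin k × n) ℂ} (hM : M.PosSemidef) : (blockApply Φ M).PosSemidef := h.2 k hk M hM

lemma geom_bound {E F : Matrix n n ℂ →ₗ[ℂ] Matrix m m ℂ} {α : ℝ} (h1 : 1 < α)
    (hfin : chDiv (geomD α) E F ≠ ⊤) {k : ℕ} (hk : 1 ≤ k) {ν : Matrix (Fin k × n) (Fin k × n) ℂ}
    (hν : IsState ν) :
    SuppLE (blockApply E ν) (blockApply F ν) ∧
    rtr (blockApply F ν * mpow (mpow (blockApply F ν) (-(1/2 : ℝ)) * blockApply E ν *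
      mpow (blockApply F ν) (-(1/2 : ℝ))) α) ≤ (2:ℝ) ^ ((α - 1) * (chDiv (geomD α) E F).toReal) := by
  have hle : geomRenyi α (blockApply E ν) (blockApply F ν) ≤ chDiv (geomD α) E F := by
    unfold chDiv
    exact le_iSup_of_le k (le_iSup_of_le hk (le_iSup_of_le ν (le_iSup_of_le hν le_rfl)))
  have hs : SuppLE (blockApply E ν) (blockApply F ν) := by
    by_contra hs
    unfold geomRenyi at hle
    rw [if_neg hs] at hle
    exact hfin (top_le_iff.1 hle)
  refine ⟨hs, ?_⟩
  unfold geomRenyi at hle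
  rw [if_pos hs] at hle
  set q := rtr (blockApply F ν * mpow (mpow (blockApply F ν) (-(1/2 : ℝ)) * blockApply E ν *
      mpow (blockApply F ν) (-(1/2 : ℝ))) α) with hq
  have hpos : 0 < (2:ℝ) ^ ((α - 1) * (chDiv (geomD α) E F).toReal) := by positivity
  by_cases hq0 : q ≤ 0
  · exact hq0.trans hpos.le
  · push Not at hq0
    unfold elog at hle
    rw [if_neg (not_le.2 hq0), ← EReal.coe_mul] at hle
    have hbot : chDiv (geomD α) E F ≠ ⊥ := by
      intro h; rw [h] at hle; exact absurd (le_bot_iff.1 hle) (EReal.coe_ne_bot _)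
    rw [← EReal.coe_toReal hfin hbot, EReal.coe_le_coe_iff] at hle
    have h2 : Real.logb 2 q ≤ (α - 1) * (chDiv (geomD α) E F).toReal := by
      have h3 : 0 < α - 1 := by linarith
      calc Real.logb 2 q = (α - 1) * ((α - 1)⁻¹ * Real.logb 2 q) := by field_simp
        _ ≤ _ := mul_le_mul_of_nonneg_left hle h3.le
    exact (Real.logb_le_iff_le_rpow (by norm_num) hq0).1 h2

lemma sim_kraus [Nonempty n] {E F : Matrix n n ℂ →ₗ[ℂ] Matrix m m ℂ} (hE : IsQChannel E)
    (hF : IsQChannel F) {α : ℝ} (h1 : 1 < α) (hfin : chDiv (geomD α) E F ≠ ⊤)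
    {θ : Matrix n n ℂ} (hθ : θ.PosSemidef) {η : ℝ} (hη : 0 < η) :
    ∃ (X : Type) (_ : Fintype X) (K : X → Matrix m n ℂ) (δ : X → ℝ), IsKr K F ∧ (∀ x, 0 ≤ δ x) ∧
      (∀ M, E M = ∑ x, (δ x : ℂ) • (K x * M * (K x)ᴴ)) ∧
      ∑ x, δ x ^ α * rtr (K x * θ * (K x)ᴴ) ≤
        (2:ℝ) ^ ((α - 1) * (chDiv (geomD α) E F).toReal) * (rtr θ + η) := by
  set k := Fintype.card n with hk
  have hk1 : 1 ≤ k := Fintype.card_pos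
  have hkp : (0:ℝ) < k := by exact_mod_cast hk1
  set e := Fintype.equivFin n with he
  obtain ⟨U, s, u1, u2, u3, u4⟩ := exists_isSp hθ
  set t := rtr θ + η with ht
  have htp : 0 < t := by have := rtr_nonneg hθ; linarith
  set z : n → ℝ := fun i => (s i + η / k) / t with hz
  have hzp : ∀ i, 0 < z i := fun i => div_pos (by have := u3 i; positivity) htp
  have hzs : ∑ i, z i = 1 := by
    have h2 : rtr θ = ∑ i, s i := rtr_sp ⟨u1, u2, u3, u4⟩
    simp only [hz]
    rw [← Finset.sum_div, Finset.sum_add_distrib, ← h2, Finset.sum_const, Finset.card_univ, ← hk,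
      nsmul_eq_mul, mul_div_cancel₀ _ hkp.ne', ← ht, div_self htp.ne']
  set Z0 : Matrix n n ℂ := U * diagonal (fun i => (Real.sqrt (z i) : ℂ)) with hZ0
  set Zi0 : Matrix n n ℂ := diagonal (fun i => (((Real.sqrt (z i))⁻¹ : ℝ) : ℂ)) * Uᴴ with hZi0
  have sqp : ∀ i, 0 < Real.sqrt (z i) := fun i => Real.sqrt_pos.2 (hzp i)
  have hd1 : diagonal (fun i => (Real.sqrt (z i) : ℂ)) *
      diagonal (fun i => (((Real.sqrt (z i))⁻¹ : ℝ) : ℂ)) = 1 := by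
    rw [diagonal_mul_diagonal, ← diagonal_one]
    congr 1; ext i
    rw [← Complex.ofReal_mul, mul_inv_cancel₀ (sqp i).ne']; simp
  have hd2 : diagonal (fun i => (((Real.sqrt (z i))⁻¹ : ℝ) : ℂ)) *
      diagonal (fun i => (Real.sqrt (z i) : ℂ)) = 1 := by
    rw [diagonal_mul_diagonal, ← diagonal_one]
    congr 1; ext i
    rw [← Complex.ofReal_mul, inv_mul_cancel₀ (sqp i).ne']; simp
  have hz1 : Z0 * Zi0 = 1 := by
    calc Z0 * Zi0 = U * (diagonal (fun i => (Real.sqrt (z i) : ℂ)) *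
      diagonal (fun i => (((Real.sqrt (z i))⁻¹ : ℝ) : ℂ))) * Uᴴ := by
          rw [hZ0, hZi0]; simp only [Matrix.mul_assoc]
      _ = _ := by rw [hd1, Matrix.mul_one, u2]
  have hz2 : Zi0 * Z0 = 1 := by
    calc Zi0 * Z0 = diagonal (fun i => (((Real.sqrt (z i))⁻¹ : ℝ) : ℂ)) * (Uᴴ * U) *
      diagonal (fun i => (Real.sqrt (z i) : ℂ)) := by
          rw [hZ0, hZi0]; simp only [Matrix.mul_assoc]
      _ = _ := by rw [u1, Matrix.mul_one, hd2]
  have hzz : Z0 * Z0ᴴ = U * diagonal (fun i => (z i : ℂ)) * Uᴴ := by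
    have : diagonal (fun i => (Real.sqrt (z i) : ℂ)) * diagonal (star fun i => (Real.sqrt (z i) : ℂ))
        = diagonal (fun i => (z i : ℂ)) := by
      rw [diagonal_mul_diagonal]
      congr 1; ext i
      simp only [Pi.star_apply, Complex.star_def, Complex.conj_ofReal]
      rw [← Complex.ofReal_mul, Real.mul_self_sqrt (hzp i).le]
    rw [hZ0, conjTranspose_mul, diagonal_conjTranspose, ← this]
    simp only [Matrix.mul_assoc]
  have hdom : ((t : ℂ) • (Z0 * Z0ᴴ) - θ).PosSemidef := by
    have : (t : ℂ) • (Z0 * Z0ᴴ) - θ = U * diagonal (fun i => ((t * z i - s i : ℝ) : ℂ)) * Uᴴ := by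
      rw [hzz, u4, ← Matrix.smul_mul, ← Matrix.mul_smul, ← diagonal_smul, ← Matrix.sub_mul,
        ← Matrix.mul_sub, diagonal_sub]
      congr 3; ext i; simp
    rw [this]
    refine psd_conj_diag U fun i => ?_
    have : t * z i = s i + η / k := by simp only [hz]; field_simp
    rw [this]
    have : 0 < η / k := by positivity
    linarith
  set Z : Matrix n (Fin k) ℂ := Z0.submatrix id e.symm with hZ
  set Zi : Matrix (Fin k) n ℂ := Zi0.submatrix e.symm id with hZi
  have hZZ : Z * Zi = 1 := by rw [hZ, hZi, submatrix_mul_equiv, hz1]; simp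
  have hZZ2 : Zi * Z = 1 := by
    rw [hZ, hZi]
    have := submatrix_mul_equiv Zi0 Z0 e.symm (Equiv.refl n) e.symm
    rw [hz2, submatrix_one_equiv] at this
    exact this
  have hZZh : Z * Zᴴ = Z0 * Z0ᴴ := by
    rw [hZ, conjTranspose_submatrix, submatrix_mul_equiv]; simp
  set ν := (Matrix.of fun p q : Fin k × n => Z p.2 p.1 * star (Z q.2 q.1)) with hν
  have hνs : IsState ν := by
    refine ⟨nu_psd Z, ?_⟩
    have e1 : ν.trace = (Z * Zᴴ).trace := by
      simp only [hν, Matrix.trace, Matrix.diag_apply, Matrix.mul_apply, conjTranspose_apply,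
        Matrix.of_apply, Fintype.sum_prod_type]
      rw [Finset.sum_comm]
    rw [e1, hZZh, hzz, Matrix.trace_mul_comm, ← Matrix.mul_assoc, u1, Matrix.one_mul, trace_diagonal,
      ← Complex.ofReal_sum, hzs, Complex.ofReal_one]
  obtain ⟨hs, hb⟩ := geom_bound h1 hfin hk1 hνs
  obtain ⟨W, δ, hδ, eY, eX, eq⟩ := rev_test (bapply_psd hk1 hE hνs.1) (bapply_psd hk1 hF hνs.1) hs
    (by linarith : 0 < α)
  rw [eq] at hb
  set y : Fin k × m → Fin k × m → ℂ := fun x p => W p x with hy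
  set Yh : Fin k × m → Matrix m (Fin k) ℂ := fun x => Matrix.of fun b i => y x (i, b) with hYh
  have kF := choi_recon (Φ := F) hZZ (c := fun _ => 1) (y := y) (by
    intro p q
    refine (congrFun (congrFun eY p) q).trans ?_
    simp [Matrix.mul_apply, hy])
  have kE := choi_recon (Φ := E) hZZ (c := fun x => (δ x : ℂ)) (y := y) (by
    intro p q
    refine (congrFun (congrFun eX p) q).trans ?_
    rw [Matrix.mul_apply]
    refine Finset.sum_congr rfl fun x _ => ?_
    rw [mul_diagonal, conjTranspose_apply]; ring)
  refine ⟨Fin k × m, inferInstance, fun x => Yh x * Zi, δ, tp_one hF.1 (fun M => by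
    rw [kF M]; simp only [one_smul]; rfl), hδ, kE, ?_⟩
  have key : ∀ x, rtr ((Yh x * Zi) * ((t : ℂ) • (Z0 * Z0ᴴ)) * (Yh x * Zi)ᴴ) =
      t * ∑ p, Complex.normSq (W p x) := by
    intro x
    have : (Yh x * Zi) * ((t : ℂ) • (Z0 * Z0ᴴ)) * (Yh x * Zi)ᴴ = (t : ℂ) • (Yh x * (Yh x)ᴴ) := by
      rw [Matrix.mul_smul, Matrix.smul_mul, ← hZZh]
      congr 1
      calc _ = (Yh x * (Zi * Z)) * (Yh x * (Zi * Z))ᴴ := by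
            simp only [conjTranspose_mul, Matrix.mul_assoc]
        _ = _ := by rw [hZZ2, Matrix.mul_one]
    rw [this, rtr_smul, rtr_frob]
    congr 1
    rw [Fintype.sum_prod_type, Finset.sum_comm]
    rfl
  have hW : rtr (W * diagonal (fun i => ((δ i ^ α : ℝ) : ℂ)) * Wᴴ) =
      ∑ x, δ x ^ α * ∑ p, Complex.normSq (W p x) := by
    have : rtr (W * diagonal (fun i => ((δ i ^ α : ℝ) : ℂ)) * Wᴴ) =
      ∑ p, ∑ x, δ x ^ α * Complex.normSq (W p x) := by
      unfold rtr
      simp only [Matrix.trace, Matrix.diag_apply, Complex.re_sum]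
      refine Finset.sum_congr rfl fun p _ => ?_
      rw [Matrix.mul_apply, Complex.re_sum]
      refine Finset.sum_congr rfl fun x _ => ?_
      rw [mul_diagonal, conjTranspose_apply]
      have : W p x * ((δ x ^ α : ℝ) : ℂ) * star (W p x) =
          ((δ x ^ α * Complex.normSq (W p x) : ℝ) : ℂ) := by
        push_cast
        rw [Complex.normSq_eq_conj_mul_self, Complex.star_def]; ring
      rw [this, Complex.ofReal_re]
    rw [this, Finset.sum_comm]
    simp only [Finset.mul_sum]
  calc ∑ x, δ x ^ α * rtr ((Yh x * Zi) * θ * (Yh x * Zi)ᴴ)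
      ≤ ∑ x, δ x ^ α * (t * ∑ p, Complex.normSq (W p x)) := by
        refine Finset.sum_le_sum fun x _ => mul_le_mul_of_nonneg_left ?_ (Real.rpow_nonneg (hδ x) _)
        rw [← key x]
        have := rtr_nonneg (hdom.mul_mul_conjTranspose_same (Yh x * Zi))
        rw [Matrix.mul_sub, Matrix.sub_mul, rtr_sub] at this
        linarith
    _ = t * ∑ x, δ x ^ α * ∑ p, Complex.normSq (W p x) := by
        rw [Finset.mul_sum]
        refine Finset.sum_congr rfl fun x _ => by ring
    _ ≤ t * _ := mul_le_mul_of_nonneg_left (by rw [← hW]; exact hb) htp.le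
    _ = _ := mul_comm _ _

end P10

section P11
variable {n m R : Type} [Fintype n] [DecidableEq n] [Fintype m] [DecidableEq m] [Fintype R] [DecidableEq R]

/-- reverse tests -/
def RT (α g : ℝ) (ρ σ : Matrix n n ℂ) : Prop :=
  ∃ (X : Type) (_ : Fintype X) (τ : X → Matrix n n ℂ) (δ : X → ℝ), (∀ x, (τ x).PosSemidef) ∧
    (∀ x, 0 ≤ δ x) ∧ ρ = ∑ x, (δ x : ℂ) • τ x ∧ σ = ∑ x, τ x ∧ ∑ x, δ x ^ α * rtr (τ x) ≤ g

lemma RT_init {ρ : Matrix n n ℂ} (h : IsState ρ) (α : ℝ) : RT α 1 ρ ρ := by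
  refine ⟨Unit, inferInstance, fun _ => ρ, fun _ => 1, fun _ => h.1, fun _ => zero_le_one, ?_, ?_, ?_⟩
  · simp
  · simp
  · simp [rtr, h.2]

lemma RT_psd {α g : ℝ} {ρ σ : Matrix n n ℂ} (h : RT α g ρ σ) : ρ.PosSemidef ∧ σ.PosSemidef := by
  obtain ⟨X, _, τ, δ, hτ, hδ, rfl, rfl, hs⟩ := h
  exact ⟨Matrix.posSemidef_sum _ fun x _ => psd_smul (hτ x) (hδ x), Matrix.posSemidef_sum _ fun x _ => hτ x⟩

lemma RT_dom {α g : ℝ} {ρ σ U V : Matrix n n ℂ} {r s : n → ℝ} (h : RT α g ρ σ) (hA : IsSp ρ U r)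
    (hB : IsSp σ V s) : Dom U V r s := by
  obtain ⟨X, _, τ, δ, hτ, hδ, e1, e2, hs⟩ := h
  refine dom_of_le hA hB (L := ∑ x, δ x) ?_
  have : ((∑ x, δ x : ℝ) : ℂ) • σ - ρ = ∑ y, ((∑ x, δ x - δ y : ℝ) : ℂ) • τ y := by
    rw [e1, e2, Finset.smul_sum, ← Finset.sum_sub_distrib]
    refine Finset.sum_congr rfl fun y _ => ?_
    rw [← sub_smul, Complex.ofReal_sub]
  rw [this]
  refine Matrix.posSemidef_sum _ fun y _ => psd_smul (hτ y) ?_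
  have := Finset.single_le_sum (f := δ) (fun x _ => hδ x) (Finset.mem_univ y)
  linarith

lemma RT_Qp {α g : ℝ} {ρ σ U V : Matrix n n ℂ} {r s : n → ℝ} (h : RT α g ρ σ) (hA : IsSp ρ U r)
    (hB : IsSp σ V s) (tr : rtr ρ = 1) {a : ℝ} (h0 : 0 < a) (h1 : a < 1) (h2 : a ≤ α - 1) :
    Qp U V r s a ≤ g ^ (a / (α - 1)) := by
  have hd := RT_dom h hA hB
  obtain ⟨X, _, τ, δ, hτ, hδ, e1, e2, hs⟩ := h
  subst e1 e2
  refine (Qp_reverse hτ hδ hA hB hd h0 h1).trans ?_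
  have hu : ∀ x, 0 ≤ rtr (τ x) * δ x := fun x => mul_nonneg (rtr_nonneg (hτ x)) (hδ x)
  have hsum : ∑ x, rtr (τ x) * δ x = 1 := by
    rw [← tr, rtr_sum]
    refine Finset.sum_congr rfl fun x _ => ?_
    rw [rtr_smul, mul_comm]
  refine (jensen_pow hu hsum hδ h0 h2).trans ?_
  have e : ∀ x, rtr (τ x) * δ x * δ x ^ (α - 1) = δ x ^ α * rtr (τ x) := by
    intro x
    rcases (hδ x).eq_or_lt with h | h
    · rw [← h, Real.zero_rpow (by linarith : α ≠ 0)]; simp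
    · rw [Real.rpow_sub h, Real.rpow_one]; field_simp
  refine Real.rpow_le_rpow (Finset.sum_nonneg fun x _ => mul_nonneg (hu x) (Real.rpow_nonneg (hδ x) _))
    ?_ (div_nonneg h0.le (by linarith))
  simp only [e]
  exact hs

lemma RT_kraus {α g : ℝ} {ρ σ : Matrix n n ℂ} (h : RT α g ρ σ) {Λ : Matrix n n ℂ →ₗ[ℂ] Matrix m m ℂ}
    (hΛ : IsQChannel Λ) : RT α g (Λ ρ) (Λ σ) := by
  obtain ⟨X, _, τ, δ, hτ, hδ, rfl, rfl, hs⟩ := h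
  obtain ⟨Y, _, K, hK⟩ := exists_kr hΛ
  refine ⟨X, inferInstance, fun x => Λ (τ x), δ, fun x => ?_, hδ, ?_, ?_, ?_⟩
  · dsimp only; rw [hK.1]; exact push_psd _ (hτ x)
  · simp only [map_sum, map_smul]
  · simp only [map_sum]
  · simp only [rtr, hΛ.1]
    exact hs

/-- partial trace -/
def ptr (τ : Matrix (n × R) (n × R) ℂ) : Matrix n n ℂ :=
  ∑ c, τ.submatrix (fun a => (a, c)) (fun a => (a, c))

lemma ptr_psd {τ : Matrix (n × R) (n × R) ℂ} (h : τ.PosSemidef) : (ptr τ).PosSemidef :=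
  Matrix.posSemidef_sum _ fun c _ => h.submatrix _

lemma ptr_mul (τ : Matrix (n × R) (n × R) ℂ) (H : Matrix n n ℂ) :
    rtr ((H ⊗ₖ (1 : Matrix R R ℂ)) * τ) = rtr (H * ptr τ) := by
  unfold rtr
  congr 1
  simp only [Matrix.trace, Matrix.diag_apply, Matrix.mul_apply, ptr, Matrix.sum_apply,
    Fintype.sum_prod_type, kronecker_apply, one_apply, submatrix_apply, Finset.mul_sum]
  refine Finset.sum_congr rfl fun a _ => ?_
  rw [Finset.sum_comm]
  simp
  exact Finset.sum_comm

lemma ptr_conj (τ : Matrix (n × R) (n × R) ℂ) (K : Matrix m n ℂ) :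
    rtr ((K ⊗ₖ (1 : Matrix R R ℂ)) * τ * (K ⊗ₖ (1 : Matrix R R ℂ))ᴴ) = rtr (K * ptr τ * Kᴴ) := by
  rw [rtr_mul_comm, rtr_mul_comm (K * ptr τ), ← Matrix.mul_assoc, ← Matrix.mul_assoc, ← ptr_mul,
    conjTranspose_kronecker, conjTranspose_one, ← mul_kronecker_mul, Matrix.mul_one]

lemma ptr_tr (τ : Matrix (n × R) (n × R) ℂ) : rtr (ptr τ) = rtr τ := by
  have := ptr_mul τ 1
  rw [one_kronecker_one, Matrix.one_mul, Matrix.one_mul] at this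
  exact this.symm

lemma RT_out [Nonempty n] {E F : Matrix n n ℂ →ₗ[ℂ] Matrix m m ℂ} (hE : IsQChannel E)
    (hF : IsQChannel F) {α : ℝ} (h1 : 1 < α) (hfin : chDiv (geomD α) E F ≠ ⊤)
    {ρ σ : Matrix (n × R) (n × R) ℂ} {g G : ℝ} (hg : 0 < g)
    (hG : (2:ℝ) ^ ((α - 1) * (chDiv (geomD α) E F).toReal) < G) (h : RT α g ρ σ) :
    RT α (G * g) (blockApplyRight E ρ) (blockApplyRight F σ) := by
  set G0 := (2:ℝ) ^ ((α - 1) * (chDiv (geomD α) E F).toReal) with hG0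
  have hG0p : 0 < G0 := by positivity
  obtain ⟨X, _, τ, δ, hτ, hδ, rfl, rfl, hs⟩ := h
  set θ : Matrix n n ℂ := ∑ x, ((δ x ^ α : ℝ) : ℂ) • ptr (τ x) with hθ
  have hδa : ∀ x, 0 ≤ δ x ^ α := fun x => Real.rpow_nonneg (hδ x) _
  have hθp : θ.PosSemidef :=
    Matrix.posSemidef_sum _ fun x _ => psd_smul (ptr_psd (hτ x)) (hδa x)
  have hθt : rtr θ ≤ g := by
    rw [hθ, rtr_sum]
    refine le_trans (le_of_eq ?_) hs
    refine Finset.sum_congr rfl fun x _ => ?_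
    rw [rtr_smul, ptr_tr]
  obtain ⟨Y, _, K, ε, hKF, hε, hKE, hb⟩ := sim_kraus hE hF h1 hfin hθp
    (η := g * (G - G0) / G0) (by have : 0 < G - G0 := by linarith
                                 positivity)
  refine ⟨X × Y, inferInstance, fun p => (K p.2 ⊗ₖ (1 : Matrix R R ℂ)) * τ p.1 *
    (K p.2 ⊗ₖ (1 : Matrix R R ℂ))ᴴ, fun p => δ p.1 * ε p.2,
    fun p => (hτ p.1).mul_mul_conjTranspose_same _, fun p => mul_nonneg (hδ _) (hε _), ?_, ?_, ?_⟩
  · rw [bar_kraus hKE, Fintype.sum_prod_type, Finset.sum_comm]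
    refine Finset.sum_congr rfl fun y _ => ?_
    rw [Matrix.mul_sum, Matrix.sum_mul, Finset.smul_sum]
    refine Finset.sum_congr rfl fun x _ => ?_
    rw [Matrix.mul_smul, Matrix.smul_mul, smul_smul, Complex.ofReal_mul, mul_comm]
  · rw [bar_kraus1 hKF, Fintype.sum_prod_type, Finset.sum_comm]
    refine Finset.sum_congr rfl fun y _ => ?_
    rw [Matrix.mul_sum, Matrix.sum_mul]
  · calc _ = ∑ y, ε y ^ α * rtr (K y * θ * (K y)ᴴ) := by
          rw [Fintype.sum_prod_type, Finset.sum_comm]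
          refine Finset.sum_congr rfl fun y _ => ?_
          rw [hθ, Matrix.mul_sum, Matrix.sum_mul, rtr_sum, Finset.mul_sum]
          refine Finset.sum_congr rfl fun x _ => ?_
          dsimp only
          rw [ptr_conj, Matrix.mul_smul, Matrix.smul_mul, rtr_smul, Real.mul_rpow (hδ x) (hε y)]
          ring
      _ ≤ _ := hb
      _ ≤ G0 * (g + g * (G - G0) / G0) := mul_le_mul_of_nonneg_left (by linarith) hG0p.le
      _ = G * g := by field_simp; ring

lemma bar_trace {Φ : Matrix n n ℂ →ₗ[ℂ] Matrix m m ℂ} (h : ∀ M, (Φ M).trace = M.trace)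
    (ρ : Matrix (n × R) (n × R) ℂ) : (blockApplyRight Φ ρ).trace = ρ.trace := by
  simp only [Matrix.trace, Matrix.diag_apply, blockApplyRight, Matrix.of_apply, Fintype.sum_prod_type]
  rw [Finset.sum_comm, Finset.sum_comm (s := (Finset.univ : Finset n))]
  refine Finset.sum_congr rfl fun c _ => ?_
  exact h (Matrix.of fun a b => ρ (a, c) (b, c))

end P11

section P12
variable {dA dB : ℕ} {E F : Matrix (Fin dA) (Fin dA) ℂ →ₗ[ℂ] Matrix (Fin dB) (Fin dB) ℂ}

lemma stateAt_trace (hE : IsQChannel E) (P : AdaptiveProtocol dA dB) (i : ℕ) :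
    (P.stateAt E i).trace = 1 := by
  induction i with
  | zero => exact P.init_isState.2
  | succ i ih =>
    show (P.prep i (blockApplyRight E (P.stateAt E i))).trace = 1
    rw [(P.prep_isChannel i).1, bar_trace hE.1, ih]

lemma nonempty_A (P : AdaptiveProtocol dA dB) : Nonempty (Fin dA) := by
  by_contra h
  rw [not_nonempty_iff] at h
  have := P.init_isState.2
  rw [Matrix.trace, Finset.univ_eq_empty] at this
  simp at this

lemma RT_stateAt (hE : IsQChannel E) (hF : IsQChannel F) {α : ℝ} (h1 : 1 < α)
    (hfin : chDiv (geomD α) E F ≠ ⊤) {G : ℝ}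
    (hG : (2:ℝ) ^ ((α - 1) * (chDiv (geomD α) E F).toReal) < G)
    (P : AdaptiveProtocol dA dB) (i : ℕ) : RT α (G ^ i) (P.stateAt E i) (P.stateAt F i) := by
  haveI := nonempty_A P
  have hGp : 0 < G := lt_trans (by positivity) hG
  induction i with
  | zero => rw [pow_zero]; exact RT_init P.init_isState α
  | succ i ih =>
    rw [pow_succ, mul_comm]
    exact RT_kraus (RT_out hE hF h1 hfin (by positivity) hG ih) (P.prep_isChannel i)

end P12

section P13
variable {n : Type} [Fintype n] [DecidableEq n]

lemma dH_ge {ε b : ℝ} {ω τ T : Matrix n n ℂ} (hτ : τ.PosSemidef) (hT : T.PosSemidef)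
    (hT' : (1 - T).PosSemidef) (h : 1 - ε ≤ rtr (T * ω)) (hb : rtr (T * τ) ≤ b) (hb0 : 0 < b) :
    ((-Real.logb 2 b : ℝ) : EReal) ≤ dH ε ω τ := by
  unfold dH
  set S := {x : ℝ | ∃ T : Matrix n n ℂ,
      T.PosSemidef ∧ ((1 : Matrix n n ℂ) - T).PosSemidef ∧ 1 - ε ≤ rtr (T * ω) ∧ x = rtr (T * τ)} with hS
  have hle : sInf S ≤ b := by
    refine le_trans (csInf_le ⟨0, ?_⟩ ⟨T, hT, hT', h, rfl⟩) hb
    rintro x ⟨T', h1, -, -, rfl⟩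
    exact rtr_mul_nonneg h1 hτ
  unfold elog
  split_ifs with h0
  · simp
  · push Not at h0
    rw [← EReal.coe_neg, EReal.coe_le_coe_iff]
    have := Real.logb_le_logb_of_le (b := 2) (by norm_num) h0 hle
    linarith

lemma dH_le {ε b : ℝ} {ω τ : Matrix n n ℂ} (hω : rtr ω = 1) (hε : 0 < ε)
    (hb0 : 0 < b) (h : ∀ T : Matrix n n ℂ, T.PosSemidef → (1 - T).PosSemidef → 1 - ε ≤ rtr (T * ω) →
      b ≤ rtr (T * τ)) :
    dH ε ω τ ≤ ((-Real.logb 2 b : ℝ) : EReal) := by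
  unfold dH
  set S := {x : ℝ | ∃ T : Matrix n n ℂ,
      T.PosSemidef ∧ ((1 : Matrix n n ℂ) - T).PosSemidef ∧ 1 - ε ≤ rtr (T * ω) ∧ x = rtr (T * τ)} with hS
  have hle : b ≤ sInf S := by
    refine le_csInf ⟨rtr (1 * τ), 1, Matrix.PosSemidef.one, by rw [sub_self]; exact Matrix.PosSemidef.zero,
      by rw [Matrix.one_mul, hω]; linarith, rfl⟩ ?_
    rintro x ⟨T', h1, h2, h3, rfl⟩
    exact h T' h1 h2 h3
  unfold elog
  rw [if_neg (not_le.2 (hb0.trans_le hle)), ← EReal.coe_neg, EReal.coe_le_coe_iff]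
  have := Real.logb_le_logb_of_le (b := 2) (by norm_num) hb0 hle
  linarith

lemma RT_le {α g : ℝ} {ρ σ : Matrix n n ℂ} (h : RT α g ρ σ) :
    ∃ L : ℝ, ((L : ℂ) • σ - ρ).PosSemidef := by
  obtain ⟨X, _, τ, δ, hτ, hδ, e1, e2, hs⟩ := h
  refine ⟨∑ x, δ x, ?_⟩
  have : ((∑ x, δ x : ℝ) : ℂ) • σ - ρ = ∑ y, ((∑ x, δ x - δ y : ℝ) : ℂ) • τ y := by
    rw [e1, e2, Finset.smul_sum, ← Finset.sum_sub_distrib]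
    refine Finset.sum_congr rfl fun y _ => ?_
    rw [← sub_smul, Complex.ofReal_sub]
  rw [this]
  refine Matrix.posSemidef_sum _ fun y _ => psd_smul (hτ y) ?_
  have := Finset.single_le_sum (f := δ) (fun x _ => hδ x) (Finset.mem_univ y)
  linarith

lemma conv_real {p q γ Q : ℝ} (hp : 0 < p) (hp1 : p < 1) (hq : 0 < q) (hq1 : q < 1) (h0 : 0 < γ)
    (h : p * (p / q) ^ γ + (1 - p) * ((1 - p) / (1 - q)) ^ γ ≤ Q) :
    p * (- Real.log q) + p * Real.log p + (1 - p) * Real.log (1 - p) ≤ γ⁻¹ * Real.log Q := by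
  have hp' : 0 < 1 - p := by linarith
  have hq' : 0 < 1 - q := by linarith
  have x1 : 0 < (p / q) ^ γ := by positivity
  have x2 : 0 < ((1 - p) / (1 - q)) ^ γ := by positivity
  have hc := strictConcaveOn_log_Ioi.concaveOn.2 (Set.mem_Ioi.2 x1) (Set.mem_Ioi.2 x2) hp.le hp'.le
    (by ring)
  simp only [smul_eq_mul] at hc
  have hm := Real.log_le_log (by positivity) h
  have l1 : Real.log ((p / q) ^ γ) = γ * (Real.log p - Real.log q) := by
    rw [Real.log_rpow (by positivity), Real.log_div hp.ne' hq.ne']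
  have l2 : Real.log (((1 - p) / (1 - q)) ^ γ) = γ * (Real.log (1 - p) - Real.log (1 - q)) := by
    rw [Real.log_rpow (by positivity), Real.log_div hp'.ne' hq'.ne']
  rw [l1, l2] at hc
  have l3 : Real.log (1 - q) ≤ 0 := Real.log_nonpos hq'.le (by linarith)
  have : γ * (p * (- Real.log q) + p * Real.log p + (1 - p) * Real.log (1 - p)) ≤ Real.log Q := by
    have : 0 ≤ γ * ((1 - p) * (- Real.log (1 - q))) :=
      mul_nonneg h0.le (mul_nonneg hp'.le (by linarith))
    nlinarith
  rw [inv_mul_eq_div, le_div_iff₀ h0]; linarith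

lemma weak_conv {α g : ℝ} {ω τ U V : Matrix n n ℂ} {r s : n → ℝ} (hRT : RT α g ω τ)
    (hA : IsSp ω U r) (hB : IsSp τ V s) (tA : rtr ω = 1) (tB : rtr τ = 1)
    {γ ε : ℝ} (h0 : 0 < γ) (h1 : γ < 1) (he : 0 < ε) (he1 : ε < 1) :
    dH ε ω τ ≤ (((1 - ε)⁻¹ * ((γ⁻¹ * Real.log (Qp U V r s γ)) / Real.log 2 + binEnt ε) : ℝ) : EReal) := by
  set D := (1 - ε)⁻¹ * ((γ⁻¹ * Real.log (Qp U V r s γ)) / Real.log 2 + binEnt ε) with hD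
  have hl2 : 0 < Real.log 2 := Real.log_pos (by norm_num)
  have key := dH_le (b := (2:ℝ) ^ (-D)) tA he (by positivity) (τ := τ) (ω := ω) ?_
  · rw [Real.logb_rpow (by norm_num) (by norm_num), neg_neg] at key
    exact key
  · intro T hT hT' hp
    obtain ⟨L, hL⟩ := RT_le hRT
    have hdom : ∀ S : Matrix n n ℂ, S.PosSemidef → rtr (S * ω) ≤ L * rtr (S * τ) := by
      intro S hS
      have := rtr_mul_le hS hL
      rwa [Matrix.mul_smul, rtr_smul] at this
    set p := rtr (T * ω) with hpd
    have hp0 : 0 < p := by linarith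
    set c := (1 - ε) / p with hc
    have hc0 : 0 < c := div_pos (by linarith) hp0
    have hc1 : c ≤ 1 := (div_le_one hp0).2 hp
    have hT2 : ((c : ℂ) • T).PosSemidef := psd_smul hT hc0.le
    have hT2' : (1 - (c : ℂ) • T).PosSemidef := by
      have e : 1 - (c : ℂ) • T = ((1 - c : ℝ) : ℂ) • (1 : Matrix n n ℂ) + (c : ℂ) • (1 - T) := by
        rw [smul_sub, Complex.ofReal_sub, sub_smul]; simp
      rw [e]
      exact (psd_smul Matrix.PosSemidef.one (by linarith)).add (psd_smul hT' hc0.le)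
    have hp2 : rtr (((c : ℂ) • T) * ω) = 1 - ε := by
      rw [Matrix.smul_mul, rtr_smul, ← hpd, hc]; field_simp
    set q := rtr (((c : ℂ) • T) * τ) with hq
    have hq0 : 0 ≤ q := rtr_mul_nonneg hT2 hB.psd
    have hqp : 0 < q := by
      rcases hq0.eq_or_lt with h | h
      · have := hdom _ hT2
        rw [hp2, ← hq, ← h] at this; linarith
      · exact h
    have f1 : rtr ((1 - (c : ℂ) • T) * ω) = ε := by
      rw [Matrix.sub_mul, rtr_sub, hp2, Matrix.one_mul, tA]; ring
    have f2 : rtr ((1 - (c : ℂ) • T) * τ) = 1 - q := by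
      rw [Matrix.sub_mul, rtr_sub, ← hq, Matrix.one_mul, tB]
    have hq1 : 0 ≤ 1 - q := by rw [← f2]; exact rtr_mul_nonneg hT2' hB.psd
    have hq1p : q < 1 := by
      rcases hq1.eq_or_lt with h | h
      · have := hdom _ hT2'
        rw [f1, f2, ← h] at this; linarith
      · linarith
    have hb := Qp_binary hA hB (RT_dom hRT hA hB) hT2 hT2' (p := 1 - ε) (p' := 1 - (1 - ε)) (q := q)
      (q' := 1 - q) hp2.symm (by rw [tA]) hq (by rw [tB]) hqp (by linarith) (by linarith) (by linarith)
      h0 h1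
    have hcr := conv_real (by linarith) (by linarith) hqp hq1p h0 hb
    have e1 : (1 : ℝ) - (1 - ε) = ε := by ring
    rw [e1] at hcr
    have hqq : q ≤ rtr (T * τ) := by
      rw [hq, Matrix.smul_mul, rtr_smul]
      have := rtr_mul_nonneg hT hB.psd
      nlinarith
    refine le_trans ?_ hqq
    rw [← Real.logb_le_logb (b := 2) (by norm_num) (by positivity) hqp,
      Real.logb_rpow (by norm_num) (by norm_num)]
    have he' : 0 < 1 - ε := by linarith
    rw [hD, binEnt]
    simp only [Real.logb]
    rw [neg_le, inv_mul_eq_div, le_div_iff₀ he']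
    have : (γ⁻¹ * Real.log (Qp U V r s γ)) / Real.log 2 +
        (-(ε * (Real.log ε / Real.log 2)) - (1 - ε) * (Real.log (1 - ε) / Real.log 2)) =
        (γ⁻¹ * Real.log (Qp U V r s γ) - ε * Real.log ε - (1 - ε) * Real.log (1 - ε)) / Real.log 2 := by
      field_simp
      ring
    rw [this, le_div_iff₀ hl2]
    have : -(Real.log q / Real.log 2) * (1 - ε) * Real.log 2 = (1 - ε) * (-Real.log q) := by
      field_simp
    rw [this]; linarith

end P13

section P14
variable {dA dB : ℕ} {E F : Matrix (Fin dA) (Fin dA) ℂ →ₗ[ℂ] Matrix (Fin dB) (Fin dB) ℂ}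

lemma chain (hE : IsQChannel E) (hF : IsQChannel F) {α : ℝ} (h1 : 1 < α)
    (hfin : chDiv (geomD α) E F ≠ ⊤) {G : ℝ}
    (hG : (2:ℝ) ^ ((α - 1) * (chDiv (geomD α) E F).toReal) < G)
    (P : AdaptiveProtocol dA dB) {n m : ℕ} (hm : 1 ≤ m) {a γ αp d : ℝ} (ha0 : 0 < a) (ha1 : a < 1)
    (has : a ≤ α - 1) (hg0 : 0 < γ) (hga : γ ≤ a)
    (hn : ∀ i ≤ n, (G ^ i) ^ (a / (α - 1)) ≤ 2) (hp0 : 0 < αp) (hp1 : αp < 1)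
    (hd : ∀ ν : Matrix (tpow (Fin dA) m × tpow (Fin dA) m) (tpow (Fin dA) m × tpow (Fin dA) m) ℂ,
      IsState ν → dH αp (blockApplyRight (tpowChannel E m) ν) (blockApplyRight (tpowChannel F m) ν) <
        (d : EReal)) (i : ℕ) (hi : i < n) :
    ∀ (U V : Matrix (Fin dB × Fin (P.r i)) (Fin dB × Fin (P.r i)) ℂ) (r s : Fin dB × Fin (P.r i) → ℝ),
      IsSp (blockApplyRight E (P.stateAt E i)) U r → IsSp (blockApplyRight F (P.stateAt F i)) V s →
      γ⁻¹ * Real.log (Qp U V r s γ) ≤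
        (i + 1) * (γ / a ^ 2 + (m * γ)⁻¹ * Real.log (32 / αp ^ 3) + Real.log 2 * d / m) := by
  haveI := nonempty_A P
  have hGp : 0 < G := lt_trans (by positivity) hG
  have hg1 : γ < 1 := by linarith
  set κ := (γ / a ^ 2 + (m * γ)⁻¹ * Real.log (32 / αp ^ 3) + Real.log 2 * d / m) with hκ
  have hmp : (0:ℝ) < m := by exact_mod_cast hm
  obtain ⟨X1, _, K1, hK1⟩ := exists_kr hE
  obtain ⟨X2, _, K2, hK2⟩ := exists_kr hF
  have tY : ∀ {Φ : Matrix (Fin dA) (Fin dA) ℂ →ₗ[ℂ] Matrix (Fin dB) (Fin dB) ℂ} (h : IsQChannel Φ) i,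
      (blockApplyRight Φ (P.stateAt Φ i)).trace = 1 := fun h i => by
    rw [bar_trace h.1, stateAt_trace h]
  -- one step
  have one : ∀ i < n, ∀ (U0 V0 : Matrix (Fin dA × Fin (P.r i)) (Fin dA × Fin (P.r i)) ℂ)
      (r0 s0 : Fin dA × Fin (P.r i) → ℝ) (U V : Matrix (Fin dB × Fin (P.r i)) (Fin dB × Fin (P.r i)) ℂ)
      (r s : Fin dB × Fin (P.r i) → ℝ),
      IsSp (P.stateAt E i) U0 r0 → IsSp (P.stateAt F i) V0 s0 →
      IsSp (blockApplyRight E (P.stateAt E i)) U r → IsSp (blockApplyRight F (P.stateAt F i)) V s →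
      γ⁻¹ * Real.log (Qp U V r s γ) ≤ γ⁻¹ * Real.log (Qp U0 V0 r0 s0 γ) + κ := by
    intro i hi U0 V0 r0 s0 U V r s hA hB hA' hB'
    have rt0 := RT_stateAt hE hF h1 hfin hG P i
    have rt1 := RT_out hE hF h1 hfin (by positivity) hG rt0
    rw [← pow_succ'] at rt1
    have tr0E : rtr (P.stateAt E i) = 1 := by rw [rtr, stateAt_trace hE]; simp
    have tr0F : rtr (P.stateAt F i) = 1 := by rw [rtr, stateAt_trace hF]; simp
    have tr1E : rtr (blockApplyRight E (P.stateAt E i)) = 1 := by rw [rtr, tY hE]; simp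
    have tr1F : rtr (blockApplyRight F (P.stateAt F i)) = 1 := by rw [rtr, tY hF]; simp
    have q0 := (RT_Qp rt0 hA hB tr0E ha0 ha1 has).trans (hn i hi.le)
    have q1 := (RT_Qp rt1 hA' hB' tr1E ha0 ha1 has).trans (hn (i+1) hi)
    have d0 := RT_dom rt0 hA hB
    have d1 := RT_dom rt1 hA' hB'
    obtain ⟨p0, -, -⟩ := Q_gap hA hB d0 tr0E tr0F ha0 ha1 hg0 hga q0
    obtain ⟨p1, m1, gap⟩ := Q_gap hA' hB' d1 tr1E tr1F ha0 ha1 hg0 hga q1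
    obtain ⟨ν, hν, T, hT, hT', e1, e2⟩ := step hK1 hK2 hA hB (stateAt_trace hE P i) d0 hA' hB'
      (tY hE i) hg0 hg1 hp0 hp1 p0 m1 m
    obtain ⟨Z', _, L', hL'⟩ := tpow_kr hK2 m
    have hps : (blockApplyRight (tpowChannel F m) ν).PosSemidef := by
      rw [bar_kraus1 hL']; exact push_psd _ hν.1
    have hge := (dH_ge hps hT hT' e1 e2 (by positivity)).trans_lt (hd ν hν)
    rw [EReal.coe_lt_coe_iff, Real.logb_rpow_eq_mul_logb_of_pos (by positivity)] at hge
    set x := Qp U0 V0 r0 s0 γ with hx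
    set y := Qm U V r s γ with hy
    set z := Qp U V r s γ with hz
    have hlog : Real.log (32 * x ^ m * y ^ m / αp ^ 3) =
        Real.log (32 / αp ^ 3) + m * Real.log x + m * Real.log y := by
      have : 32 * x ^ m * y ^ m / αp ^ 3 = (32 / αp ^ 3) * x ^ m * y ^ m := by ring
      rw [this, Real.log_mul (by positivity) (by positivity), Real.log_mul (by positivity) (by positivity),
        Real.log_pow, Real.log_pow]
    rw [Real.logb, hlog] at hge
    have hl2 : 0 < Real.log 2 := Real.log_pos (by norm_num)
    have h3 : -(Real.log (32 / αp ^ 3) + m * Real.log x + m * Real.log y) ≤ γ * (Real.log 2 * d) := by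
      have : -(γ⁻¹ * ((Real.log (32 / αp ^ 3) + m * Real.log x + m * Real.log y) / Real.log 2)) =
        -(Real.log (32 / αp ^ 3) + m * Real.log x + m * Real.log y) / (γ * Real.log 2) := by
          field_simp
      rw [this, div_lt_iff₀ (by positivity)] at hge
      nlinarith
    rw [hκ]
    have h4 : -Real.log y ≤ Real.log x + (Real.log (32 / αp ^ 3) + γ * (Real.log 2 * d)) / m := by
      have : (m:ℝ) * (-Real.log y) ≤ m * (Real.log x + (Real.log (32 / αp ^ 3) + γ * (Real.log 2 * d)) / m) := by
        rw [mul_add, mul_div_cancel₀ _ hmp.ne']; linarith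
      exact le_of_mul_le_mul_left this hmp
    have h5 : Real.log z ≤ Real.log x + (Real.log (32 / αp ^ 3) + γ * (Real.log 2 * d)) / m + (γ / a) ^ 2 := by
      linarith
    calc γ⁻¹ * Real.log z ≤ γ⁻¹ * (Real.log x + (Real.log (32 / αp ^ 3) + γ * (Real.log 2 * d)) / m + (γ / a) ^ 2) :=
          mul_le_mul_of_nonneg_left h5 (by positivity)
      _ = _ := by field_simp; ring
  induction i with
  | zero =>
    intro U V r s hA' hB'
    obtain ⟨U0, r0, hA⟩ := exists_isSp P.init_isState.1
    have h2 := one 0 hi U0 U0 r0 r0 U V r s hA hA hA' hB'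
    have h3 := RT_Qp (RT_init P.init_isState α) hA hA (by rw [rtr, P.init_isState.2]; simp) hg0 hg1
      (hga.trans has)
    rw [Real.one_rpow] at h3
    have h4 : 0 ≤ Qp U0 U0 r0 r0 γ := by
      unfold Qp
      exact Finset.sum_nonneg fun i _ => mul_nonneg (mul_nonneg (ov_nonneg _ _ _ _) (hA.2.2.1 _))
        (Real.rpow_nonneg (div_nonneg (hA.2.2.1 _) (hA.2.2.1 _)) _)
    have h5 := mul_nonpos_of_nonneg_of_nonpos (inv_nonneg.2 hg0.le) (Real.log_nonpos h4 h3)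
    push_cast
    linarith
  | succ i ih =>
    intro U V r s hA' hB'
    have rt0 := RT_stateAt hE hF h1 hfin hG P (i+1)
    have rtX := RT_out hE hF h1 hfin (by positivity) hG (RT_stateAt hE hF h1 hfin hG P i)
    obtain ⟨U0, r0, hA⟩ := exists_isSp (RT_psd rt0).1
    obtain ⟨V0, s0, hB⟩ := exists_isSp (RT_psd rt0).2
    obtain ⟨U1, r1, hA1⟩ := exists_isSp (RT_psd rtX).1
    obtain ⟨V1, s1, hB1⟩ := exists_isSp (RT_psd rtX).2
    have h2 := one (i+1) hi U0 V0 r0 s0 U V r s hA hB hA' hB'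
    have h3 := ih (by omega) U1 V1 r1 s1 hA1 hB1
    obtain ⟨X3, _, K3, hK3⟩ := exists_kr (P.prep_isChannel i)
    have d0 := RT_dom rt0 hA hB
    have dX := RT_dom rtX hA1 hB1
    have hA2 : IsSp (∑ k, K3 k * blockApplyRight E (P.stateAt E i) * (K3 k)ᴴ) U0 r0 := by
      rw [← hK3.1]; exact hA
    have hB2 : IsSp (∑ k, K3 k * blockApplyRight F (P.stateAt F i) * (K3 k)ᴴ) V0 s0 := by
      rw [← hK3.1]; exact hB
    have h4 := Qp_dpi hK3.2 hA1 hB1 hA2 hB2 dX d0 hg0 hg1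
    have tr0E : rtr (P.stateAt E (i+1)) = 1 := by rw [rtr, stateAt_trace hE]; simp
    have tr0F : rtr (P.stateAt F (i+1)) = 1 := by rw [rtr, stateAt_trace hF]; simp
    obtain ⟨p0, -, -⟩ := Q_gap hA hB d0 tr0E tr0F ha0 ha1 hg0 hga
      ((RT_Qp rt0 hA hB tr0E ha0 ha1 has).trans (hn (i+1) hi.le))
    have h5 := mul_le_mul_of_nonneg_left (Real.log_le_log p0 h4) (inv_nonneg.2 hg0.le)
    push_cast
    linarith

end P14

section P15
variable {dA dB : ℕ} {E F : Matrix (Fin dA) (Fin dA) ℂ →ₗ[ℂ] Matrix (Fin dB) (Fin dB) ℂ}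

lemma params (hfin : ∃ α : ℝ, (1 < α ∧ α ≤ 2) ∧ chDiv (geomD α) E F < ⊤) :
    ∃ c : ℝ, Cconst E F = 4 * c ∧ 2 ≤ c ∧ ∃ α : ℝ, 1 < α ∧ α ≤ 2 ∧ chDiv (geomD α) E F ≠ ⊤ ∧
      Real.logb 2 ((2:ℝ) ^ ((α - 1) * (chDiv (geomD α) E F).toReal) + 2) < (α - 1) * c := by
  set f : {a : ℝ // 1 < a ∧ a ≤ 2} → EReal := fun α =>
      (if chDiv (geomD α.1) E F = ⊤ then (⊤ : EReal)
       else (((α.1 - 1)⁻¹ *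
          Real.logb 2 ((2:ℝ) ^ ((α.1 - 1) * (chDiv (geomD α.1) E F).toReal) + 2) : ℝ) :
            EReal)) with hf
  have hC : Cconst E F = 8 * (⨅ α, f α).toReal := rfl
  have h1 : (1 : EReal) ≤ ⨅ α, f α := by
    refine le_iInf fun α => ?_
    simp only [hf]
    split_ifs with h
    · exact le_top
    · obtain ⟨a, ha, ha2⟩ := α
      rw [← EReal.coe_one, EReal.coe_le_coe_iff]
      have i1 : 1 ≤ (a - 1)⁻¹ := (one_le_inv₀ (by linarith)).2 (by linarith)
      have hp : (0:ℝ) < (2:ℝ) ^ ((a - 1) * (chDiv (geomD a) E F).toReal) := by positivity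
      have i2 : 1 ≤ Real.logb 2 ((2:ℝ) ^ ((a - 1) * (chDiv (geomD a) E F).toReal) + 2) := by
        rw [Real.le_logb_iff_rpow_le (by norm_num) (by linarith), Real.rpow_one]; linarith
      show 1 ≤ (a - 1)⁻¹ * Real.logb 2 ((2:ℝ) ^ ((a - 1) * (chDiv (geomD a) E F).toReal) + 2)
      nlinarith
  have ht : (⨅ α, f α) ≠ ⊤ := by
    obtain ⟨α, hα, hα'⟩ := hfin
    refine ne_top_of_le_ne_top ?_ (iInf_le f ⟨α, hα⟩)
    simp only [hf, if_neg hα'.ne]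
    exact EReal.coe_ne_top _
  have hb : (⨅ α, f α) ≠ ⊥ := by
    intro h; rw [h] at h1
    exact absurd (le_bot_iff.1 h1) (by rw [← EReal.coe_one]; exact EReal.coe_ne_bot _)
  obtain ⟨I, hI⟩ : ∃ I : ℝ, (⨅ α, f α) = (I : EReal) := ⟨_, (EReal.coe_toReal ht hb).symm⟩
  have hI1 : 1 ≤ I := by rw [hI, ← EReal.coe_one, EReal.coe_le_coe_iff] at h1; exact h1
  refine ⟨2 * I, by rw [hC, hI, EReal.toReal_coe]; ring, by linarith, ?_⟩
  have hlt : (⨅ α, f α) < ((2 * I : ℝ) : EReal) := by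
    rw [hI, EReal.coe_lt_coe_iff]; linarith
  obtain ⟨⟨a, ha, ha2⟩, hlt⟩ := iInf_lt_iff.1 hlt
  refine ⟨a, ha, ha2, ?_⟩
  simp only [hf] at hlt
  split_ifs at hlt with h
  · exact absurd hlt not_top_lt
  · refine ⟨h, ?_⟩
    rw [EReal.coe_lt_coe_iff, inv_mul_lt_iff₀ (by linarith)] at hlt
    exact hlt

lemma final_real {c αp μ : ℝ} {n m : ℕ} (hc : 2 ≤ c) (hn : 1 ≤ n) (hm : 1 ≤ m) (hp0 : 0 < αp)
    (hp1 : αp < 1) (hμ : 0 < μ) {a γ : ℝ} (ha : a = 1 / (n * c)) (hγ : γ = a / Real.sqrt m) :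
    (γ / a ^ 2 + (m * γ)⁻¹ * Real.log (32 / αp ^ 3)) / Real.log 2 <
      (4 * c * n / Real.sqrt m) * Real.logb 2 (8 / αp) +
            (m : ℝ)⁻¹ * (Real.logb 2 (1 / αp) - Real.logb 2 (1 - αp / 4) + μ) := by
  have hl2 : 0 < Real.log 2 := Real.log_pos (by norm_num)
  have hn0 : (0:ℝ) < n := by exact_mod_cast hn
  have hm0 : (0:ℝ) < m := by exact_mod_cast hm
  set w := Real.sqrt m with hw
  have hw0 : 0 < w := Real.sqrt_pos.2 hm0
  have hww : (m:ℝ) = w * w := (Real.mul_self_sqrt hm0.le).symm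
  have hlp : Real.log αp < 0 := Real.log_neg hp0 hp1
  have e1 : γ / a ^ 2 + (m * γ)⁻¹ * Real.log (32 / αp ^ 3) =
      (n * c / w) * (1 + (5 * Real.log 2 - 3 * Real.log αp)) := by
    have : Real.log (32 / αp ^ 3) = 5 * Real.log 2 - 3 * Real.log αp := by
      rw [Real.log_div (by norm_num) (by positivity), Real.log_pow, show (32:ℝ) = 2 ^ 5 by norm_num,
        Real.log_pow]
      push_cast; ring
    rw [this, hγ, ha, hww]
    field_simp
  have e2 : Real.logb 2 (8 / αp) = 3 - Real.log αp / Real.log 2 := by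
    rw [Real.logb, Real.log_div (by norm_num) (by positivity), show (8:ℝ) = 2 ^ 3 by norm_num,
        Real.log_pow]
    push_cast; field_simp
  have e3 : 0 < Real.logb 2 (1 / αp) := Real.logb_pos (by norm_num) (by rw [lt_div_iff₀ hp0]; linarith)
  have e4 : Real.logb 2 (1 - αp / 4) ≤ 0 := Real.logb_nonpos (by norm_num) (by linarith) (by linarith)
  have e5 : 0 < (m : ℝ)⁻¹ * (Real.logb 2 (1 / αp) - Real.logb 2 (1 - αp / 4) + μ) :=
    mul_pos (by positivity) (by linarith)
  have e6 : (n * c / w) * (1 + (5 * Real.log 2 - 3 * Real.log αp)) / Real.log 2 ≤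
      (4 * c * n / w) * (3 - Real.log αp / Real.log 2) := by
    have hK : 0 < n * c / w := by positivity
    have : (4 * c * n / w) * (3 - Real.log αp / Real.log 2) =
       (n * c / w) * (12 * Real.log 2 - 4 * Real.log αp) / Real.log 2 := by
      field_simp; ring
    rw [this]
    have := Real.log_two_gt_d9
    gcongr
    linarith
  rw [e1, e2]; linarith

end P15

section P16
variable {dA dB : ℕ} {E F : Matrix (Fin dA) (Fin dA) ℂ →ₗ[ℂ] Matrix (Fin dB) (Fin dB) ℂ}

lemma main_aux (hE : IsQChannel E) (hF : IsQChannel F)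
    (hfin : ∃ α : ℝ, (1 < α ∧ α ≤ 2) ∧ chDiv (geomD α) E F < ⊤)
    (P : AdaptiveProtocol dA dB) (n : ℕ) (hn : 1 ≤ n)
    (αa αp : ℝ) (hαa : 0 < αa ∧ αa < 1) (hαp : 0 < αp ∧ αp < 1)
    (μ : ℝ) (hμ : 0 < μ) (m : ℕ) (hm : 1 ≤ m) :
    ∃ ν : Matrix (tpow (Fin dA) m × tpow (Fin dA) m) (tpow (Fin dA) m × tpow (Fin dA) m) ℂ,
      IsState ν ∧
      (((n : ℝ)⁻¹ : ℝ) : EReal) * dH αa (P.finalState E n) (P.finalState F n) ≤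
        ((((1 - αa)⁻¹ * (m : ℝ)⁻¹ : ℝ)) : EReal) *
          dH αp (blockApplyRight (tpowChannel E m) ν) (blockApplyRight (tpowChannel F m) ν) +
        ((((1 - αa)⁻¹ * ((Cconst E F * n / Real.sqrt m) * Real.logb 2 (8 / αp) +
            (m : ℝ)⁻¹ * (Real.logb 2 (1 / αp) - Real.logb 2 (1 - αp / 4) + μ) +
            binEnt αa / n) : ℝ)) : EReal) := by
  haveI := nonempty_A P
  obtain ⟨c, hC, hc2, α, h1, h2, hch, hlog⟩ := params hfin
  obtain ⟨i, rfl⟩ : ∃ i, n = i + 1 := ⟨n - 1, by omega⟩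
  obtain ⟨ha0, ha1⟩ := hαa
  obtain ⟨hp0, hp1⟩ := hαp
  set G0 := (2:ℝ) ^ ((α - 1) * (chDiv (geomD α) E F).toReal) with hG0
  have hG0p : 0 < G0 := by positivity
  have hs : 0 < α - 1 := by linarith
  have hn0 : (0:ℝ) < ((i + 1 : ℕ) : ℝ) := by positivity
  have hn1 : (1:ℝ) ≤ ((i + 1 : ℕ) : ℝ) := by exact_mod_cast hn
  have hm0 : (0:ℝ) < m := by exact_mod_cast hm
  have hm1 : (1:ℝ) ≤ m := by exact_mod_cast hm
  have hsc : 1 < (α - 1) * c := by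
    refine lt_of_le_of_lt ?_ hlog
    rw [Real.le_logb_iff_rpow_le (by norm_num) (by linarith), Real.rpow_one]; linarith
  set G := (2:ℝ) ^ ((α - 1) * c) - 2 with hGd
  have hG : G0 < G := by
    rw [Real.logb_lt_iff_lt_rpow (by norm_num) (by linarith)] at hlog
    linarith
  have hGp : 0 < G := by linarith
  set a : ℝ := 1 / (((i + 1 : ℕ) : ℝ) * c) with ha
  set γ : ℝ := a / Real.sqrt m with hγ
  have hac0 : 0 < ((i + 1 : ℕ) : ℝ) * c := by positivity
  have haP : 0 < a := by positivity
  have hw0 : 0 < Real.sqrt m := Real.sqrt_pos.2 hm0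
  have hw1 : 1 ≤ Real.sqrt m := Real.one_le_sqrt.2 hm1
  have hal1 : a < 1 := by rw [ha, div_lt_one hac0]; nlinarith
  have has : a ≤ α - 1 := by rw [ha, div_le_iff₀ hac0]; nlinarith
  have hg0 : 0 < γ := by positivity
  have hga : γ ≤ a := div_le_self haP.le hw1
  have hpow : ∀ j ≤ i + 1, (G ^ j) ^ (a / (α - 1)) ≤ 2 := by
    intro j hj
    have b1 : G ^ j ≤ ((2:ℝ) ^ ((α - 1) * c)) ^ (i + 1) := by
      have q1 : (1:ℝ) ≤ (2:ℝ) ^ ((α - 1) * c) := Real.one_le_rpow (by norm_num) (by linarith)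
      calc G ^ j ≤ ((2:ℝ) ^ ((α - 1) * c)) ^ j := pow_le_pow_left₀ hGp.le (by linarith) _
        _ ≤ _ := pow_le_pow_right₀ q1 hj
    refine (Real.rpow_le_rpow (by positivity) b1 (by positivity)).trans ?_
    rw [← Real.rpow_natCast, ← Real.rpow_mul (by positivity), ← Real.rpow_mul (by norm_num)]
    have : (α - 1) * c * (((i + 1 : ℕ) : ℝ) * (a / (α - 1))) = 1 := by
      rw [ha]; field_simp
    rw [this, Real.rpow_one]
  have hRT := RT_out hE hF h1 hch (pow_pos hGp i) hG (RT_stateAt hE hF h1 hch hG P i)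
  obtain ⟨psA, psB⟩ := RT_psd hRT
  have tA : rtr (blockApplyRight E (P.stateAt E i)) = 1 := by
    rw [rtr, bar_trace hE.1, stateAt_trace hE]; rfl
  have tB : rtr (blockApplyRight F (P.stateAt F i)) = 1 := by
    rw [rtr, bar_trace hF.1, stateAt_trace hF]; rfl
  obtain ⟨U, r, hA⟩ := exists_isSp psA
  obtain ⟨V, s, hB⟩ := exists_isSp psB
  have hwc := weak_conv hRT hA hB tA tB hg0 (by linarith : γ < 1) ha0 ha1
  show ∃ ν : Matrix (tpow (Fin dA) m × tpow (Fin dA) m) (tpow (Fin dA) m × tpow (Fin dA) m) ℂ,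
      IsState ν ∧ ((((i + 1 : ℕ) : ℝ)⁻¹ : ℝ) : EReal) *
        dH αa (blockApplyRight E (P.stateAt E i)) (blockApplyRight F (P.stateAt F i)) ≤ _
  have hge : ((-Real.logb 2 1 : ℝ) : EReal) ≤
      dH αa (blockApplyRight E (P.stateAt E i)) (blockApplyRight F (P.stateAt F i)) :=
    dH_ge psB Matrix.PosSemidef.one (by rw [sub_self]; exact Matrix.PosSemidef.zero)
      (by rw [Matrix.one_mul, tA]; linarith) (by rw [Matrix.one_mul, tB]) one_pos
  set D := dH αa (blockApplyRight E (P.stateAt E i)) (blockApplyRight F (P.stateAt F i)) with hD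
  obtain ⟨y, hy⟩ : ∃ y : ℝ, D = (y : EReal) :=
    ⟨_, (EReal.coe_toReal (ne_top_of_le_ne_top (EReal.coe_ne_top _) hwc)
      (ne_bot_of_le_ne_bot (EReal.coe_ne_bot _) hge)).symm⟩
  rw [hy, EReal.coe_le_coe_iff] at hwc
  rw [hy, ← EReal.coe_mul]
  set f : ℝ := (1 - αa)⁻¹ * ((Cconst E F * ((i + 1 : ℕ) : ℝ) / Real.sqrt m) * Real.logb 2 (8 / αp) +
            (m : ℝ)⁻¹ * (Real.logb 2 (1 / αp) - Real.logb 2 (1 - αp / 4) + μ) +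
            binEnt αa / ((i + 1 : ℕ) : ℝ)) with hf
  set k : ℝ := (1 - αa)⁻¹ * (m : ℝ)⁻¹ with hk
  have h1a : 0 < 1 - αa := by linarith
  have hk0 : 0 < k := by positivity
  set x : ℝ := (((i + 1 : ℕ) : ℝ)⁻¹ * y) with hx
  by_contra hcon
  push Not at hcon
  have hd : ∀ ν : Matrix (tpow (Fin dA) m × tpow (Fin dA) m) (tpow (Fin dA) m × tpow (Fin dA) m) ℂ,
      IsState ν → dH αp (blockApplyRight (tpowChannel E m) ν) (blockApplyRight (tpowChannel F m) ν) <
        (((x - f) / k : ℝ) : EReal) := by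
    intro ν hν
    by_contra hlt
    push Not at hlt
    have := hcon ν hν
    refine absurd this (not_lt.2 ?_)
    have e : ((x : ℝ) : EReal) = (k : EReal) * (((x - f) / k : ℝ) : EReal) + (f : EReal) := by
      rw [← EReal.coe_mul, ← EReal.coe_add, EReal.coe_eq_coe_iff]; field_simp; ring
    rw [e]
    exact add_le_add (mul_le_mul_of_nonneg_left hlt (EReal.coe_nonneg.2 hk0.le)) le_rfl
  have hch2 := chain hE hF h1 hch hG P hm haP hal1 has hg0 hga hpow hp0 hp1 hd i (Nat.lt_succ_self i)
    U V r s hA hB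
  have hfr := final_real hc2 hn hm hp0 hp1 hμ ha hγ
  have hl2 : 0 < Real.log 2 := Real.log_pos (by norm_num)
  set Λ := γ⁻¹ * Real.log (Qp U V r s γ) with hΛ
  set κ := γ / a ^ 2 + (m * γ)⁻¹ * Real.log (32 / αp ^ 3) with hκ
  set d := (x - f) / k with hdd
  rw [hC] at hf
  set B := (4 * c * ((i + 1 : ℕ) : ℝ) / Real.sqrt m) * Real.logb 2 (8 / αp) +
            (m : ℝ)⁻¹ * (Real.logb 2 (1 / αp) - Real.logb 2 (1 - αp / 4) + μ) with hBd
  have hN : ((i:ℝ) + 1) = ((i + 1 : ℕ) : ℝ) := by push_cast; ring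
  rw [hN] at hch2
  set N := ((i + 1 : ℕ) : ℝ) with hNd
  have g1 : Λ / Real.log 2 ≤ N * (κ / Real.log 2 + d / m) := by
    rw [div_le_iff₀ hl2]
    refine hch2.trans (le_of_eq ?_)
    field_simp
  have g2 : x ≤ (1 - αa)⁻¹ * (κ / Real.log 2 + d / m + binEnt αa / N) := by
    rw [hx, inv_mul_le_iff₀ hn0]
    refine hwc.trans ?_
    have : N * ((1 - αa)⁻¹ * (κ / Real.log 2 + d / m + binEnt αa / N)) =
      (1 - αa)⁻¹ * (N * (κ / Real.log 2 + d / m) + binEnt αa) := by field_simp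
    rw [this]
    exact mul_le_mul_of_nonneg_left (by linarith) (by positivity)
  have g3 : (1 - αa)⁻¹ * (d / m) = x - f := by
    have : d * k = x - f := by rw [hdd]; field_simp
    rw [← this, hk]; ring
  have g4 : (1 - αa)⁻¹ * (κ / Real.log 2) < (1 - αa)⁻¹ * B :=
    mul_lt_mul_of_pos_left hfr (by positivity)
  have g5 : f = (1 - αa)⁻¹ * B + (1 - αa)⁻¹ * (binEnt αa / N) := by rw [hf]; ring
  have g6 : (1 - αa)⁻¹ * (κ / Real.log 2 + d / m + binEnt αa / N) =
    (1 - αa)⁻¹ * (κ / Real.log 2) + (1 - αa)⁻¹ * (d / m) + (1 - αa)⁻¹ * (binEnt αa / N) := by ring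
  linarith

end P16

end Helpers

/-- One-shot conversion of adaptive to parallel strategies. -/
theorem one_shot_adaptive_to_parallel {dA dB : ℕ}
    (E F : Matrix (Fin dA) (Fin dA) ℂ →ₗ[ℂ] Matrix (Fin dB) (Fin dB) ℂ)
    (hE : IsQChannel E) (hF : IsQChannel F)
    (hfin : ∃ α : ℝ, (1 < α ∧ α ≤ 2) ∧ chDiv (geomD α) E F < ⊤)
    (P : AdaptiveProtocol dA dB) (n : ℕ) (hn : 1 ≤ n)
    (αa αp : ℝ) (hαa : 0 < αa ∧ αa < 1) (hαp : 0 < αp ∧ αp < 1)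
    (μ : ℝ) (hμ : 0 < μ) (m : ℕ) (hm : 1 ≤ m) :
    ∃ ν : Matrix (tpow (Fin dA) m × tpow (Fin dA) m) (tpow (Fin dA) m × tpow (Fin dA) m) ℂ,
      IsState ν ∧
      (((n : ℝ)⁻¹ : ℝ) : EReal) * dH αa (P.finalState E n) (P.finalState F n) ≤
        ((((1 - αa)⁻¹ * (m : ℝ)⁻¹ : ℝ)) : EReal) *
          dH αp (blockApplyRight (tpowChannel E m) ν) (blockApplyRight (tpowChannel F m) ν) +
        ((((1 - αa)⁻¹ * ((Cconst E F * n / Real.sqrt m) * Real.logb 2 (8 / αp) +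
            (m : ℝ)⁻¹ * (Real.logb 2 (1 / αp) - Real.logb 2 (1 - αp / 4) + μ) +
            binEnt αa / n) : ℝ)) : EReal) := by
  exact main_aux hE hF hfin P n hn αa αp hαa hαp μ hμ m hm

end QCD
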